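/- arXiv:1112.4346 — 3 statements merged into one kernel-verified Lean document; each statement's English description precedes it below -/
import Mathlib

section
/- For every k ∈ ℕ (k ≥ 1) and every α > 0, there exists a constant C = C(k, α) > 0 such that for every α-separated trigonometric polynomial f(x) = Σ_{n=1}^N c_n e^{iλ_n x}, the maximal dyadic partial sum operator S* f(x) := sup_{j ∈ ℕ} |Σ_{n : |λ_n| ≤ 2^j} c_n e^{iλ_n x}| satisfies ‖S* f‖_{S^{2^k}} ≤ C ‖f‖_{S^{2^k}}. -/
/-- A trigonometric polynomial `x ↦ Σ_{n<N} c_n e^{iλ_n x}` with strictly increasing real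
exponents. -/
structure TrigPoly where
  N : ℕ
  c : ℕ → ℂ
  Λ : ℕ → ℝ
  mono : ∀ n, n + 1 < N → Λ n < Λ (n + 1)

/-- Evaluation of a trigonometric polynomial. -/
noncomputable def TrigPoly.eval (P : TrigPoly) (x : ℝ) : ℂ :=
  ∑ n ∈ Finset.range P.N, P.c n * Complex.exp (Complex.I * (P.Λ n : ℂ) * (x : ℂ))

/-- `α`-separation of the exponents: `λ_{n+1} - λ_n > α`. -/
def TrigPoly.sep (P : TrigPoly) (α : ℝ) : Prop :=
  ∀ n, n + 1 < P.N → α < P.Λ (n + 1) - P.Λ n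

/-- The Stepanov norm `‖f‖_{S^p} = (sup_{x ∈ ℝ} ∫_x^{x+1} |f(s)|^p ds)^{1/p}` of a function
`f : ℝ → ℝ`. -/
noncomputable def stepanovNorm (p : ℝ) (f : ℝ → ℝ) : ℝ :=
  (⨆ x : ℝ, ∫ s in x..(x + 1), |f s| ^ p) ^ (1 / p)

/-- The maximal dyadic partial sum operator
`S* f(x) = sup_{j ∈ ℕ} |Σ_{|λ_n| ≤ 2^j} c_n e^{iλ_n x}|`. -/
noncomputable def TrigPoly.maxDyadic (P : TrigPoly) (x : ℝ) : ℝ :=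
  ⨆ j : ℕ, ‖∑ n ∈ Finset.range P.N,
    if |P.Λ n| ≤ (2 : ℝ) ^ j then P.c n * Complex.exp (Complex.I * (P.Λ n : ℂ) * (x : ℂ))
    else 0‖

open Filter Finset



namespace Dy

abbrev TP := ℤ →₀ ℂ

noncomputable def ev (z : ℂ) : TP →ₗ[ℂ] ℂ := Finsupp.linearCombination ℂ (fun n : ℤ => z ^ n)

noncomputable def mult (φ : ℤ → ℂ) : TP →ₗ[ℂ] TP where
  toFun f := Finsupp.onFinset f.support (fun n => φ n * f n) (by
    intro n h
    rw [Finsupp.mem_support_iff]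
    intro h0
    simp [h0] at h)
  map_add' f g := by
    ext n
    simp [mul_add]
  map_smul' c f := by
    ext n
    simp
    ring

@[simp] lemma mult_apply (φ : ℤ → ℂ) (f : TP) (n : ℤ) : mult φ f n = φ n * f n := rfl

lemma mult_mult (φ ψ : ℤ → ℂ) (f : TP) : mult φ (mult ψ f) = mult (fun n => φ n * ψ n) f := by
  ext n; simp [mul_assoc]

lemma mult_support (φ : ℤ → ℂ) (f : TP) : (mult φ f).support ⊆ f.support := by
  intro n hn
  rw [Finsupp.mem_support_iff] at *
  intro h; simp [h] at hn

lemma ev_single (z : ℂ) (n : ℤ) (a : ℂ) : ev z (Finsupp.single n a) = a * z ^ n := by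
  simp [ev]

lemma ev_sum {s : Finset ℤ} {f : TP} (h : f.support ⊆ s) (z : ℂ) :
    ev z f = ∑ n ∈ s, f n * z ^ n := by
  unfold ev
  rw [Finsupp.linearCombination_apply, Finsupp.sum_of_support_subset _ h]
  · simp
  · simp

lemma ev_mult (φ : ℤ → ℂ) (f : TP) (z : ℂ) :
    ev z (mult φ f) = ∑ n ∈ f.support, φ n * f n * z ^ n := by
  rw [ev_sum (mult_support φ f)]; simp

noncomputable def mulc (f g : TP) : TP :=
  ∑ n ∈ f.support, ∑ m ∈ g.support, Finsupp.single (n - m) (f n * (starRingEnd ℂ) (g m))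

noncomputable def mul (f g : TP) : TP :=
  ∑ n ∈ f.support, ∑ m ∈ g.support, Finsupp.single (n + m) (f n * g m)

lemma mult_single (φ : ℤ → ℂ) (n : ℤ) (a : ℂ) :
    mult φ (Finsupp.single n a) = Finsupp.single n (φ n * a) := by
  ext k
  by_cases h : n = k
  · subst h; simp
  · simp [h]

lemma ev_mult_mulc (φ : ℤ → ℂ) {f g : TP} {s t : Finset ℤ} (hf : f.support ⊆ s)
    (hg : g.support ⊆ t) (z : ℂ) :
    ev z (mult φ (mulc f g)) = ∑ n ∈ s, ∑ m ∈ t,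
      φ (n - m) * (f n * (starRingEnd ℂ) (g m)) * z ^ (n - m) := by
  have : mulc f g = ∑ n ∈ s, ∑ m ∈ t,
      Finsupp.single (n - m) (f n * (starRingEnd ℂ) (g m)) := by
    unfold mulc
    rw [Finset.sum_subset hf]
    · refine Finset.sum_congr rfl fun n _ => ?_
      rw [Finset.sum_subset hg]
      intro m _ hm
      rw [Finsupp.notMem_support_iff] at hm; simp [hm]
    · intro n _ hn
      rw [Finsupp.notMem_support_iff] at hn; simp [hn]
  rw [this]
  simp only [map_sum, mult_single, ev_single]

lemma ev_mult_mul (φ : ℤ → ℂ) {f g : TP} {s t : Finset ℤ} (hf : f.support ⊆ s)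
    (hg : g.support ⊆ t) (z : ℂ) :
    ev z (mult φ (mul f g)) = ∑ n ∈ s, ∑ m ∈ t,
      φ (n + m) * (f n * g m) * z ^ (n + m) := by
  have : mul f g = ∑ n ∈ s, ∑ m ∈ t,
      Finsupp.single (n + m) (f n * g m) := by
    unfold mul
    rw [Finset.sum_subset hf]
    · refine Finset.sum_congr rfl fun n _ => ?_
      rw [Finset.sum_subset hg]
      intro m _ hm
      rw [Finsupp.notMem_support_iff] at hm; simp [hm]
    · intro n _ hn
      rw [Finsupp.notMem_support_iff] at hn; simp [hn]
  rw [this]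
  simp only [map_sum, mult_single, ev_single]

lemma mult_one (f : TP) : mult (fun _ => 1) f = f := by ext; simp

lemma conj_zpow {z : ℂ} (hz : ‖z‖ = 1) (n : ℤ) : (starRingEnd ℂ) (z ^ n) = z ^ (-n) := by
  have : (starRingEnd ℂ) z = z⁻¹ := by
    rw [Complex.inv_def, Complex.normSq_eq_norm_sq, hz]; simp
  rw [map_zpow₀, this, inv_zpow, zpow_neg]

lemma ne_zero_of_norm {z : ℂ} (hz : ‖z‖ = 1) : z ≠ 0 := by
  intro h; simp [h] at hz

lemma ev_mulc (f g : TP) {z : ℂ} (hz : ‖z‖ = 1) :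
    ev z (mulc f g) = ev z f * (starRingEnd ℂ) (ev z g) := by
  have h := ev_mult_mulc (fun _ => 1) (subset_refl f.support) (subset_refl g.support) z
  rw [mult_one] at h
  rw [h, ev_sum (subset_refl f.support), ev_sum (subset_refl g.support), map_sum,
    Finset.sum_mul_sum]
  refine Finset.sum_congr rfl fun n _ => Finset.sum_congr rfl fun m _ => ?_
  rw [map_mul, conj_zpow hz, sub_eq_add_neg, zpow_add₀ (ne_zero_of_norm hz)]
  ring

lemma ev_mul (f g : TP) {z : ℂ} (hz : ‖z‖ = 1) :
    ev z (mul f g) = ev z f * ev z g := by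
  have h := ev_mult_mul (fun _ => 1) (subset_refl f.support) (subset_refl g.support) z
  rw [mult_one] at h
  rw [h, ev_sum (subset_refl f.support), ev_sum (subset_refl g.support),
    Finset.sum_mul_sum]
  refine Finset.sum_congr rfl fun n _ => Finset.sum_congr rfl fun m _ => ?_
  rw [zpow_add₀ (ne_zero_of_norm hz)]
  ring

lemma mulc_supp {f g : TP} {k : ℤ} (h : k ∈ (mulc f g).support) :
    ∃ n ∈ f.support, ∃ m ∈ g.support, k = n - m := by
  classical
  unfold mulc at h
  have h1 := Finsupp.support_finsetSum h
  rw [Finset.mem_biUnion] at h1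
  obtain ⟨n, hn, h2⟩ := h1
  have h3 := Finsupp.support_finsetSum h2
  rw [Finset.mem_biUnion] at h3
  obtain ⟨m, hm, h4⟩ := h3
  refine ⟨n, hn, m, hm, ?_⟩
  have := Finsupp.support_single_subset h4
  simpa using this

lemma mul_supp {f g : TP} {k : ℤ} (h : k ∈ (mul f g).support) :
    ∃ n ∈ f.support, ∃ m ∈ g.support, k = n + m := by
  classical
  unfold mul at h
  have h1 := Finsupp.support_finsetSum h
  rw [Finset.mem_biUnion] at h1
  obtain ⟨n, hn, h2⟩ := h1
  have h3 := Finsupp.support_finsetSum h2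
  rw [Finset.mem_biUnion] at h3
  obtain ⟨m, hm, h4⟩ := h3
  refine ⟨n, hn, m, hm, ?_⟩
  have := Finsupp.support_single_subset h4
  simpa using this

/-- grid -/
noncomputable def om (N : ℕ) : ℂ := Complex.exp (2 * Real.pi * Complex.I / N)

noncomputable def I (N : ℕ) (ζ : ℂ) (F : ℂ → ℝ) : ℝ := ∑ x ∈ Finset.range N, F (ζ * om N ^ x)

lemma norm_om (N : ℕ) : ‖om N‖ = 1 := by
  unfold om
  have : (2 * Real.pi * Complex.I / N : ℂ) = ((2 * Real.pi / N : ℝ) : ℂ) * Complex.I := by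
    push_cast; ring
  rw [this, Complex.norm_exp_ofReal_mul_I]

lemma norm_pt {N : ℕ} {ζ : ℂ} (h : ‖ζ‖ = 1) (x : ℕ) : ‖ζ * om N ^ x‖ = 1 := by
  simp [h, norm_om]

lemma I_mono {N : ℕ} {ζ : ℂ} (h : ‖ζ‖ = 1) {F G : ℂ → ℝ} (hFG : ∀ z, ‖z‖ = 1 → F z ≤ G z) :
    I N ζ F ≤ I N ζ G := Finset.sum_le_sum fun x _ => hFG _ (norm_pt h x)

lemma I_congr {N : ℕ} {ζ : ℂ} (h : ‖ζ‖ = 1) {F G : ℂ → ℝ} (hFG : ∀ z, ‖z‖ = 1 → F z = G z) :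
    I N ζ F = I N ζ G := Finset.sum_congr rfl fun x _ => hFG _ (norm_pt h x)

lemma I_add (N : ℕ) (ζ : ℂ) (F G : ℂ → ℝ) : I N ζ (fun z => F z + G z) = I N ζ F + I N ζ G := by
  simp [I, Finset.sum_add_distrib]

lemma I_mul (N : ℕ) (ζ : ℂ) (c : ℝ) (F : ℂ → ℝ) : I N ζ (fun z => c * F z) = c * I N ζ F := by
  simp [I, Finset.mul_sum]

lemma I_sum (N : ℕ) (ζ : ℂ) {ι : Type*} (s : Finset ι) (F : ι → ℂ → ℝ) :
    I N ζ (fun z => ∑ i ∈ s, F i z) = ∑ i ∈ s, I N ζ (F i) := by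
  unfold I; rw [Finset.sum_comm]

lemma I_nonneg {N : ℕ} {ζ : ℂ} (h : ‖ζ‖ = 1) {F : ℂ → ℝ} (hF : ∀ z, ‖z‖ = 1 → 0 ≤ F z) :
    0 ≤ I N ζ F := Finset.sum_nonneg fun x _ => hF _ (norm_pt h x)

lemma om_pow (N : ℕ) (hN : N ≠ 0) : om N ^ N = 1 := by
  exact (Complex.isPrimitiveRoot_exp N hN).pow_eq_one

lemma sum_om {N : ℕ} (hN : N ≠ 0) {q : ℤ} (hq : q ≠ 0) (hqN : |q| < N) :
    ∑ x ∈ Finset.range N, (om N ^ q) ^ x = 0 := by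
  have hp : IsPrimitiveRoot (om N) N := Complex.isPrimitiveRoot_exp N hN
  have h1 : om N ^ q ≠ 1 := by
    intro h
    rw [hp.zpow_eq_one_iff_dvd] at h
    have := Int.eq_zero_of_abs_lt_dvd h hqN
    exact hq this
  have h2 : (om N ^ q) ^ N = 1 := by
    rw [← zpow_natCast, ← zpow_mul, mul_comm, zpow_mul, zpow_natCast, om_pow N hN, one_zpow]
  have := geom_sum_eq h1 N
  rw [this, h2]; simp

lemma norm_sq_ev {f : TP} {s : Finset ℤ} (hs : f.support ⊆ s) {z : ℂ} (hz : ‖z‖ = 1) :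
    ((‖ev z f‖ ^ 2 : ℝ) : ℂ) = ∑ n ∈ s, ∑ m ∈ s, (f n * (starRingEnd ℂ) (f m)) * z ^ (n - m) := by
  have h := ev_mult_mulc (fun _ => 1) hs hs z
  rw [mult_one, ev_mulc _ _ hz, Complex.mul_conj, Complex.normSq_eq_norm_sq] at h
  rw [h]; simp

lemma parseval_s (s : Finset ℤ) : ∀ᶠ N : ℕ in atTop, ∀ ζ : ℂ, ‖ζ‖ = 1 → ∀ f : TP, f.support ⊆ s →
    I N ζ (fun z => ‖ev z f‖ ^ 2) = N * ∑ n ∈ s, ‖f n‖ ^ 2 := by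
  have h0 : ∀ᶠ N : ℕ in atTop, ∀ n ∈ s, ∀ m ∈ s, |n - m| < (N : ℤ) := by
    rw [Filter.eventually_all_finset]; intro n _
    rw [Filter.eventually_all_finset]; intro m _
    filter_upwards [eventually_gt_atTop (|n - m|).toNat] with N hN
    omega
  filter_upwards [h0, eventually_gt_atTop 0] with N hN hN0 ζ hζ f hs
  have : ((I N ζ (fun z => ‖ev z f‖ ^ 2) : ℝ) : ℂ) =
      ((N * ∑ n ∈ s, ‖f n‖ ^ 2 : ℝ) : ℂ) := by
    unfold I
    rw [Complex.ofReal_sum]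
    simp_rw [norm_sq_ev hs (norm_pt hζ _)]
    rw [Finset.sum_comm]
    push_cast
    rw [Finset.mul_sum]
    refine Finset.sum_congr rfl fun n hn => ?_
    rw [Finset.sum_comm]
    rw [Finset.sum_eq_single n]
    · simp [Complex.mul_conj, Complex.normSq_eq_norm_sq]
    · intro m hm hmn
      simp_rw [mul_zpow]
      have h3 := sum_om (Nat.pos_iff_ne_zero.mp hN0) (sub_ne_zero.mpr hmn.symm) (hN n hn m hm)
      have : ∀ x : ℕ, (om N ^ x) ^ (n - m) = (om N ^ (n - m)) ^ x := by
        intro x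
        rw [← zpow_natCast, ← zpow_natCast, ← zpow_mul, ← zpow_mul, mul_comm]
      simp_rw [this, ← Finset.mul_sum, h3]; simp
    · intro h; exact absurd hn h
  exact_mod_cast this

lemma parseval (f : TP) : ∀ᶠ N : ℕ in atTop, ∀ ζ : ℂ, ‖ζ‖ = 1 → ∀ φ : ℤ → ℂ,
    I N ζ (fun z => ‖ev z (mult φ f)‖ ^ 2) = N * ∑ n ∈ f.support, ‖φ n‖ ^ 2 * ‖f n‖ ^ 2 := by
  filter_upwards [parseval_s f.support] with N hN ζ hζ φ
  rw [hN ζ hζ _ (mult_support φ f)]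
  simp [mul_pow]

lemma parseval' (f : TP) : ∀ᶠ N : ℕ in atTop, ∀ ζ : ℂ, ‖ζ‖ = 1 →
    I N ζ (fun z => ‖ev z f‖ ^ 2) = N * ∑ n ∈ f.support, ‖f n‖ ^ 2 := by
  filter_upwards [parseval_s f.support] with N hN ζ hζ
  rw [hN ζ hζ _ subset_rfl]

/-- projection to frequencies `≤ t` -/
noncomputable def S (t : ℤ) : TP →ₗ[ℂ] TP := mult (fun n => if n ≤ t then 1 else 0)

/-- Cotlar type inequality -/
lemma cotlar (f : TP) (t : ℤ) {z : ℂ} (hz : ‖z‖ = 1) :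
    ‖ev z (S t f)‖ ^ 2 ≤ 2 * (ev z (S 0 (mulc f (S t f)))).re := by
  set s := f.support
  have hs : (S t f).support ⊆ s := mult_support _ _
  have e1 := norm_sq_ev hs hz
  have e2 := ev_mult_mulc (fun n => if n ≤ 0 then 1 else 0) (subset_refl s) hs z
  set X := ev z (S 0 (mulc f (S t f))) with hX
  have hX' : X = _ := e2
  have e3 : (starRingEnd ℂ) X = ∑ n ∈ s, ∑ m ∈ s,
      (if m ≤ n then 1 else 0) * (S t f n * (starRingEnd ℂ) (f m)) * z ^ (n - m) := by
    rw [hX', Finset.sum_comm, map_sum]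
    refine Finset.sum_congr rfl fun n _ => ?_
    rw [map_sum]
    refine Finset.sum_congr rfl fun m _ => ?_
    rw [map_mul, map_mul, map_mul, conj_zpow hz, Complex.conj_conj, neg_sub]
    have : (starRingEnd ℂ) (if m - n ≤ 0 then 1 else 0) = if m ≤ n then 1 else 0 := by
      by_cases h : m ≤ n
      · have : m - n ≤ 0 := by omega
        simp [h]
      · have : ¬ m - n ≤ 0 := by omega
        simp [h]
    rw [this]; ring
  have key : ((‖ev z (S t f)‖ ^ 2 : ℝ) : ℂ) = X + (starRingEnd ℂ) X
      - ((∑ n ∈ s, (if n ≤ t then 1 else 0) * ‖f n‖ ^ 2 : ℝ) : ℂ) := by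
    have e4 : ((∑ n ∈ s, (if n ≤ t then 1 else 0) * ‖f n‖ ^ 2 : ℝ) : ℂ) =
        ∑ n ∈ s, ∑ m ∈ s, if n = m then
          (if n ≤ t then 1 else 0) * (f n * (starRingEnd ℂ) (f m)) * z ^ (n - m) else 0 := by
      push_cast
      refine Finset.sum_congr rfl fun n hn => ?_
      rw [Finset.sum_ite_eq, if_pos hn, Complex.mul_conj, Complex.normSq_eq_norm_sq]
      split_ifs <;> simp
    rw [e4, e1, e3, hX', ← Finset.sum_add_distrib, ← Finset.sum_sub_distrib]
    refine Finset.sum_congr rfl fun n _ => ?_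
    rw [← Finset.sum_add_distrib, ← Finset.sum_sub_distrib]
    refine Finset.sum_congr rfl fun m _ => ?_
    simp only [S, mult_apply, map_mul]
    rcases lt_trichotomy n m with h | h | h
    · have h1 : n ≤ m := by omega
      have h2 : ¬ m ≤ n := by omega
      have h3 : ¬ n = m := by omega
      by_cases h4 : m ≤ t
      · have : n ≤ t := by omega
        simp [h1, h2, h3, h4, this]
      · simp [h1, h2, h3, h4]
    · subst h
      by_cases h4 : n ≤ t <;> simp [h4]
    · have h1 : ¬ n ≤ m := by omega
      have h2 : m ≤ n := by omega
      have h3 : ¬ n = m := by omega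
      by_cases h4 : n ≤ t
      · have : m ≤ t := by omega
        simp [h1, h2, h3, h4, this]
      · simp [h1, h2, h3, h4]
  rw [Complex.add_conj, ← Complex.ofReal_sub, Complex.ofReal_inj] at key
  rw [key]
  have : 0 ≤ ∑ n ∈ s, (if n ≤ t then 1 else 0) * ‖f n‖ ^ 2 :=
    Finset.sum_nonneg fun n _ => by split_ifs <;> positivity
  linarith

/-- vector-valued Riesz -/
def RV (m : ℕ) : Prop := ∃ C : ℝ, 0 ≤ C ∧ ∀ (ι : Type) (s : Finset ι) (w : ι → ℝ),
  (∀ i ∈ s, 0 ≤ w i) → ∀ (f : ι → TP) (t : ι → ℤ), ∀ᶠ N : ℕ in atTop, ∀ ζ : ℂ, ‖ζ‖ = 1 →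
    I N ζ (fun z => (∑ i ∈ s, w i * ‖ev z (S (t i) (f i))‖ ^ 2) ^ m) ≤
      C * I N ζ (fun z => (∑ i ∈ s, w i * ‖ev z (f i)‖ ^ 2) ^ m)

lemma RV_one : RV 1 := by
  refine ⟨1, zero_le_one, fun ι s w hw f t => ?_⟩
  have h : ∀ᶠ N : ℕ in atTop, ∀ i ∈ s, ∀ ζ : ℂ, ‖ζ‖ = 1 →
      I N ζ (fun z => ‖ev z (S (t i) (f i))‖ ^ 2) ≤ I N ζ (fun z => ‖ev z (f i)‖ ^ 2) := by
    rw [Filter.eventually_all_finset]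
    intro i _
    filter_upwards [parseval (f i), parseval' (f i)] with N h1 h2 ζ hζ
    rw [h2 ζ hζ]
    have := h1 ζ hζ (fun n => if n ≤ t i then 1 else 0)
    change I N ζ (fun z => ‖ev z (S (t i) (f i))‖ ^ 2) = _ at this
    rw [this]
    gcongr with n hn
    split_ifs <;> simp
  filter_upwards [h] with N h ζ hζ
  simp only [pow_one, one_mul, I_sum, I_mul]
  exact Finset.sum_le_sum fun i hi => mul_le_mul_of_nonneg_left (h i hi ζ hζ) (hw i hi)

lemma cs {ι : Type*} (s : Finset ι) (w : ι → ℝ) (hw : ∀ i ∈ s, 0 ≤ w i) (a b : ι → ℂ) :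
    ‖∑ i ∈ s, (w i : ℂ) * (a i * b i)‖ ^ 2 ≤
      (∑ i ∈ s, w i * ‖a i‖ ^ 2) * (∑ i ∈ s, w i * ‖b i‖ ^ 2) := by
  have h1 : ‖∑ i ∈ s, (w i : ℂ) * (a i * b i)‖ ≤
      ∑ i ∈ s, (Real.sqrt (w i) * ‖a i‖) * (Real.sqrt (w i) * ‖b i‖) := by
    refine (norm_sum_le _ _).trans (Finset.sum_le_sum fun i hi => ?_)
    rw [norm_mul, norm_mul, Complex.norm_real, Real.norm_of_nonneg (hw i hi)]
    have := Real.mul_self_sqrt (hw i hi)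
    apply le_of_eq
    calc w i * (‖a i‖ * ‖b i‖) = (√(w i) * √(w i)) * (‖a i‖ * ‖b i‖) := by rw [this]
      _ = _ := by ring
  have h2 := Finset.sum_mul_sq_le_sq_mul_sq s (fun i => Real.sqrt (w i) * ‖a i‖)
    (fun i => Real.sqrt (w i) * ‖b i‖)
  have h3 : ∀ c : ι → ℂ, ∑ i ∈ s, (Real.sqrt (w i) * ‖c i‖) ^ 2 = ∑ i ∈ s, w i * ‖c i‖ ^ 2 := by
    intro c
    refine Finset.sum_congr rfl fun i hi => ?_
    rw [mul_pow, Real.sq_sqrt (hw i hi)]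
  rw [h3, h3] at h2
  exact (pow_le_pow_left₀ (norm_nonneg _) h1 2).trans h2

/-- absorption -/
lemma absorb {x y K : ℝ} : K * (x * y) ≤ (1 / 2) * y ^ 2 + (K ^ 2 / 2) * x ^ 2 := by
  nlinarith [sq_nonneg (y - K * x)]

lemma RV_double {m : ℕ} (h : RV m) : RV (2 * m) := by
  obtain ⟨C, hC, h⟩ := h
  refine ⟨(4 ^ m * C) ^ 2, by positivity, fun ι s w hw f t => ?_⟩
  set g : ι → TP := fun i => S (t i) (f i) with hg
  set F : TP := ∑ i ∈ s, (w i : ℂ) • mulc (f i) (g i) with hF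
  have h1 := h Unit Finset.univ (fun _ => 1) (fun _ _ => zero_le_one) (fun _ => F) (fun _ => 0)
  filter_upwards [h1] with N h1 ζ hζ
  simp only [Finset.univ_unique, Finset.sum_singleton, one_mul] at h1
  have h1 := h1 ζ hζ
  have p1 : ∀ z : ℂ, ‖z‖ = 1 → ∑ i ∈ s, w i * ‖ev z (g i)‖ ^ 2 ≤ 2 * ‖ev z (S 0 F)‖ := by
    intro z hz
    calc ∑ i ∈ s, w i * ‖ev z (g i)‖ ^ 2
        ≤ ∑ i ∈ s, w i * (2 * (ev z (S 0 (mulc (f i) (g i)))).re) :=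
          Finset.sum_le_sum fun i hi => mul_le_mul_of_nonneg_left (cotlar (f i) (t i) hz) (hw i hi)
      _ = 2 * (ev z (S 0 F)).re := by
          rw [hF]; simp only [map_sum, map_smul, Complex.re_sum, Finset.mul_sum]
          refine Finset.sum_congr rfl fun i _ => ?_
          simp; ring
      _ ≤ _ := by gcongr; exact Complex.re_le_norm _
  have p2 : ∀ z : ℂ, ‖z‖ = 1 → ‖ev z F‖ ^ 2 ≤
      (∑ i ∈ s, w i * ‖ev z (f i)‖ ^ 2) * ∑ i ∈ s, w i * ‖ev z (g i)‖ ^ 2 := by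
    intro z hz
    have := cs s w hw (fun i => ev z (f i)) (fun i => (starRingEnd ℂ) (ev z (g i)))
    simp only [RCLike.norm_conj] at this
    refine le_trans (le_of_eq ?_) this
    rw [hF]; simp only [map_sum, map_smul, ev_mulc _ _ hz, smul_eq_mul]
  have nn : ∀ (u : ι → TP) (z : ℂ), 0 ≤ ∑ i ∈ s, w i * ‖ev z (u i)‖ ^ 2 := fun u z =>
    Finset.sum_nonneg fun i hi => mul_nonneg (hw i hi) (sq_nonneg _)
  set A : ℂ → ℝ := fun z => ∑ i ∈ s, w i * ‖ev z (f i)‖ ^ 2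
  set B : ℂ → ℝ := fun z => ∑ i ∈ s, w i * ‖ev z (g i)‖ ^ 2
  have q1 : I N ζ (fun z => B z ^ (2 * m)) ≤ 4 ^ m * I N ζ (fun z => (‖ev z (S 0 F)‖ ^ 2) ^ m) := by
    rw [← I_mul]
    refine I_mono hζ fun z hz => ?_
    calc B z ^ (2 * m) ≤ (2 * ‖ev z (S 0 F)‖) ^ (2 * m) :=
          pow_le_pow_left₀ (nn g z) (p1 z hz) _
      _ = _ := by rw [pow_mul, mul_pow, mul_pow]; norm_num
  have q2 : I N ζ (fun z => (‖ev z F‖ ^ 2) ^ m) ≤ I N ζ (fun z => A z ^ m * B z ^ m) := by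
    refine I_mono hζ fun z hz => ?_
    rw [← mul_pow]
    exact pow_le_pow_left₀ (sq_nonneg _) (p2 z hz) _
  have q3 : (4 ^ m * C) * I N ζ (fun z => A z ^ m * B z ^ m) ≤
      (1 / 2) * I N ζ (fun z => B z ^ (2 * m)) +
        ((4 ^ m * C) ^ 2 / 2) * I N ζ (fun z => A z ^ (2 * m)) := by
    rw [← I_mul, ← I_mul, ← I_mul, ← I_add]
    refine I_mono hζ fun z hz => ?_
    have := absorb (x := A z ^ m) (y := B z ^ m) (K := 4 ^ m * C)
    rw [mul_comm 2 m, pow_mul, pow_mul]; exact this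
  have q4 : 4 ^ m * I N ζ (fun z => (‖ev z (S 0 F)‖ ^ 2) ^ m) ≤
      (4 ^ m * C) * I N ζ (fun z => A z ^ m * B z ^ m) := by
    rw [mul_assoc]
    gcongr
    exact h1.trans (mul_le_mul_of_nonneg_left q2 hC)
  change I N ζ (fun z => B z ^ (2 * m)) ≤ _ * I N ζ (fun z => A z ^ (2 * m))
  linarith

lemma RV_pow (k : ℕ) : RV (2 ^ k) := by
  induction k with
  | zero => simpa using RV_one
  | succ k ih => rw [pow_succ, mul_comm]; exact RV_double ih

end Dy



namespace Dy

noncomputable def D : TP →ₗ[ℂ] TP := mult (fun n => (n : ℂ))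

def AnT (T : ℕ) (f : TP) : Prop := ∀ n ∈ f.support, 1 ≤ n ∧ n ≤ (T : ℤ)

lemma AnT.mult {T : ℕ} {f : TP} (h : AnT T f) (φ : ℤ → ℂ) : AnT T (mult φ f) :=
  fun n hn => h n (mult_support φ f hn)

lemma AnT.smul {T : ℕ} {f : TP} (h : AnT T f) (c : ℂ) : AnT T (c • f) :=
  fun n hn => h n (Finsupp.support_smul hn)

lemma AnT.mono {T T' : ℕ} {f : TP} (h : AnT T f) (hT : T ≤ T') : AnT T' f :=
  fun n hn => ⟨(h n hn).1, (h n hn).2.trans (by exact_mod_cast hT)⟩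

lemma AnT.sum {T : ℕ} {ι : Type*} {s : Finset ι} {f : ι → TP} (h : ∀ i ∈ s, AnT T (f i)) :
    AnT T (∑ i ∈ s, f i) := by
  classical
  intro n hn
  have h1 := Finsupp.support_finsetSum hn
  rw [Finset.mem_biUnion] at h1
  obtain ⟨i, hi, h2⟩ := h1
  exact h i hi n h2

lemma tele (e : ℕ → ℝ) (T : ℕ) : ∑ n ∈ Icc 1 T, (e (n + 1) - e n) = e (T + 1) - e 1 := by
  induction T with
  | zero => simp
  | succ T ih => rw [Finset.sum_Icc_succ_top (by omega), ih]; ring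

lemma tele_ind (c : ℕ → ℝ) (T j : ℕ) (hj : 1 ≤ j) (hjT : j ≤ T + 1) :
    ∑ n ∈ Icc 1 T, (if j ≤ n then c n - c (n + 1) else 0) = c j - c (T + 1) := by
  induction T with
  | zero =>
    have : j = 1 := by omega
    subst this; simp
  | succ T ih =>
    rw [Finset.sum_Icc_succ_top (by omega)]
    by_cases h : j ≤ T + 1
    · rw [ih h, if_pos h]; ring
    · have hj' : j = T + 1 + 1 := by omega
      rw [if_neg h, Finset.sum_eq_zero]
      · subst hj'; simp
      · intro n hn
        rw [Finset.mem_Icc] at hn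
        rw [if_neg (by omega)]

lemma abel_op (c : ℕ → ℝ) (T : ℕ) (hc : c (T + 1) = 0) {R : TP} (hR : AnT T R) :
    ∑ n ∈ Icc 1 T, ((c n - c (n + 1) : ℝ) : ℂ) • S (n : ℤ) R =
      mult (fun j => (c j.toNat : ℂ)) R := by
  ext j
  by_cases hj : R j = 0
  · simp [S, hj, Finsupp.finsetSum_apply]
  · obtain ⟨h1, h2⟩ := hR j (Finsupp.mem_support_iff.mpr hj)
    lift j to ℕ using by omega
    have := tele_ind c T j (by omega) (by omega)
    rw [hc, sub_zero] at this
    rw [mult_apply, Int.toNat_natCast, ← this, Finsupp.finsetSum_apply]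
    push_cast
    rw [Finset.sum_mul]
    refine Finset.sum_congr rfl fun n _ => ?_
    by_cases h : j ≤ n
    · have h' : (j : ℤ) ≤ n := by exact_mod_cast h
      simp [S, h]
    · simp [S, h]

lemma cs2 {ι : Type*} (s : Finset ι) (β κ : ι → ℝ) (hκ : ∀ i ∈ s, 0 < κ i) (v : ι → ℂ) :
    ‖∑ i ∈ s, (β i : ℂ) * v i‖ ^ 2 ≤
      (∑ i ∈ s, |β i| * κ i) * ∑ i ∈ s, |β i| * (κ i)⁻¹ * ‖v i‖ ^ 2 := by
  have h1 : ‖∑ i ∈ s, (β i : ℂ) * v i‖ ≤ ∑ i ∈ s, |β i| * ‖v i‖ := by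
    refine (norm_sum_le _ _).trans (le_of_eq (Finset.sum_congr rfl fun i _ => ?_))
    rw [norm_mul, Complex.norm_real, Real.norm_eq_abs]
  refine (pow_le_pow_left₀ (norm_nonneg _) h1 2).trans ?_
  refine Finset.sum_sq_le_sum_mul_sum_of_sq_le_mul s ?_ ?_ ?_
  · intro i hi; have := hκ i hi; positivity
  · intro i hi; have := hκ i hi; positivity
  · intro i hi; have := hκ i hi; apply le_of_eq; field_simp

noncomputable def cw (T t : ℕ) : ℝ := if t ≤ T then 1 / (t : ℝ) ^ 2 else 0

noncomputable def wt (T t : ℕ) : ℝ := cw T t - cw T (t + 1)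

lemma wt_nonneg {T t : ℕ} (ht : 1 ≤ t) : 0 ≤ wt T t := by
  unfold wt cw
  have h0 : (0 : ℝ) < t := by exact_mod_cast ht
  have : 1 / ((t : ℝ) + 1) ^ 2 ≤ 1 / (t : ℝ) ^ 2 := by
    apply one_div_le_one_div_of_le (by positivity)
    gcongr; linarith
  have h1 : (0:ℝ) < 1 / (t : ℝ) ^ 2 := by positivity
  split_ifs with h1 h2 <;> push_cast <;> first | linarith | omega

lemma wt_lt {T t : ℕ} (ht : 1 ≤ t) (h : t < T) :
    wt T t = (2 * t + 1) / ((t : ℝ) ^ 2 * (t + 1) ^ 2) := by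
  unfold wt cw
  have h0 : (0 : ℝ) < t := by exact_mod_cast ht
  rw [if_pos (by omega), if_pos (by omega)]
  push_cast; field_simp; ring

lemma wt_eq (T : ℕ) : wt T T = 1 / (T : ℝ) ^ 2 := by
  unfold wt cw; simp

lemma schur1 (T s : ℕ) (hs : 1 ≤ s) (hsT : s ≤ T) :
    ∑ t ∈ Icc 1 T, wt T t * t * ((min s t : ℕ) : ℝ) ^ 2 ≤ 5 * s := by
  have s0 : (0 : ℝ) < s := by exact_mod_cast hs
  set h : ℕ → ℝ := fun t => wt T t * t * ((min s t : ℕ) : ℝ) ^ 2 with hh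
  have A : ∀ u, u ≤ s → u ≤ T → ∑ t ∈ Ico 1 u, h t ≤ 2 * u := by
    intro u
    induction u with
    | zero => intro _ _; simp
    | succ u ih =>
      intro h1 h2
      by_cases hu : u = 0
      · subst hu; simp
      rw [Finset.sum_Ico_succ_top (by omega)]
      have ih := ih (by omega) (by omega)
      have u0 : (0 : ℝ) < u := by exact_mod_cast Nat.pos_of_ne_zero hu
      have : h u ≤ 2 := by
        simp only [hh]
        rw [min_eq_right (by omega), wt_lt (by omega) (by omega)]
        rw [show (2 * (u:ℝ) + 1) / ((u : ℝ) ^ 2 * (u + 1) ^ 2) * u * (u:ℝ) ^ 2 =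
          u * (2 * u + 1) / (u + 1) ^ 2 by field_simp]
        rw [div_le_iff₀ (by positivity)]
        nlinarith
      push_cast; linarith
  have B : ∀ u, s ≤ u → u ≤ T → ∑ t ∈ Ico 1 u, h t ≤ 4 * s - 2 * s ^ 2 / u := by
    intro u hu
    induction u, hu using Nat.le_induction with
    | base =>
      intro h1
      have := A s le_rfl h1
      have e : 2 * (s : ℝ) ^ 2 / s = 2 * s := by field_simp
      rw [e]; linarith
    | succ u hu ih =>
      intro h1
      rw [Finset.sum_Ico_succ_top (by omega)]
      have ih := ih (by omega)
      have u0 : (0 : ℝ) < u := by exact_mod_cast (by omega : 0 < u)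
      have : h u ≤ 2 * s ^ 2 / u - 2 * s ^ 2 / (u + 1) := by
        simp only [hh]
        rw [min_eq_left (by omega), wt_lt (by omega) (by omega)]
        rw [show 2 * (s : ℝ) ^ 2 / u - 2 * s ^ 2 / (u + 1) = 2 * s ^ 2 / (u * (u + 1)) by
          field_simp; ring]
        rw [show (2 * (u:ℝ) + 1) / ((u : ℝ) ^ 2 * (u + 1) ^ 2) * u * (s:ℝ) ^ 2 =
          s ^ 2 * (2 * u + 1) / (u * (u + 1) ^ 2) by field_simp]
        rw [div_le_div_iff₀ (by positivity) (by positivity)]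
        have : 0 ≤ (s:ℝ)^2 * u * (u+1) := by positivity
        nlinarith
      push_cast; linarith
  have C := B T hsT le_rfl
  have e : Icc 1 T = Ico 1 (T + 1) := by ext; simp
  rw [e, Finset.sum_Ico_succ_top (by omega)]
  have T0 : (0 : ℝ) < T := by exact_mod_cast (by omega : 0 < T)
  have hsT' : (s : ℝ) ≤ T := by exact_mod_cast hsT
  have l : h T = s ^ 2 / T := by
    simp only [hh]; rw [min_eq_left hsT, wt_eq]; field_simp
  have l2 : (0:ℝ) ≤ s ^ 2 / T := by positivity
  have l3 : 2 * (s:ℝ) ^ 2 / T = 2 * (s ^ 2 / T) := by ring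
  rw [l3] at C
  change ∑ k ∈ Ico 1 T, h k + h T ≤ 5 * s
  rw [l]; linarith

noncomputable def G (T : ℕ) (f : TP) (z : ℂ) : ℝ :=
  ∑ t ∈ Icc 1 T, wt T t * ‖ev z (S (t : ℤ) (D f))‖ ^ 2

lemma G_nonneg (T : ℕ) (f : TP) (z : ℂ) : 0 ≤ G T f z :=
  Finset.sum_nonneg fun t ht => mul_nonneg (wt_nonneg (Finset.mem_Icc.mp ht).1) (sq_nonneg _)

noncomputable def W (T : ℕ) (f : TP) : TP :=
  D (∑ t ∈ Icc 1 T, (wt T t : ℂ) •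
    mult (fun n => if 1 ≤ n then 1 else 0) (mulc (S (t : ℤ) (D f)) f))

lemma wt_tail (T : ℕ) (n : ℤ) (h1 : 1 ≤ n) (h2 : n ≤ T) :
    ∑ t ∈ Icc 1 T, (if n ≤ (t : ℤ) then wt T t else 0) = 1 / (n : ℝ) ^ 2 := by
  lift n to ℕ using by omega
  have := tele_ind (cw T) T n (by omega) (by omega)
  simp only [Nat.cast_le]
  unfold wt
  rw [this]
  simp only [cw]
  rw [if_pos (by omega), if_neg (by omega)]
  simp

lemma G_identity {T : ℕ} {f : TP} (hf : AnT T f) {z : ℂ} (hz : ‖z‖ = 1) :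
    ‖ev z f‖ ^ 2 = G T f z + 2 * (ev z (W T f)).re := by
  set s := f.support with hs
  have eG : ((G T f z : ℝ) : ℂ) = ∑ n ∈ s, ∑ m ∈ s, ((n : ℂ) * m / ((max n m : ℤ) : ℂ) ^ 2) *
      (f n * (starRingEnd ℂ) (f m)) * z ^ (n - m) := by
    unfold G
    push_cast
    have : ∀ t : ℕ, ((‖ev z (S (t : ℤ) (D f))‖ : ℂ)) ^ 2 = ∑ n ∈ s, ∑ m ∈ s,
        (S (t : ℤ) (D f) n * (starRingEnd ℂ) (S (t : ℤ) (D f) m)) * z ^ (n - m) := by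
      intro t
      have := norm_sq_ev (f := S (t : ℤ) (D f)) (s := s)
        ((mult_support _ _).trans (mult_support _ _)) hz
      push_cast at this; exact this
    simp_rw [this, Finset.mul_sum]
    rw [Finset.sum_comm]
    refine Finset.sum_congr rfl fun n hn => ?_
    rw [Finset.sum_comm]
    refine Finset.sum_congr rfl fun m hm => ?_
    have hn' := hf n hn
    have hm' := hf m hm
    have tl := wt_tail T (max n m) (by omega) (by omega)
    have tl' : ∑ t ∈ Icc 1 T, (if max n m ≤ (t : ℤ) then (wt T t : ℂ) else 0) =
        1 / ((max n m : ℤ) : ℂ) ^ 2 := by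
      generalize max n m = M at tl ⊢
      have := congrArg (fun x : ℝ => (x : ℂ)) tl
      push_cast at this
      rw [← this]
      refine Finset.sum_congr rfl fun t _ => ?_
      split_ifs <;> simp
    have e : ((n : ℂ) * m / ((max n m : ℤ) : ℂ) ^ 2) = n * m * (1 / ((max n m : ℤ) : ℂ) ^ 2) := by
      ring
    rw [e, ← tl', Finset.mul_sum, Finset.sum_mul, Finset.sum_mul]
    refine Finset.sum_congr rfl fun t _ => ?_
    simp only [S, D, mult_apply, map_mul, max_le_iff]
    by_cases h1 : n ≤ t <;> by_cases h2 : m ≤ t <;> simp [h1, h2]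
    ring
  have eW : ev z (W T f) = ∑ n ∈ s, ∑ m ∈ s, (if m < n then ((n - m) / n : ℂ) else 0) *
      (f n * (starRingEnd ℂ) (f m)) * z ^ (n - m) := by
    unfold W D
    simp only [map_sum, map_smul, mult_mult, smul_eq_mul]
    have : ∀ t : ℕ, _ := fun t : ℕ => ev_mult_mulc (fun n : ℤ => (n : ℂ) * if 1 ≤ n then 1 else 0)
      (f := S (t : ℤ) (mult (fun n => (n : ℂ)) f)) (g := f) (s := s) (t := s)
      ((mult_support _ _).trans (mult_support _ _)) (subset_refl _) z
    simp_rw [this, Finset.mul_sum]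
    rw [Finset.sum_comm]
    refine Finset.sum_congr rfl fun n hn => ?_
    rw [Finset.sum_comm]
    refine Finset.sum_congr rfl fun m hm => ?_
    have hn' := hf n hn
    have hm' := hf m hm
    have tl := wt_tail T n (by omega) (by omega)
    have tl' : ∑ t ∈ Icc 1 T, (if n ≤ (t : ℤ) then (wt T t : ℂ) else 0) =
        1 / (n : ℂ) ^ 2 := by
      have := congrArg (fun x : ℝ => (x : ℂ)) tl
      push_cast at this
      rw [← this]
      refine Finset.sum_congr rfl fun t _ => ?_
      split_ifs <;> simp
    have n0 : (n : ℂ) ≠ 0 := by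
      have : n ≠ 0 := by omega
      exact_mod_cast this
    by_cases hmn : m < n
    · have h1 : 1 ≤ n - m := by omega
      rw [if_pos hmn, show ((n - m) / n : ℂ) = (n - m) * n * (1 / (n : ℂ) ^ 2) by field_simp,
        ← tl', Finset.mul_sum, Finset.sum_mul, Finset.sum_mul]
      refine Finset.sum_congr rfl fun t _ => ?_
      simp only [S, mult_apply, if_pos h1]
      by_cases h2 : n ≤ t <;> simp [h2]
      ring
    · have h1 : ¬ 1 ≤ n - m := by omega
      simp [h1, hmn]
  have eW' : (starRingEnd ℂ) (ev z (W T f)) =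
      ∑ n ∈ s, ∑ m ∈ s, (if n < m then ((m - n) / m : ℂ) else 0) *
      (f n * (starRingEnd ℂ) (f m)) * z ^ (n - m) := by
    rw [eW, Finset.sum_comm, map_sum]
    refine Finset.sum_congr rfl fun n _ => ?_
    rw [map_sum]
    refine Finset.sum_congr rfl fun m _ => ?_
    rw [map_mul, map_mul, map_mul, conj_zpow hz, Complex.conj_conj, neg_sub]
    have : (starRingEnd ℂ) (if n < m then ((m - n) / m : ℂ) else 0) =
        if n < m then ((m - n) / m : ℂ) else 0 := by
      split_ifs <;> simp
    rw [this]; ring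
  have key : ((‖ev z f‖ ^ 2 : ℝ) : ℂ) =
      ((G T f z : ℝ) : ℂ) + (ev z (W T f) + (starRingEnd ℂ) (ev z (W T f))) := by
    rw [norm_sq_ev (subset_refl f.support) hz, eG, eW', eW, ← Finset.sum_add_distrib,
      ← Finset.sum_add_distrib]
    refine Finset.sum_congr rfl fun n hn => ?_
    rw [← Finset.sum_add_distrib, ← Finset.sum_add_distrib]
    refine Finset.sum_congr rfl fun m hm => ?_
    have n0 : (n : ℂ) ≠ 0 := by
      have := hf n hn
      exact_mod_cast (by omega : n ≠ 0)
    have m0 : (m : ℂ) ≠ 0 := by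
      have := hf m hm
      exact_mod_cast (by omega : m ≠ 0)
    rcases lt_trichotomy n m with h | h | h
    · have h1 : max n m = m := max_eq_right h.le
      rw [h1, if_neg (by omega), if_pos h]
      field_simp; ring
    · subst h
      simp; field_simp
    · have h1 : max n m = n := max_eq_left h.le
      rw [h1, if_pos h, if_neg (by omega)]
      field_simp; ring
  rw [Complex.add_conj, ← Complex.ofReal_add, Complex.ofReal_inj] at key
  exact key

end Dy



namespace Dy

def BB (m : ℕ) : Prop := ∃ C : ℝ, 0 ≤ C ∧ ∀ (T : ℕ) (f : TP), AnT T f → ∀ᶠ N : ℕ in atTop,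
  ∀ ζ : ℂ, ‖ζ‖ = 1 → I N ζ (fun z => (G T f z) ^ m) ≤ C * I N ζ (fun z => (‖ev z f‖ ^ 2) ^ m)

def CP (m : ℕ) : Prop := ∃ C : ℝ, 0 ≤ C ∧ ∀ (T : ℕ) (f : TP), AnT T f → ∀ᶠ N : ℕ in atTop,
  ∀ ζ : ℂ, ‖ζ‖ = 1 → I N ζ (fun z => (‖ev z f‖ ^ 2) ^ m) ≤ C * I N ζ (fun z => (G T f z) ^ m)

def CC (m : ℕ) : Prop := ∃ C : ℝ, 0 ≤ C ∧ ∀ (T : ℕ) (R : ℕ → TP),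
  (∀ t ∈ Icc 1 T, AnT t (R t)) → ∀ᶠ N : ℕ in atTop, ∀ ζ : ℂ, ‖ζ‖ = 1 →
    I N ζ (fun z => (‖ev z (D (∑ t ∈ Icc 1 T, (wt T t : ℂ) • R t))‖ ^ 2) ^ m) ≤
      C * I N ζ (fun z => (∑ t ∈ Icc 1 T, wt T t * ‖ev z (R t)‖ ^ 2) ^ m)

lemma base_eq (T : ℕ) (f : TP) (hf : AnT T f) : ∀ᶠ N : ℕ in atTop,
    ∀ ζ : ℂ, ‖ζ‖ = 1 → I N ζ (fun z => G T f z) = I N ζ (fun z => ‖ev z f‖ ^ 2) := by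
  filter_upwards [parseval f, parseval' f] with N h1 h2 ζ hζ
  rw [h2 ζ hζ]
  unfold G
  rw [I_sum]
  simp_rw [I_mul]
  have : ∀ t : ℕ, I N ζ (fun z => ‖ev z (S (t : ℤ) (D f))‖ ^ 2) =
      N * ∑ n ∈ f.support, (if n ≤ (t : ℤ) then (n : ℝ) ^ 2 else 0) * ‖f n‖ ^ 2 := by
    intro t
    have := h1 ζ hζ (fun n => (if n ≤ (t : ℤ) then 1 else 0) * (n : ℂ))
    rw [← mult_mult] at this
    refine this.trans ?_
    congr 1
    refine Finset.sum_congr rfl fun n _ => ?_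
    split_ifs <;> simp
  simp_rw [this, Finset.mul_sum]
  rw [Finset.sum_comm]
  refine Finset.sum_congr rfl fun n hn => ?_
  obtain ⟨a, b⟩ := hf n hn
  have tl := wt_tail T n a b
  have n0 : (n : ℝ) ≠ 0 := by exact_mod_cast (by omega : n ≠ 0)
  calc _ = (∑ t ∈ Icc 1 T, (if n ≤ (t : ℤ) then wt T t else 0)) * (N * (n:ℝ) ^ 2 * ‖f n‖ ^ 2) := by
        rw [Finset.sum_mul]
        refine Finset.sum_congr rfl fun t _ => ?_
        split_ifs <;> ring
    _ = _ := by rw [tl]; field_simp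

lemma BB_one : BB 1 := by
  refine ⟨1, zero_le_one, fun T f hf => ?_⟩
  filter_upwards [base_eq T f hf] with N h ζ hζ
  simp only [pow_one, one_mul]; exact (h ζ hζ).le

lemma CP_one : CP 1 := by
  refine ⟨1, zero_le_one, fun T f hf => ?_⟩
  filter_upwards [base_eq T f hf] with N h ζ hζ
  simp only [pow_one, one_mul]; exact (h ζ hζ).ge

noncomputable def ck (k n : ℕ) : ℝ := if n ≤ k then (n : ℝ) ^ 2 else 0

lemma ck_var (k T : ℕ) : ∑ n ∈ Icc 1 T, |ck k n - ck k (n + 1)| ≤ 2 * (k : ℝ) ^ 2 := by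
  set e : ℕ → ℝ := fun n => if n ≤ k then (n : ℝ) ^ 2 else 2 * (k : ℝ) ^ 2 with he
  have h1 : ∀ n ∈ Icc 1 T, |ck k n - ck k (n + 1)| ≤ e (n + 1) - e n := by
    intro n _
    simp only [ck, he]
    rcases lt_trichotomy n k with h | h | h
    · rw [if_pos (by omega), if_pos (by omega), if_pos (by omega), if_pos (by omega), abs_le]
      push_cast
      have : (0:ℝ) ≤ n := by positivity
      constructor <;> nlinarith
    · subst h
      rw [if_pos le_rfl, if_neg (by omega), if_neg (by omega), if_pos le_rfl, sub_zero,
        abs_of_nonneg (by positivity)]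
      linarith
    · rw [if_neg (by omega), if_neg (by omega), if_neg (by omega), if_neg (by omega)]
      simp
  refine (Finset.sum_le_sum h1).trans ?_
  rw [tele]
  have h2 : 0 ≤ e 1 := by simp only [he]; split_ifs <;> positivity
  have h3 : e (T + 1) ≤ 2 * (k : ℝ) ^ 2 := by
    simp only [he]
    split_ifs with h
    · have : ((T + 1 : ℕ) : ℝ) ≤ k := by exact_mod_cast h
      have : ((T + 1 : ℕ) : ℝ) ^ 2 ≤ (k : ℝ) ^ 2 := by gcongr
      nlinarith [sq_nonneg (k : ℝ)]
    · exact le_rfl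
  linarith

lemma CC_of {m : ℕ} (hCP : CP m) (hRV : RV m) : CC m := by
  obtain ⟨C1, hC1, h1⟩ := hCP
  obtain ⟨C2, hC2, h2⟩ := hRV
  refine ⟨C1 * (C2 * 100 ^ m), by positivity, fun T R hR => ?_⟩
  set f := D (∑ t ∈ Icc 1 T, (wt T t : ℂ) • R t) with hf
  have hfA : AnT T f := by
    refine AnT.mult (AnT.sum fun t ht => AnT.smul ?_ _) _
    exact (hR t ht).mono (Finset.mem_Icc.mp ht).2
  have h1 := h1 T f hfA
  set al : ℕ → ℕ → ℝ := fun k n => ck k n - ck k (n + 1) with hal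
  set Q : Finset (ℕ × ℕ × ℕ) := Icc 1 T ×ˢ (Icc 1 T ×ˢ Icc 1 T) with hQ
  set w : ℕ × ℕ × ℕ → ℝ := fun q => wt T q.1 * (10 * q.1) *
    (wt T q.2.1 * |al (min q.1 q.2.1) q.2.2| * (q.2.1 : ℝ)⁻¹) with hw
  have hw0 : ∀ q ∈ Q, 0 ≤ w q := by
    rintro ⟨s, t, n⟩ hq
    simp only [hQ, Finset.mem_product, Finset.mem_Icc] at hq
    have a := wt_nonneg (T := T) hq.1.1
    have b := wt_nonneg (T := T) hq.2.1.1
    simp only [hw]; positivity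
  have h2 := h2 _ Q w hw0 (fun q => R q.2.1) (fun q => (q.2.2 : ℤ))
  have rep : ∀ s ∈ Icc 1 T, S (s : ℤ) (D f) = ∑ t ∈ Icc 1 T, ∑ n ∈ Icc 1 T,
      ((wt T t * al (min s t) n : ℝ) : ℂ) • S (n : ℤ) (R t) := by
    intro s hs
    rw [hf]
    simp only [map_sum, map_smul]
    refine Finset.sum_congr rfl fun t ht => ?_
    have hRt := hR t ht
    rw [Finset.mem_Icc] at hs ht
    have := abel_op (ck (min s t)) T (by unfold ck; rw [if_neg (by omega)])
      (hRt.mono (by omega))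
    have e2 : S (s : ℤ) (D (D (R t))) = mult (fun j => (ck (min s t) j.toNat : ℂ)) (R t) := by
      ext j
      by_cases hj : R t j = 0
      · simp [S, D, hj]
      · obtain ⟨a, b⟩ := hRt j (Finsupp.mem_support_iff.mpr hj)
        lift j to ℕ using by omega
        simp only [S, D, mult_apply, ck, Int.toNat_natCast]
        have : (j : ℤ) ≤ s ↔ j ≤ min s t := by omega
        simp only [this]
        split_ifs
        · simp; ring
        · simp
    rw [e2, ← this, Finset.smul_sum]
    refine Finset.sum_congr rfl fun n _ => ?_
    rw [smul_smul]; simp only [hal]; push_cast; rfl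
  have p1 : ∀ z : ℂ, G T f z ≤ ∑ q ∈ Q, w q * ‖ev z (S (q.2.2 : ℤ) (R q.2.1))‖ ^ 2 := by
    intro z
    unfold G
    rw [hQ, Finset.sum_product]
    refine Finset.sum_le_sum fun s hs => ?_
    have b := cs2 (Icc 1 T ×ˢ Icc 1 T) (fun q => wt T q.1 * al (min s q.1) q.2)
      (fun q => (q.1 : ℝ)) (by
        rintro ⟨t, n⟩ hq
        simp only [Finset.mem_product, Finset.mem_Icc] at hq
        exact_mod_cast hq.1.1) (fun q => ev z (S (q.2 : ℤ) (R q.1)))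
    have e1 : ev z (S (s : ℤ) (D f)) = ∑ q ∈ Icc 1 T ×ˢ Icc 1 T,
        ((wt T q.1 * al (min s q.1) q.2 : ℝ) : ℂ) * ev z (S (q.2 : ℤ) (R q.1)) := by
      rw [rep s hs, Finset.sum_product]
      simp only [map_sum, map_smul, smul_eq_mul]
    rw [← e1] at b
    have e2 : ∑ q ∈ Icc 1 T ×ˢ Icc 1 T, |wt T q.1 * al (min s q.1) q.2| * (q.1 : ℝ) ≤ 10 * s := by
      rw [Finset.sum_product]
      have := schur1 T s (Finset.mem_Icc.mp hs).1 (Finset.mem_Icc.mp hs).2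
      calc _ ≤ ∑ t ∈ Icc 1 T, 2 * (wt T t * t * ((min s t : ℕ) : ℝ) ^ 2) := by
            refine Finset.sum_le_sum fun t ht => ?_
            have a := wt_nonneg (T := T) (Finset.mem_Icc.mp ht).1
            simp only [abs_mul, abs_of_nonneg a]
            have := ck_var (min s t) T
            calc _ = wt T t * t * ∑ n ∈ Icc 1 T, |ck (min s t) n - ck (min s t) (n + 1)| := by
                  rw [Finset.mul_sum]; refine Finset.sum_congr rfl fun n _ => ?_
                  simp only [hal]; ring
              _ ≤ wt T t * t * (2 * ((min s t : ℕ) : ℝ) ^ 2) := by gcongr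
              _ = _ := by ring
        _ ≤ _ := by rw [← Finset.mul_sum]; linarith
    have a := wt_nonneg (T := T) (Finset.mem_Icc.mp hs).1
    calc _ ≤ wt T s * ((10 * s) * ∑ q ∈ Icc 1 T ×ˢ Icc 1 T,
          |wt T q.1 * al (min s q.1) q.2| * (q.1 : ℝ)⁻¹ * ‖ev z (S (q.2 : ℤ) (R q.1))‖ ^ 2) := by
          refine mul_le_mul_of_nonneg_left (b.trans ?_) a
          refine mul_le_mul_of_nonneg_right e2 (Finset.sum_nonneg fun q _ => by positivity)
      _ = _ := by
          rw [← mul_assoc, Finset.mul_sum]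
          refine Finset.sum_congr rfl fun q hq => ?_
          have a := wt_nonneg (T := T) (Finset.mem_Icc.mp (Finset.mem_product.mp hq).1).1
          simp only [hw, abs_mul, abs_of_nonneg a]
          ring
  have p2 : ∀ z : ℂ, ∑ q ∈ Q, w q * ‖ev z (R q.2.1)‖ ^ 2 ≤
      100 * ∑ t ∈ Icc 1 T, wt T t * ‖ev z (R t)‖ ^ 2 := by
    intro z
    rw [hQ, Finset.sum_product, Finset.mul_sum]
    simp_rw [Finset.sum_product]
    rw [Finset.sum_comm]
    refine Finset.sum_le_sum fun t ht => ?_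
    have a := wt_nonneg (T := T) (Finset.mem_Icc.mp ht).1
    have t0 : (0 : ℝ) < t := by exact_mod_cast (Finset.mem_Icc.mp ht).1
    have sc := schur1 T t (Finset.mem_Icc.mp ht).1 (Finset.mem_Icc.mp ht).2
    calc _ ≤ ∑ s ∈ Icc 1 T, (wt T s * s * ((min t s : ℕ) : ℝ) ^ 2) *
          (20 * (wt T t * (t : ℝ)⁻¹ * ‖ev z (R t)‖ ^ 2)) := by
          refine Finset.sum_le_sum fun s hs => ?_
          have a' := wt_nonneg (T := T) (Finset.mem_Icc.mp hs).1
          have := ck_var (min s t) T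
          calc _ = (wt T s * (10 * s) * (wt T t * (t : ℝ)⁻¹) * ‖ev z (R t)‖ ^ 2) *
                ∑ n ∈ Icc 1 T, |ck (min s t) n - ck (min s t) (n + 1)| := by
                rw [Finset.mul_sum]; refine Finset.sum_congr rfl fun n _ => ?_
                simp only [hw, hal]; ring
            _ ≤ (wt T s * (10 * s) * (wt T t * (t : ℝ)⁻¹) * ‖ev z (R t)‖ ^ 2) *
                (2 * ((min s t : ℕ) : ℝ) ^ 2) := by gcongr
            _ = _ := by rw [min_comm t s]; ring
      _ ≤ (5 * t) * (20 * (wt T t * (t : ℝ)⁻¹ * ‖ev z (R t)‖ ^ 2)) := by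
          rw [← Finset.sum_mul]
          exact mul_le_mul_of_nonneg_right sc (by positivity)
      _ = _ := by field_simp; ring
  filter_upwards [h1, h2] with N h1 h2 ζ hζ
  have h1 := h1 ζ hζ
  have h2 := h2 ζ hζ
  refine h1.trans ?_
  rw [mul_assoc]
  refine mul_le_mul_of_nonneg_left ?_ hC1
  calc _ ≤ I N ζ (fun z => (∑ q ∈ Q, w q * ‖ev z (S (q.2.2 : ℤ) (R q.2.1))‖ ^ 2) ^ m) :=
        I_mono hζ fun z _ => pow_le_pow_left₀ (G_nonneg _ _ _) (p1 z) _
    _ ≤ _ := h2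
    _ ≤ C2 * (100 ^ m * I N ζ (fun z => (∑ t ∈ Icc 1 T, wt T t * ‖ev z (R t)‖ ^ 2) ^ m)) := by
        refine mul_le_mul_of_nonneg_left ?_ hC2
        rw [← I_mul]
        refine I_mono hζ fun z _ => ?_
        rw [← mul_pow]
        exact pow_le_pow_left₀ (Finset.sum_nonneg fun q hq => mul_nonneg (hw0 q hq) (sq_nonneg _))
          (p2 z) _
    _ = _ := by ring

lemma add_pow_le2 {a b : ℝ} (ha : 0 ≤ a) (hb : 0 ≤ b) (n : ℕ) :
    (a + b) ^ n ≤ 2 ^ n * (a ^ n + b ^ n) := by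
  have h0 : 0 ≤ a ^ n := by positivity
  have h1 : 0 ≤ b ^ n := by positivity
  rcases le_total a b with h | h
  · calc (a + b) ^ n ≤ (2 * b) ^ n := by gcongr; linarith
      _ = 2 ^ n * b ^ n := mul_pow _ _ _
      _ ≤ _ := by gcongr; linarith
  · calc (a + b) ^ n ≤ (2 * a) ^ n := by gcongr; linarith
      _ = 2 ^ n * a ^ n := mul_pow _ _ _
      _ ≤ _ := by gcongr; linarith

lemma step {N : ℕ} {ζ : ℂ} (hζ : ‖ζ‖ = 1) {m : ℕ} {A B w : ℂ → ℝ} {K : ℝ}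
    (hA : ∀ z, ‖z‖ = 1 → 0 ≤ A z) (hB : ∀ z, ‖z‖ = 1 → 0 ≤ B z) (hw : ∀ z, ‖z‖ = 1 → 0 ≤ w z)
    (h1 : ∀ z, ‖z‖ = 1 → A z ≤ B z + 2 * w z)
    (h2 : I N ζ (fun z => (w z ^ 2) ^ m) ≤ K * I N ζ (fun z => A z ^ m * B z ^ m)) :
    I N ζ (fun z => A z ^ (2 * m)) ≤
      (2 * 4 ^ m + (16 ^ m * K) ^ 2) * I N ζ (fun z => B z ^ (2 * m)) := by
  have q1 : I N ζ (fun z => A z ^ (2 * m)) ≤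
      4 ^ m * I N ζ (fun z => B z ^ (2 * m)) + 16 ^ m * I N ζ (fun z => (w z ^ 2) ^ m) := by
    rw [← I_mul, ← I_mul, ← I_add]
    refine I_mono hζ fun z hz => ?_
    have hw' := hw z hz
    calc A z ^ (2 * m) ≤ (B z + 2 * w z) ^ (2 * m) := pow_le_pow_left₀ (hA z hz) (h1 z hz) _
      _ ≤ 2 ^ (2 * m) * (B z ^ (2 * m) + (2 * w z) ^ (2 * m)) :=
          add_pow_le2 (hB z hz) (by positivity) _
      _ = _ := by
          rw [mul_pow, pow_mul 2 2 m, pow_mul (w z) 2 m,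
            show (16 : ℝ) = 2 ^ 2 * 2 ^ 2 by norm_num, mul_pow]
          norm_num; ring
  have q2 : (16 ^ m * K) * I N ζ (fun z => A z ^ m * B z ^ m) ≤
      1 / 2 * I N ζ (fun z => A z ^ (2 * m)) +
        (16 ^ m * K) ^ 2 / 2 * I N ζ (fun z => B z ^ (2 * m)) := by
    rw [← I_mul, ← I_mul, ← I_mul, ← I_add]
    refine I_mono hζ fun z hz => ?_
    have := absorb (x := B z ^ m) (y := A z ^ m) (K := 16 ^ m * K)
    rw [mul_comm 2 m, pow_mul, pow_mul, mul_comm (A z ^ m)]; exact this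
  have q3 : 16 ^ m * I N ζ (fun z => (w z ^ 2) ^ m) ≤
      (16 ^ m * K) * I N ζ (fun z => A z ^ m * B z ^ m) := by
    rw [mul_assoc]; gcongr
  nlinarith

lemma W_bound {m : ℕ} (hCC : CC m) (hRV : RV m) : ∃ K : ℝ, 0 ≤ K ∧ ∀ (T : ℕ) (f : TP), AnT T f →
    ∀ᶠ N : ℕ in atTop, ∀ ζ : ℂ, ‖ζ‖ = 1 → I N ζ (fun z => (‖ev z (W T f)‖ ^ 2) ^ m) ≤
      K * I N ζ (fun z => G T f z ^ m * (‖ev z f‖ ^ 2) ^ m) := by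
  obtain ⟨C1, hC1, h1⟩ := hCC
  obtain ⟨C2, hC2, h2⟩ := hRV
  refine ⟨C1 * (4 ^ m * (1 + C2)), by positivity, fun T f hf => ?_⟩
  set V : ℕ → TP := fun t => mulc (S (t : ℤ) (D f)) f with hV
  set R : ℕ → TP := fun t => mult (fun n => if 1 ≤ n then 1 else 0) (V t) with hR
  have hRA : ∀ t ∈ Icc 1 T, AnT t (R t) := by
    intro t _ n hn
    have h3 := mult_support _ _ hn
    obtain ⟨a, ha, b, hb, e⟩ := mulc_supp h3
    have h4 : 1 ≤ n := by
      by_contra h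
      rw [Finsupp.mem_support_iff] at hn
      simp [hR, h] at hn
    have h5 : a ≤ t := by
      by_contra h
      rw [Finsupp.mem_support_iff] at ha
      simp [S, h] at ha
    have := (hf b hb).1
    exact ⟨h4, by omega⟩
  have h1 := h1 T R hRA
  have hw0 : ∀ t ∈ Icc 1 T, 0 ≤ wt T t := fun t ht => wt_nonneg (Finset.mem_Icc.mp ht).1
  have h2 := h2 _ (Icc 1 T) (wt T) hw0 V (fun _ => 0)
  filter_upwards [h1, h2] with N h1 h2 ζ hζ
  have h1 := h1 ζ hζ
  have h2 := h2 ζ hζ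
  have eR : ∀ t, R t = V t - S 0 (V t) := by
    intro t
    ext n
    simp only [hR, S, Finsupp.sub_apply, mult_apply]
    by_cases h : 1 ≤ n
    · have : ¬ n ≤ 0 := by omega
      simp [h, this]
    · have : n ≤ 0 := by omega
      simp [h, this]
  set A : ℂ → ℝ := fun z => ∑ t ∈ Icc 1 T, wt T t * ‖ev z (V t)‖ ^ 2 with hA
  set B : ℂ → ℝ := fun z => ∑ t ∈ Icc 1 T, wt T t * ‖ev z (S 0 (V t))‖ ^ 2 with hB
  have A0 : ∀ z, 0 ≤ A z := fun z =>
    Finset.sum_nonneg fun t ht => mul_nonneg (hw0 t ht) (sq_nonneg _)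
  have B0 : ∀ z, 0 ≤ B z := fun z =>
    Finset.sum_nonneg fun t ht => mul_nonneg (hw0 t ht) (sq_nonneg _)
  have p : ∀ z, ∑ t ∈ Icc 1 T, wt T t * ‖ev z (R t)‖ ^ 2 ≤ 2 * A z + 2 * B z := by
    intro z
    simp only [hA, hB, Finset.mul_sum]
    rw [← Finset.sum_add_distrib]
    refine Finset.sum_le_sum fun t ht => ?_
    have := hw0 t ht
    have h3 : ‖ev z (R t)‖ ≤ ‖ev z (V t)‖ + ‖ev z (S 0 (V t))‖ := by
      rw [eR, map_sub]; exact norm_sub_le _ _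
    have h4 : ‖ev z (R t)‖ ^ 2 ≤ 2 * ‖ev z (V t)‖ ^ 2 + 2 * ‖ev z (S 0 (V t))‖ ^ 2 := by
      have := pow_le_pow_left₀ (norm_nonneg _) h3 2
      nlinarith [sq_nonneg (‖ev z (V t)‖ - ‖ev z (S 0 (V t))‖)]
    nlinarith [mul_le_mul_of_nonneg_left h4 this]
  have eA : I N ζ (fun z => A z ^ m) = I N ζ (fun z => G T f z ^ m * (‖ev z f‖ ^ 2) ^ m) := by
    refine I_congr hζ fun z hz => ?_
    rw [← mul_pow]; congr 1
    simp only [hA, hV, G, Finset.sum_mul]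
    refine Finset.sum_congr rfl fun t _ => ?_
    rw [ev_mulc _ _ hz, norm_mul, RCLike.norm_conj]; ring
  refine h1.trans ?_
  rw [mul_assoc]
  refine mul_le_mul_of_nonneg_left ?_ hC1
  calc _ ≤ I N ζ (fun z => 4 ^ m * (A z ^ m + B z ^ m)) := by
        refine I_mono hζ fun z _ => ?_
        calc _ ≤ (2 * A z + 2 * B z) ^ m := pow_le_pow_left₀
              (Finset.sum_nonneg fun t ht => mul_nonneg (hw0 t ht) (sq_nonneg _)) (p z) _
          _ ≤ 2 ^ m * ((2 * A z) ^ m + (2 * B z) ^ m) :=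
              add_pow_le2 (mul_nonneg zero_le_two (A0 z)) (mul_nonneg zero_le_two (B0 z)) _
          _ = _ := by rw [show (4:ℝ) = 2 * 2 by norm_num, mul_pow, mul_pow, mul_pow]; ring
    _ ≤ 4 ^ m * ((1 + C2) * I N ζ (fun z => A z ^ m)) := by
        rw [I_mul, I_add]; gcongr
        rw [add_mul, one_mul]; gcongr
    _ = _ := by rw [eA]; ring

lemma BB_double {m : ℕ} (hCC : CC m) (hRV : RV m) : BB (2 * m) := by
  obtain ⟨K, hK, h⟩ := W_bound hCC hRV
  refine ⟨2 * 4 ^ m + (16 ^ m * K) ^ 2, by positivity, fun T f hf => ?_⟩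
  filter_upwards [h T f hf] with N h ζ hζ
  refine step hζ (w := fun z => ‖ev z (W T f)‖) (fun z _ => G_nonneg _ _ _)
    (fun z _ => sq_nonneg _) (fun z _ => norm_nonneg _) (fun z hz => ?_) (h ζ hζ)
  have := G_identity hf hz
  have h2 := (abs_le.mp (Complex.abs_re_le_norm (ev z (W T f)))).1
  linarith

lemma CP_double {m : ℕ} (hCC : CC m) (hRV : RV m) : CP (2 * m) := by
  obtain ⟨K, hK, h⟩ := W_bound hCC hRV
  refine ⟨2 * 4 ^ m + (16 ^ m * K) ^ 2, by positivity, fun T f hf => ?_⟩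
  filter_upwards [h T f hf] with N h ζ hζ
  refine step hζ (w := fun z => ‖ev z (W T f)‖) (fun z _ => sq_nonneg _)
    (fun z _ => G_nonneg _ _ _) (fun z _ => norm_nonneg _) (fun z hz => ?_) ?_
  · have := G_identity hf hz
    have h2 := Complex.re_le_norm (ev z (W T f))
    linarith
  · have := h ζ hζ
    simp only [mul_comm (G T f _ ^ m)] at this
    exact this

lemma BB_CP (k : ℕ) : BB (2 ^ k) ∧ CP (2 ^ k) := by
  induction k with
  | zero => simpa using ⟨BB_one, CP_one⟩
  | succ k ih =>
    have := CC_of ih.2 (RV_pow k)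
    rw [pow_succ, mul_comm]
    exact ⟨BB_double this (RV_pow k), CP_double this (RV_pow k)⟩

end Dy



namespace Dy

def Th (J : Finset ℕ) (b : ℕ → ℕ) (θ : ℝ) : Prop :=
  0 < θ ∧ ∀ j ∈ J, 1 ≤ b j ∧ θ * 2 ^ j ≤ b j ∧ (b j : ℝ) ≤ 4 * (θ * 2 ^ j)

def Pos (f : TP) : Prop := ∀ n ∈ f.support, 1 ≤ n

lemma Th.double {J : Finset ℕ} {b : ℕ → ℕ} {θ : ℝ} (h : Th J b θ) :
    Th J (fun j => 2 * b j) (2 * θ) := by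
  refine ⟨by linarith [h.1], fun j hj => ?_⟩
  obtain ⟨a, a2, a3⟩ := h.2 j hj
  refine ⟨by show 1 ≤ 2 * b j; omega, ?_, ?_⟩ <;> push_cast <;> linarith

noncomputable def cb (b n : ℕ) : ℝ := if b < n ∧ n ≤ 2 * b then 1 / (n : ℝ) else 0

lemma cb_var (b T : ℕ) (hb : 1 ≤ b) : ∑ n ∈ Icc 1 T, |cb b n - cb b (n + 1)| ≤ 2 / (b : ℝ) := by
  have b0 : (0 : ℝ) < b := by exact_mod_cast hb
  set e : ℕ → ℝ := fun n => if n ≤ b then 0 else if n ≤ 2 * b then 2 / (b : ℝ) - 1 / n else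
    2 / (b : ℝ) with he
  have h1 : ∀ n ∈ Icc 1 T, |cb b n - cb b (n + 1)| ≤ e (n + 1) - e n := by
    intro n hn
    have n0 : (0 : ℝ) < n := by exact_mod_cast (Finset.mem_Icc.mp hn).1
    simp only [cb, he]
    rcases lt_trichotomy n b with h | h | h
    · rw [if_neg (by omega), if_neg (by omega), if_pos (by omega), if_pos (by omega)]
      simp
    · subst h
      rw [if_neg (by omega), if_pos (by omega), if_neg (by omega), if_pos (by omega),
        if_pos (by omega), zero_sub, abs_neg, abs_of_nonneg (by positivity)]
      push_cast
      have : 1 / ((n : ℝ) + 1) ≤ 1 / n := one_div_le_one_div_of_le n0 (by linarith)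
      have e2 : 2 / (n : ℝ) = 1 / n + 1 / n := by ring
      linarith
    · rcases lt_trichotomy n (2 * b) with h' | h' | h'
      · rw [if_pos (by omega), if_pos (by omega), if_neg (by omega), if_pos (by omega),
          if_neg (by omega), if_pos (by omega)]
        push_cast
        have : 1 / ((n : ℝ) + 1) ≤ 1 / n := one_div_le_one_div_of_le n0 (by linarith)
        rw [abs_of_nonneg (by linarith)]; linarith
      · rw [if_pos (by omega), if_neg (by omega), if_neg (by omega), if_neg (by omega),
          if_neg (by omega), if_pos (by omega), sub_zero, abs_of_nonneg (by positivity)]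
        linarith
      · rw [if_neg (by omega), if_neg (by omega), if_neg (by omega), if_neg (by omega),
          if_neg (by omega), if_neg (by omega)]
        simp
  refine (Finset.sum_le_sum h1).trans ?_
  rw [tele]
  have h2 : e 1 = 0 := by simp only [he]; rw [if_pos hb]
  have h3 : e (T + 1) ≤ 2 / (b : ℝ) := by
    simp only [he]
    split_ifs with h h
    · positivity
    · have : 0 ≤ 1 / ((T + 1 : ℕ) : ℝ) := by positivity
      linarith
    · exact le_rfl
  linarith

lemma overlap {J : Finset ℕ} {b : ℕ → ℕ} {θ : ℝ} (h : Th J b θ) (t : ℕ) :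
    (J.filter (fun j => 2 * b j ≤ t ∧ t < 4 * b j)).card ≤ 3 := by
  set F := J.filter (fun j => 2 * b j ≤ t ∧ t < 4 * b j) with hF
  rcases F.eq_empty_or_nonempty with h0 | h0
  · simp [h0]
  · have hm := F.min'_mem h0
    set j0 := F.min' h0
    have : F ⊆ Ico j0 (j0 + 3) := by
      intro j hj
      have h1 := F.min'_le j hj
      rw [hF, Finset.mem_filter] at hj hm
      obtain ⟨-, a1, a2⟩ := h.2 j hj.1
      obtain ⟨-, c1, c2⟩ := h.2 j0 hm.1
      rw [Finset.mem_Ico]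
      refine ⟨h1, ?_⟩
      have e1 : (2 : ℝ) * b j ≤ t := by exact_mod_cast hj.2.1
      have e2 : (t : ℝ) < 4 * b j0 := by exact_mod_cast hm.2.2
      have e3 : θ * 2 ^ j < θ * 2 ^ (j0 + 3) := by
        rw [pow_add]; linarith
      have e4 : (2 : ℝ) ^ j < 2 ^ (j0 + 3) := lt_of_mul_lt_mul_left e3 h.1.le
      exact (pow_lt_pow_iff_right₀ one_lt_two).mp e4
    refine (Finset.card_le_card this).trans ?_
    simp

lemma wt_low {T t : ℕ} (ht : 1 ≤ t) (h : t < T) : 1 / (t : ℝ) ^ 3 ≤ 2 * wt T t := by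
  rw [wt_lt ht h]
  have t0 : (0 : ℝ) < t := by exact_mod_cast ht
  have t1 : (1 : ℝ) ≤ t := by exact_mod_cast ht
  rw [← mul_div_assoc, div_le_div_iff₀ (by positivity) (by positivity)]
  have : 0 ≤ (t : ℝ) ^ 2 * (3 * t ^ 2 - 1) := by
    apply mul_nonneg (by positivity); nlinarith
  nlinarith

def Sq (m : ℕ) : Prop := ∃ C : ℝ, 0 ≤ C ∧ ∀ (J : Finset ℕ) (b : ℕ → ℕ) (θ : ℝ), Th J b θ →
  ∀ f : TP, Pos f → ∀ᶠ N : ℕ in atTop, ∀ ζ : ℂ, ‖ζ‖ = 1 →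
    I N ζ (fun z => (∑ j ∈ J, ‖ev z (S (2 * b j : ℕ) f - S (b j) f)‖ ^ 2) ^ m) ≤
      C * I N ζ (fun z => (‖ev z f‖ ^ 2) ^ m)

lemma Sq_of {m : ℕ} (hBB : BB m) (hRV : RV m) : Sq m := by
  obtain ⟨C1, hC1, h1⟩ := hBB
  obtain ⟨C2, hC2, h2⟩ := hRV
  refine ⟨C2 * (768 ^ m * C1), by positivity, fun J b θ hb f hf => ?_⟩
  obtain ⟨T, hT1, hT2⟩ : ∃ T : ℕ, (∀ j ∈ J, 4 * b j ≤ T) ∧ AnT T f := by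
    refine ⟨∑ j ∈ J, 4 * b j + ∑ n ∈ f.support, n.toNat, fun j hj => ?_, fun n hn => ?_⟩
    · have := Finset.single_le_sum (f := fun j => 4 * b j) (fun _ _ => Nat.zero_le _) hj
      omega
    · have := Finset.single_le_sum (f := fun n : ℤ => n.toNat) (fun _ _ => Nat.zero_le _) hn
      have := hf n hn
      exact ⟨this, by omega⟩
  have h1 := h1 T f hT2
  set al : ℕ → ℕ → ℝ := fun j n => cb (b j) n - cb (b j) (n + 1) with hal
  set Q : Finset (ℕ × ℕ × ℕ) := J ×ˢ (Icc 1 T ×ˢ Icc 1 T) with hQ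
  set ind : ℕ → ℕ → ℝ := fun j t => if 2 * b j ≤ t ∧ t < 4 * b j then 1 / (b j : ℝ) ^ 2 else 0
    with hind
  have ind0 : ∀ j t, 0 ≤ ind j t := by
    intro j t; simp only [hind]; split_ifs <;> positivity
  set w : ℕ × ℕ × ℕ → ℝ := fun q => ind q.1 q.2.1 * |al q.1 q.2.2| with hw
  have hw0 : ∀ q ∈ Q, 0 ≤ w q := fun q _ => mul_nonneg (ind0 _ _) (abs_nonneg _)
  have h2 := h2 _ Q w hw0 (fun q => S (q.2.1 : ℤ) (D f)) (fun q => (q.2.2 : ℤ))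
  have var : ∀ j ∈ J, ∑ n ∈ Icc 1 T, |al j n| ≤ 2 / (b j : ℝ) := fun j hj =>
    cb_var (b j) T (hb.2 j hj).1
  have rep : ∀ j ∈ J, ∀ t : ℕ, 2 * b j ≤ t → S (2 * b j : ℕ) f - S (b j) f =
      ∑ n ∈ Icc 1 T, ((al j n : ℝ) : ℂ) • S (n : ℤ) (S (t : ℤ) (D f)) := by
    intro j hj t ht
    have h4 := hT1 j hj
    have h5 := (hb.2 j hj).1
    have := abel_op (cb (b j)) T (by unfold cb; rw [if_neg (by omega)])
      (R := S (t : ℤ) (D f)) ((hT2.mult _).mult _)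
    simp only [hal]
    rw [this]
    ext n
    by_cases hn : f n = 0
    · simp [S, D, hn]
    · obtain ⟨a1, a2⟩ := hT2 n (Finsupp.mem_support_iff.mpr hn)
      lift n to ℕ using by omega
      have n0 : (n : ℂ) ≠ 0 := by exact_mod_cast (by omega : n ≠ 0)
      simp only [S, D, mult_apply, cb, Int.toNat_natCast, Finsupp.sub_apply, Nat.cast_le]
      by_cases c1 : n ≤ b j
      · rw [if_pos (by omega), if_pos c1, if_neg (by omega)]; simp
      · by_cases c2 : n ≤ 2 * b j
        · rw [if_pos c2, if_neg c1, if_pos (by omega), if_pos (by omega)]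
          push_cast; field_simp; simp
        · rw [if_neg c2, if_neg c1, if_neg (by omega)]; simp
  have p1 : ∀ z : ℂ, ∑ j ∈ J, ‖ev z (S (2 * b j : ℕ) f - S (b j) f)‖ ^ 2 ≤
      ∑ q ∈ Q, w q * ‖ev z (S (q.2.2 : ℤ) (S (q.2.1 : ℤ) (D f)))‖ ^ 2 := by
    intro z
    rw [hQ, Finset.sum_product]
    refine Finset.sum_le_sum fun j hj => ?_
    have h4 := hT1 j hj
    have h5 := (hb.2 j hj).1
    have b0 : (0 : ℝ) < b j := by exact_mod_cast h5
    set E := ‖ev z (S (2 * b j : ℕ) f - S (b j) f)‖ ^ 2 with hE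
    set X : ℕ → ℝ := fun t => ∑ n ∈ Icc 1 T, |al j n| *
      ‖ev z (S (n : ℤ) (S (t : ℤ) (D f)))‖ ^ 2 with hX
    have hX0 : ∀ t, 0 ≤ X t := fun t => Finset.sum_nonneg fun n _ => by positivity
    have q1 : ∀ t : ℕ, 2 * b j ≤ t → E ≤ 2 / b j * X t := by
      intro t ht
      have c := cs2 (Icc 1 T) (al j) (fun _ => 1) (fun _ _ => one_pos)
        (fun n => ev z (S (n : ℤ) (S (t : ℤ) (D f))))
      have e1 : ev z (S (2 * b j : ℕ) f - S (b j) f) =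
          ∑ n ∈ Icc 1 T, ((al j n : ℝ) : ℂ) * ev z (S (n : ℤ) (S (t : ℤ) (D f))) := by
        rw [rep j hj t ht]; simp only [map_sum, map_smul, smul_eq_mul]
      rw [← e1] at c
      simp only [mul_one, inv_one] at c
      refine c.trans ?_
      exact mul_le_mul_of_nonneg_right (var j hj) (hX0 t)
    have q2 : (2 * b j) * E ≤ ∑ t ∈ Ico (2 * b j) (4 * b j), 2 / b j * X t := by
      have : ∑ t ∈ Ico (2 * b j) (4 * b j), E ≤ ∑ t ∈ Ico (2 * b j) (4 * b j), 2 / b j * X t :=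
        Finset.sum_le_sum fun t ht => q1 t (Finset.mem_Ico.mp ht).1
      rw [Finset.sum_const, Nat.card_Ico, nsmul_eq_mul,
        show 4 * b j - 2 * b j = 2 * b j by omega] at this
      push_cast at this; exact this
    have q3 : E ≤ ∑ t ∈ Ico (2 * b j) (4 * b j), 1 / (b j : ℝ) ^ 2 * X t := by
      have : (2 * b j) * E ≤ (2 * b j) * ∑ t ∈ Ico (2 * b j) (4 * b j),
          1 / (b j : ℝ) ^ 2 * X t := by
        refine q2.trans (le_of_eq ?_)
        rw [Finset.mul_sum]
        refine Finset.sum_congr rfl fun t _ => ?_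
        field_simp
      exact le_of_mul_le_mul_left this (by positivity)
    refine q3.trans (le_of_eq ?_)
    rw [Finset.sum_product]
    rw [← Finset.sum_subset (s₁ := Ico (2 * b j) (4 * b j)) (s₂ := Icc 1 T)]
    · refine Finset.sum_congr rfl fun t ht => ?_
      rw [Finset.mem_Ico] at ht
      simp only [hX, Finset.mul_sum, hw, hind]
      refine Finset.sum_congr rfl fun n _ => ?_
      rw [if_pos ht]; ring
    · intro t ht
      rw [Finset.mem_Ico] at ht; rw [Finset.mem_Icc]; omega
    · intro t _ ht
      rw [Finset.mem_Ico] at ht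
      simp only [hw, hind, if_neg ht]; simp
  have p2 : ∀ z : ℂ, ∑ q ∈ Q, w q * ‖ev z (S (q.2.1 : ℤ) (D f))‖ ^ 2 ≤ 768 * G T f z := by
    intro z
    unfold G
    rw [hQ, Finset.sum_product, Finset.mul_sum]
    simp_rw [Finset.sum_product]
    rw [Finset.sum_comm]
    refine Finset.sum_le_sum fun t ht => ?_
    have ht1 := (Finset.mem_Icc.mp ht).1
    have t0 : (0 : ℝ) < t := by exact_mod_cast ht1
    have wn := wt_nonneg (T := T) ht1
    calc _ ≤ ∑ j ∈ J, (if 2 * b j ≤ t ∧ t < 4 * b j then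
          256 * (wt T t * ‖ev z (S (t : ℤ) (D f))‖ ^ 2) else 0) := by
          refine Finset.sum_le_sum fun j hj => ?_
          have h4 := hT1 j hj
          have b0 : (0 : ℝ) < b j := by exact_mod_cast (hb.2 j hj).1
          by_cases c : 2 * b j ≤ t ∧ t < 4 * b j
          · rw [if_pos c]
            have wl := wt_low ht1 (show t < T by omega)
            have tb : (t : ℝ) ≤ 4 * b j := by exact_mod_cast c.2.le
            calc _ = (1 / (b j : ℝ) ^ 2 * ‖ev z (S (t : ℤ) (D f))‖ ^ 2) *
                  ∑ n ∈ Icc 1 T, |al j n| := by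
                  rw [Finset.mul_sum]
                  refine Finset.sum_congr rfl fun n _ => ?_
                  simp only [hw, hind, if_pos c]; ring
              _ ≤ (1 / (b j : ℝ) ^ 2 * ‖ev z (S (t : ℤ) (D f))‖ ^ 2) * (2 / b j) := by
                  gcongr; exact var j hj
              _ = (128 * (1 / (4 * b j) ^ 3)) * ‖ev z (S (t : ℤ) (D f))‖ ^ 2 := by
                  field_simp; norm_num; ring
              _ ≤ (128 * (1 / (t : ℝ) ^ 3)) * ‖ev z (S (t : ℤ) (D f))‖ ^ 2 := by gcongr
              _ ≤ (128 * (2 * wt T t)) * ‖ev z (S (t : ℤ) (D f))‖ ^ 2 := by gcongr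
              _ = _ := by ring
          · rw [if_neg c]
            simp only [hw, hind, if_neg c]; simp
      _ = (J.filter (fun j => 2 * b j ≤ t ∧ t < 4 * b j)).card *
          (256 * (wt T t * ‖ev z (S (t : ℤ) (D f))‖ ^ 2)) := by
          rw [← Finset.sum_filter, Finset.sum_const, nsmul_eq_mul]
      _ ≤ 3 * (256 * (wt T t * ‖ev z (S (t : ℤ) (D f))‖ ^ 2)) := by
          gcongr
          exact_mod_cast overlap hb t
      _ = _ := by ring
  filter_upwards [h1, h2] with N h1 h2 ζ hζ
  have h1 := h1 ζ hζ
  have h2 := h2 ζ hζ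
  calc _ ≤ I N ζ (fun z => (∑ q ∈ Q, w q *
          ‖ev z (S (q.2.2 : ℤ) (S (q.2.1 : ℤ) (D f)))‖ ^ 2) ^ m) :=
        I_mono hζ fun z _ => pow_le_pow_left₀ (Finset.sum_nonneg fun _ _ => sq_nonneg _) (p1 z) _
    _ ≤ _ := h2
    _ ≤ C2 * (768 ^ m * I N ζ (fun z => (G T f z) ^ m)) := by
        refine mul_le_mul_of_nonneg_left ?_ hC2
        rw [← I_mul]
        refine I_mono hζ fun z _ => ?_
        rw [← mul_pow]
        exact pow_le_pow_left₀ (Finset.sum_nonneg fun q hq => mul_nonneg (hw0 q hq) (sq_nonneg _))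
          (p2 z) _
    _ ≤ C2 * (768 ^ m * (C1 * I N ζ (fun z => (‖ev z f‖ ^ 2) ^ m))) := by gcongr
    _ = _ := by ring

lemma Sq_pow (k : ℕ) : Sq (2 ^ k) := Sq_of (BB_CP k).1 (RV_pow k)

end Dy



namespace Dy

lemma resolv {X : Type} [Fintype X] (τ : Equiv.Perm X) {r : ℝ} (h0 : 0 ≤ r) (h1 : r < 1)
    (g : X → ℝ) (hg : ∀ x, 0 ≤ g x) :
    ∃ v : X → ℝ, (∀ x, 0 ≤ v x) ∧ ∀ x, v x = (1 - r) * g x + r * v (τ x) := by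
  set M := orderOf τ with hM
  have hM0 : M ≠ 0 := (orderOf_pos τ).ne'
  have hr : r ^ M < 1 := pow_lt_one₀ h0 h1 hM0
  set κ := (1 - r) / (1 - r ^ M) with hκ
  have hκ0 : 0 ≤ κ := div_nonneg (by linarith) (by linarith)
  have hκ1 : κ * (1 - r ^ M) = 1 - r := div_mul_cancel₀ _ (by linarith)
  refine ⟨fun x => κ * ∑ a ∈ range M, r ^ a * g ((τ ^ a) x), fun x => ?_, fun x => ?_⟩
  · exact mul_nonneg hκ0 (Finset.sum_nonneg fun a _ => mul_nonneg (pow_nonneg h0 _) (hg _))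
  · have e1 := Finset.sum_range_succ (fun a => r ^ a * g ((τ ^ a) x)) M
    have e2 := Finset.sum_range_succ' (fun a => r ^ a * g ((τ ^ a) x)) M
    have e3 : (τ ^ M) x = x := by rw [hM, pow_orderOf_eq_one]; rfl
    have e4 : ∀ a, (τ ^ (a + 1)) x = (τ ^ a) (τ x) := fun a => by
      rw [pow_succ]; rfl
    rw [e1] at e2
    simp only [e3, e4] at e2
    have e5 : ∑ a ∈ range M, r ^ (a + 1) * g ((τ ^ a) (τ x)) =
        r * ∑ a ∈ range M, r ^ a * g ((τ ^ a) (τ x)) := by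
      rw [Finset.mul_sum]; refine Finset.sum_congr rfl fun a _ => ?_
      ring
    rw [e5] at e2
    simp only [pow_zero, one_mul, Equiv.Perm.coe_one, id] at e2
    rw [← hκ1]
    linear_combination κ * e2

lemma sum_perm {X : Type} [Fintype X] (τ : Equiv.Perm X) (F : X → ℝ) :
    ∑ x, F (τ x) = ∑ x, F x := Equiv.sum_comp τ F

lemma pair_le {X : Type} [Fintype X] (τ : Equiv.Perm X) {r s : ℝ} (r0 : 0 ≤ r) (r1 : r < 1)
    (s0 : 0 ≤ s) (s1 : s < 1) {g h v w : X → ℝ} (hg : ∀ x, 0 ≤ g x) (hh : ∀ x, 0 ≤ h x)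
    (hv : ∀ x, 0 ≤ v x) (hw : ∀ x, 0 ≤ w x) (ev : ∀ x, v x = (1 - r) * g x + r * v (τ x))
    (ew : ∀ x, w x = (1 - s) * h x + s * w (τ x)) :
    ∑ x, v x * w x ≤ ∑ x, g x * w x + ∑ x, v x * h x := by
  set P := ∑ x, v x * w x
  set Q := ∑ x, g x * w x
  set R := ∑ x, v x * h x
  set U := ∑ x, g x * h x
  have hP : 0 ≤ P := Finset.sum_nonneg fun x _ => mul_nonneg (hv x) (hw x)
  have hQ : 0 ≤ Q := Finset.sum_nonneg fun x _ => mul_nonneg (hg x) (hw x)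
  have hR : 0 ≤ R := Finset.sum_nonneg fun x _ => mul_nonneg (hv x) (hh x)
  have hU : 0 ≤ U := Finset.sum_nonneg fun x _ => mul_nonneg (hg x) (hh x)
  have e : P - (1 - s) * R - (1 - r) * Q + (1 - r) * (1 - s) * U = r * s * P := by
    have : ∑ x, (v x - (1 - r) * g x) * (w x - (1 - s) * h x) = r * s * P := by
      have hPt : P = ∑ x, v (τ x) * w (τ x) := (sum_perm τ (fun x => v x * w x)).symm
      rw [hPt, Finset.mul_sum]
      refine Finset.sum_congr rfl fun x _ => ?_
      rw [ev x, ew x]; ring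
    rw [← this]
    simp only [P, Q, R, U, Finset.mul_sum]
    rw [← Finset.sum_sub_distrib, ← Finset.sum_sub_distrib, ← Finset.sum_add_distrib]
    refine Finset.sum_congr rfl fun x _ => ?_
    ring
  have k0 : 0 < 1 - r * s := by nlinarith
  have k1 : (1 - r) * Q ≤ (1 - r * s) * Q := mul_le_mul_of_nonneg_right (by nlinarith) hQ
  have k2 : (1 - s) * R ≤ (1 - r * s) * R := mul_le_mul_of_nonneg_right (by nlinarith) hR
  have k3 : 0 ≤ (1 - r) * (1 - s) * U := by
    apply mul_nonneg (mul_nonneg _ _) hU <;> linarith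
  have : (1 - r * s) * P ≤ (1 - r * s) * (Q + R) := by linarith
  exact le_of_mul_le_mul_left this k0

lemma maxi {X : Type} [Fintype X] (τ : Equiv.Perm X) (J : Finset ℕ) (r : ℕ → ℝ)
    (hr0 : ∀ j ∈ J, 0 ≤ r j) (hr1 : ∀ j ∈ J, r j < 1) (F : X → ℝ)
    (u : ℕ → X → ℝ) (hu0 : ∀ j ∈ J, ∀ x, 0 ≤ u j x)
    (hu : ∀ j ∈ J, ∀ x, u j x = (1 - r j) * F x + r j * u j (τ x))
    (σ : X → ℕ) (hσ : ∀ x, σ x ∈ J) :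
    ∑ x, (u (σ x) x) ^ 2 ≤ 4 * ∑ x, F x ^ 2 := by
  set φ : X → ℝ := fun x => u (σ x) x with hφ
  have hφ0 : ∀ x, 0 ≤ φ x := fun x => hu0 _ (hσ x) x
  set g : ℕ → X → ℝ := fun j x => if σ x = j then φ x else 0 with hg
  have hg0 : ∀ j x, 0 ≤ g j x := by
    intro j x; simp only [hg]; split_ifs; exacts [hφ0 x, le_rfl]
  have hgs : ∀ x, ∑ j ∈ J, g j x = φ x := by
    intro x; simp only [hg]; rw [Finset.sum_ite_eq, if_pos (hσ x)]
  have hv : ∀ j, ∃ v : X → ℝ, j ∈ J → (∀ x, 0 ≤ v x) ∧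
      ∀ x, v x = (1 - r j) * g j x + r j * v (τ⁻¹ x) := by
    intro j
    by_cases hj : j ∈ J
    · obtain ⟨v, h⟩ := resolv τ⁻¹ (hr0 j hj) (hr1 j hj) (g j) (hg0 j)
      exact ⟨v, fun _ => h⟩
    · exact ⟨0, fun h => absurd h hj⟩
  choose v hv using hv
  set V : X → ℝ := fun x => ∑ j ∈ J, v j x with hV
  have q1 : ∑ x, V x ^ 2 ≤ 2 * ∑ x, φ x * V x := by
    have e1 : ∑ x, V x ^ 2 = ∑ j ∈ J, ∑ k ∈ J, ∑ x, v j x * v k x := by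
      have : ∀ j ∈ J, ∑ k ∈ J, ∑ x, v j x * v k x = ∑ x, ∑ k ∈ J, v j x * v k x :=
        fun j _ => Finset.sum_comm
      rw [Finset.sum_congr rfl this, Finset.sum_comm]
      refine Finset.sum_congr rfl fun x _ => ?_
      simp only [hV]; rw [sq, Finset.sum_mul_sum]
    have e2 : ∑ j ∈ J, ∑ k ∈ J, ∑ x, g j x * v k x = ∑ x, φ x * V x := by
      have : ∀ j ∈ J, ∑ k ∈ J, ∑ x, g j x * v k x = ∑ x, ∑ k ∈ J, g j x * v k x :=
        fun j _ => Finset.sum_comm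
      rw [Finset.sum_congr rfl this, Finset.sum_comm]
      refine Finset.sum_congr rfl fun x _ => ?_
      simp only [hV]; rw [← hgs, Finset.sum_mul_sum]
    have e3 : ∑ j ∈ J, ∑ k ∈ J, ∑ x, v j x * g k x = ∑ x, φ x * V x := by
      rw [← e2, Finset.sum_comm]
      refine Finset.sum_congr rfl fun j _ => Finset.sum_congr rfl fun k _ =>
        Finset.sum_congr rfl fun x _ => mul_comm _ _
    rw [e1]
    calc _ ≤ ∑ j ∈ J, ∑ k ∈ J, (∑ x, g j x * v k x + ∑ x, v j x * g k x) := by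
          refine Finset.sum_le_sum fun j hj => Finset.sum_le_sum fun k hk => ?_
          exact pair_le τ⁻¹ (hr0 j hj) (hr1 j hj) (hr0 k hk) (hr1 k hk) (hg0 j) (hg0 k)
            (hv j hj).1 (hv k hk).1 (hv j hj).2 (hv k hk).2
      _ = _ := by
          simp only [Finset.sum_add_distrib]; rw [e2, e3]; ring
  have q2 : ∑ x, φ x ^ 2 = ∑ x, F x * V x := by
    have d : ∀ j ∈ J, ∑ x, u j x * g j x = ∑ x, F x * v j x := by
      intro j hj
      have h1 := hr1 j hj
      have e1 : ∑ x, u j x * v j (τ⁻¹ x) = ∑ x, u j (τ x) * v j x := by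
        rw [← sum_perm τ]; simp
      have e2 : (1 - r j) * ∑ x, u j x * g j x = (1 - r j) * ∑ x, F x * v j x := by
        have a : (1 - r j) * ∑ x, u j x * g j x =
            ∑ x, u j x * v j x - r j * ∑ x, u j x * v j (τ⁻¹ x) := by
          rw [Finset.mul_sum, Finset.mul_sum, ← Finset.sum_sub_distrib]
          refine Finset.sum_congr rfl fun x _ => ?_
          have := (hv j hj).2 x
          linear_combination (-u j x) * this
        have b : (1 - r j) * ∑ x, F x * v j x =
            ∑ x, u j x * v j x - r j * ∑ x, u j (τ x) * v j x := by
          rw [Finset.mul_sum, Finset.mul_sum, ← Finset.sum_sub_distrib]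
          refine Finset.sum_congr rfl fun x _ => ?_
          have := hu j hj x
          linear_combination (-v j x) * this
        rw [a, b, e1]
      exact mul_left_cancel₀ (by linarith) e2
    have e1 : ∑ x, F x * V x = ∑ j ∈ J, ∑ x, F x * v j x := by
      rw [Finset.sum_comm]; simp only [hV, Finset.mul_sum]
    have e2 : ∑ x, φ x ^ 2 = ∑ j ∈ J, ∑ x, u j x * g j x := by
      rw [Finset.sum_comm]
      refine Finset.sum_congr rfl fun x _ => ?_
      simp only [hg, mul_ite, mul_zero]
      rw [Finset.sum_ite_eq, if_pos (hσ x), sq]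
    rw [e1, e2]; exact Finset.sum_congr rfl d
  have q3 : 2 * ∑ x, φ x * V x ≤ 1 / 2 * ∑ x, V x ^ 2 + 2 * ∑ x, φ x ^ 2 := by
    rw [Finset.mul_sum, Finset.mul_sum, Finset.mul_sum, ← Finset.sum_add_distrib]
    refine Finset.sum_le_sum fun x _ => ?_
    nlinarith [sq_nonneg (V x - 2 * φ x)]
  have q4 : ∑ x, F x * V x ≤ 1 / 8 * ∑ x, V x ^ 2 + 2 * ∑ x, F x ^ 2 := by
    rw [Finset.mul_sum, Finset.mul_sum, ← Finset.sum_add_distrib]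
    refine Finset.sum_le_sum fun x _ => ?_
    nlinarith [sq_nonneg (V x - 4 * F x)]
  change ∑ x, φ x ^ 2 ≤ _
  linarith

/-- maximum principle -/
lemma maxprin {X : Type} [Fintype X] (τ : Equiv.Perm X) {r : ℝ} (h0 : 0 ≤ r) (h1 : r < 1)
    (F u : X → ℝ) (h : X → ℂ) (f : X → ℂ) (hF : ∀ x, ‖f x‖ = F x)
    (hu : ∀ x, u x = (1 - r) * F x + r * u (τ x))
    (hh : ∀ x, h x = (1 - r : ℝ) * f x + (r : ℂ) * h (τ x)) (x : X) : ‖h x‖ ≤ u x := by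
  obtain ⟨y, -, hy⟩ := Finset.exists_max_image Finset.univ (fun x => ‖h x‖ - u x)
    ⟨x, Finset.mem_univ x⟩
  have k1 : ‖h y‖ ≤ (1 - r) * F y + r * ‖h (τ y)‖ := by
    calc ‖h y‖ = ‖(1 - r : ℝ) * f y + (r : ℂ) * h (τ y)‖ := by rw [← hh y]
      _ ≤ ‖((1 - r : ℝ) : ℂ) * f y‖ + ‖(r : ℂ) * h (τ y)‖ := norm_add_le _ _
      _ = _ := by
        rw [norm_mul, norm_mul, Complex.norm_real, Complex.norm_real, hF,
          Real.norm_of_nonneg h0, Real.norm_of_nonneg (by linarith)]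
  have k2 := hu y
  have k3 := hy (τ y) (Finset.mem_univ _)
  have k4 := hy x (Finset.mem_univ _)
  have k5 : ‖h y‖ - u y ≤ r * (‖h y‖ - u y) := by
    have := mul_le_mul_of_nonneg_left k3 h0
    linarith
  nlinarith

lemma geo (F : Finset ℕ) (g : ℕ → ℕ) (hg : Set.InjOn g F) :
    ∑ j ∈ F, (1 / 4 : ℝ) ^ g j ≤ 2 := by
  rw [← Finset.sum_image (f := fun i => (1 / 4 : ℝ) ^ i) hg]
  have hs : Summable (fun i : ℕ => (1 / 4 : ℝ) ^ i) :=
    summable_geometric_of_lt_one (by norm_num) (by norm_num)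
  refine (hs.sum_le_tsum _ (fun i _ => by positivity)).trans ?_
  rw [tsum_geometric_of_lt_one (by norm_num) (by norm_num)]
  norm_num

lemma geo_sum {J : Finset ℕ} {b : ℕ → ℕ} {θ : ℝ} (h : Th J b θ) {x : ℝ} (hx : 0 < x) :
    ∑ j ∈ J, (if x ≤ b j then (7 * x / b j) ^ 2 else ((b j : ℝ) / x) ^ 2) ≤ 1600 := by
  classical
  rw [Finset.sum_ite]
  have θ0 := h.1
  have a1 : ∑ j ∈ J.filter (fun j => x ≤ b j), (7 * x / b j) ^ 2 ≤ 1568 := by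
    set F := J.filter (fun j => x ≤ b j) with hF
    rcases F.eq_empty_or_nonempty with h0 | h0
    · rw [h0]; norm_num
    have hm := F.min'_mem h0
    set j0 := F.min' h0 with hj0
    have hle : ∀ j ∈ F, j0 ≤ j := fun j hj => F.min'_le j hj
    have g := geo F (fun j => j - j0) (by
      intro a ha c hc e
      have := hle a ha; have := hle c hc; simp only at e; omega)
    calc _ ≤ ∑ j ∈ F, 784 * (1 / 4 : ℝ) ^ (j - j0) := by
          refine Finset.sum_le_sum fun j hj => ?_
          have hjl := hle j hj
          rw [hF, Finset.mem_filter] at hj hm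
          obtain ⟨c1, c2, c3⟩ := h.2 j hj.1
          obtain ⟨d1, d2, d3⟩ := h.2 j0 hm.1
          have b0 : (0 : ℝ) < b j := by exact_mod_cast c1
          have e1 : x * 2 ^ (j - j0) ≤ 4 * b j := by
            have : (2:ℝ) ^ j = 2 ^ j0 * 2 ^ (j - j0) := by rw [← pow_add]; congr 1; omega
            rw [this] at c2
            calc x * 2 ^ (j - j0) ≤ (4 * (θ * 2 ^ j0)) * 2 ^ (j - j0) := by
                  gcongr; linarith [hm.2]
              _ ≤ 4 * b j := by linarith
          have e2 : 7 * x / b j ≤ 28 * (1 / 2) ^ (j - j0) := by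
            rw [div_le_iff₀ b0, one_div, inv_pow]
            have p : (0:ℝ) < 2 ^ (j - j0) := by positivity
            rw [← div_eq_mul_inv, div_mul_eq_mul_div, le_div_iff₀ p]; linarith
          calc (7 * x / b j) ^ 2 ≤ (28 * (1 / 2) ^ (j - j0)) ^ 2 := by gcongr
            _ = _ := by rw [mul_pow, ← pow_mul, mul_comm (j - j0) 2, pow_mul]; norm_num
      _ ≤ _ := by rw [← Finset.mul_sum]; linarith
  have a2 : ∑ j ∈ J.filter (fun j => ¬ x ≤ b j), ((b j : ℝ) / x) ^ 2 ≤ 32 := by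
    set F := J.filter (fun j => ¬ x ≤ b j) with hF
    rcases F.eq_empty_or_nonempty with h0 | h0
    · rw [h0]; norm_num
    have hm := F.max'_mem h0
    set j0 := F.max' h0 with hj0
    have hle : ∀ j ∈ F, j ≤ j0 := fun j hj => F.le_max' j hj
    have g := geo F (fun j => j0 - j) (by
      intro a ha c hc e
      have := hle a ha; have := hle c hc; simp only at e; omega)
    calc _ ≤ ∑ j ∈ F, 16 * (1 / 4 : ℝ) ^ (j0 - j) := by
          refine Finset.sum_le_sum fun j hj => ?_
          have hjl := hle j hj
          rw [hF, Finset.mem_filter] at hj hm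
          obtain ⟨c1, c2, c3⟩ := h.2 j hj.1
          obtain ⟨d1, d2, d3⟩ := h.2 j0 hm.1
          have e1 : b j * 2 ^ (j0 - j) ≤ 4 * x := by
            have : (2:ℝ) ^ j0 = 2 ^ j * 2 ^ (j0 - j) := by rw [← pow_add]; congr 1; omega
            rw [this] at d2
            calc b j * (2:ℝ) ^ (j0 - j) ≤ (4 * (θ * 2 ^ j)) * 2 ^ (j0 - j) := by gcongr
              _ ≤ 4 * b j0 := by linarith
              _ ≤ 4 * x := by linarith [not_le.mp hm.2]
          have e2 : b j / x ≤ 4 * (1 / 2) ^ (j0 - j) := by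
            rw [div_le_iff₀ hx, one_div, inv_pow]
            have p : (0:ℝ) < 2 ^ (j0 - j) := by positivity
            rw [← div_eq_mul_inv, div_mul_eq_mul_div, le_div_iff₀ p]; linarith
          calc (b j / x) ^ 2 ≤ (4 * (1 / 2) ^ (j0 - j)) ^ 2 := by gcongr
            _ = _ := by rw [mul_pow, ← pow_mul, mul_comm (j0 - j) 2, pow_mul]; norm_num
      _ ≤ _ := by rw [← Finset.mul_sum]; linarith
  linarith

lemma rot_pt (N : ℕ) (ζ : ℂ) (x : Fin N) :
    ζ * om N ^ ((finRotate N x : Fin N) : ℕ) = om N * (ζ * om N ^ (x : ℕ)) := by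
  rcases N with _ | n
  · exact x.elim0
  by_cases h : x = Fin.last n
  · subst h
    rw [finRotate_last]
    have := om_pow (n + 1) (by omega)
    rw [pow_succ] at this
    simp only [Fin.val_zero, pow_zero, Fin.val_last]
    linear_combination (-ζ) * this
  · rw [coe_finRotate_of_ne_last h, pow_succ]; ring

lemma I_fin (N : ℕ) (ζ : ℂ) (F : ℂ → ℝ) : I N ζ F = ∑ x : Fin N, F (ζ * om N ^ (x : ℕ)) := by
  unfold I; rw [Finset.sum_range]

lemma om_zpow (N : ℕ) (n : ℤ) :
    om N ^ n = Complex.exp (Complex.I * ((2 * Real.pi * n / N : ℝ) : ℂ)) := by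
  unfold om
  rw [← Complex.exp_int_mul]; congr 1; push_cast; ring

lemma om_upper (N : ℕ) (n : ℤ) (hn : 0 ≤ n) : ‖1 - om N ^ n‖ ≤ 7 * n / N := by
  rw [om_zpow, norm_sub_rev, ]
  refine (Real.norm_exp_I_mul_ofReal_sub_one_le).trans ?_
  have : (0 : ℝ) ≤ n := by exact_mod_cast hn
  rw [Real.norm_of_nonneg (by positivity)]
  gcongr
  linarith [Real.pi_lt_d2]

lemma om_lower (N : ℕ) (hN : 0 < N) (n : ℤ) (hn : 0 ≤ n) (hn2 : 2 * n ≤ N) :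
    4 * n / N ≤ ‖1 - om N ^ n‖ := by
  have n0 : (0 : ℝ) ≤ n := by exact_mod_cast hn
  have N0 : (0 : ℝ) < N := by exact_mod_cast hN
  have h2 : 2 * (n : ℝ) ≤ N := by exact_mod_cast hn2
  have : ‖1 - om N ^ n‖ = 2 * Real.sin (Real.pi * n / N) := by
    rw [om_zpow, norm_sub_rev, Complex.norm_exp_I_mul_ofReal_sub_one]
    rw [show 2 * Real.pi * n / N / 2 = Real.pi * n / N by ring, Real.norm_of_nonneg]
    have : 0 ≤ Real.sin (Real.pi * n / N) := by
      apply Real.sin_nonneg_of_nonneg_of_le_pi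
      · positivity
      · rw [div_le_iff₀ N0]
        gcongr; linarith
    linarith
  rw [this]
  have h3 := Real.mul_le_sin (x := Real.pi * n / N) (by positivity) (by
    rw [div_le_div_iff₀ N0 two_pos]
    nlinarith [Real.pi_pos])
  have h4 : 2 / Real.pi * (Real.pi * n / N) = 2 * n / N := by
    field_simp
  rw [h4] at h3
  calc 4 * (n:ℝ) / N = 2 * (2 * n / N) := by ring
    _ ≤ _ := by gcongr

noncomputable def mj (N : ℕ) (b : ℕ) (n : ℤ) : ℂ :=
  ((b / N : ℝ) : ℂ) / (1 - ((1 - b / N : ℝ) : ℂ) * om N ^ n)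

lemma mj_facts {N b : ℕ} (hb : 1 ≤ b) (hbN : b < N) {n : ℤ} (hn : 1 ≤ n) (hn2 : 2 * n ≤ N) :
    (1 - ((1 - b / N : ℝ) : ℂ) * om N ^ n) ≠ 0 ∧
    ‖(if n ≤ (b : ℤ) then 1 else 0) - mj N b n‖ ^ 2 ≤
      if (n : ℝ) ≤ b then (7 * (n : ℝ) / b) ^ 2 else ((b : ℝ) / (n : ℝ)) ^ 2 := by
  have b0 : (0 : ℝ) < b := by exact_mod_cast hb
  have N0 : (0 : ℝ) < N := by exact_mod_cast (by omega : 0 < N)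
  have n0 : (0 : ℝ) < n := by exact_mod_cast (by omega : 0 < n)
  set q : ℝ := b / N with hq
  have q0 : 0 < q := by positivity
  have q1 : q ≤ 1 := by
    rw [hq, div_le_one N0]; exact_mod_cast hbN.le
  set w := om N ^ n with hw
  have hw1 : ‖w‖ = 1 := by rw [hw, norm_zpow, norm_om, one_zpow]
  set d : ℂ := 1 - ((1 - q : ℝ) : ℂ) * w with hd
  have hd1 : q ≤ ‖d‖ := by
    have := norm_sub_norm_le (1 : ℂ) (((1 - q : ℝ) : ℂ) * w)
    rw [norm_mul, hw1, Complex.norm_real, Real.norm_of_nonneg (by linarith)] at this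
    simp only [norm_one] at this
    rw [hd]; linarith
  have hd0 : 0 < ‖d‖ := by linarith
  have hd2 : ‖1 - w‖ ≤ 2 * ‖d‖ := by
    have : 1 - w = d - (q : ℂ) * w := by rw [hd]; push_cast; ring
    rw [this]
    refine (norm_sub_le _ _).trans ?_
    rw [norm_mul, hw1, Complex.norm_real, Real.norm_of_nonneg q0.le]; linarith
  have hdne : d ≠ 0 := norm_pos_iff.mp hd0
  refine ⟨hdne, ?_⟩
  have hm : mj N b n = (q : ℂ) / d := rfl
  rw [hm]
  by_cases c : n ≤ (b : ℤ)
  · have c' : (n : ℝ) ≤ b := by exact_mod_cast c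
    rw [if_pos c, if_pos c']
    have e : 1 - (q : ℂ) / d = ((1 - q : ℝ) : ℂ) * (1 - w) / d := by
      field_simp; rw [hd]; push_cast; ring
    rw [e, norm_div, norm_mul, Complex.norm_real, Real.norm_of_nonneg (by linarith)]
    have up := om_upper N n (by omega)
    refine pow_le_pow_left₀ (div_nonneg (mul_nonneg (by linarith) (norm_nonneg _)) (norm_nonneg _)) ?_ 2
    rw [div_le_iff₀ hd0]
    calc (1 - q) * ‖1 - w‖ ≤ 1 * (7 * n / N) := by
          gcongr; linarith
      _ = 7 * n / b * q := by rw [hq]; field_simp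
      _ ≤ _ := by gcongr
  · have c' : ¬ (n : ℝ) ≤ b := by exact_mod_cast c
    rw [if_neg c, if_neg c', zero_sub, norm_neg, norm_div, Complex.norm_real,
      Real.norm_of_nonneg q0.le]
    have lo := om_lower N (by omega) n (by omega) hn2
    refine pow_le_pow_left₀ (div_nonneg q0.le (norm_nonneg _)) ?_ 2
    rw [div_le_iff₀ hd0]
    have : 2 * n / N ≤ ‖d‖ := by
      have : 4 * (n : ℝ) / N = 2 * (2 * n / N) := by ring
      linarith
    calc q ≤ b / n * (2 * n / N) := by
          rw [hq]; field_simp; norm_num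
      _ ≤ _ := by gcongr

def MA (m : ℕ) : Prop := ∃ C : ℝ, 0 ≤ C ∧ ∀ (J : Finset ℕ) (b : ℕ → ℕ) (θ : ℝ), Th J b θ →
  ∀ f : TP, Pos f → ∀ᶠ N : ℕ in atTop, ∀ ζ : ℂ, ‖ζ‖ = 1 → ∀ σ : ℂ → ℕ, (∀ z, σ z ∈ J) →
    I N ζ (fun z => (‖ev z (S (b (σ z)) f)‖ ^ 2) ^ m) ≤ C * I N ζ (fun z => (‖ev z f‖ ^ 2) ^ m)

lemma MA_one : MA 1 := by
  refine ⟨3208, by norm_num, fun J b θ hb f hf => ?_⟩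
  have hN1 : ∀ᶠ N : ℕ in atTop, ∀ j ∈ J, b j < N := by
    rw [Filter.eventually_all_finset]; exact fun j _ => eventually_gt_atTop _
  have hN2 : ∀ᶠ N : ℕ in atTop, ∀ n ∈ f.support, 2 * n ≤ (N : ℤ) := by
    rw [Filter.eventually_all_finset]; intro n _
    filter_upwards [eventually_ge_atTop (2 * n).toNat] with N h
    omega
  filter_upwards [hN1, hN2, parseval f, parseval' f, eventually_gt_atTop 0] with
    N hN1 hN2 par par' hN0 ζ hζ σ hσ
  simp only [pow_one]
  have N0 : (0 : ℝ) < N := by exact_mod_cast hN0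
  set pt : Fin N → ℂ := fun x => ζ * om N ^ (x : ℕ) with hpt
  set F : Fin N → ℝ := fun x => ‖ev (pt x) f‖ with hF
  set r : ℕ → ℝ := fun j => 1 - b j / N with hr
  have hr0 : ∀ j ∈ J, 0 ≤ r j := fun j hj => by
    have : (b j : ℝ) / N ≤ 1 := by rw [div_le_one N0]; exact_mod_cast (hN1 j hj).le
    simp only [hr]; linarith
  have hr1 : ∀ j ∈ J, r j < 1 := fun j hj => by
    have : (0 : ℝ) < b j := by exact_mod_cast (hb.2 j hj).1
    have : (0 : ℝ) < b j / N := by positivity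
    simp only [hr]; linarith
  have hu : ∀ j, ∃ u : Fin N → ℝ, j ∈ J → (∀ x, 0 ≤ u x) ∧
      ∀ x, u x = (1 - r j) * F x + r j * u (finRotate N x) := by
    intro j
    by_cases hj : j ∈ J
    · obtain ⟨v, h⟩ := resolv (finRotate N) (hr0 j hj) (hr1 j hj) F (fun x => norm_nonneg _)
      exact ⟨v, fun _ => h⟩
    · exact ⟨0, fun h => absurd h hj⟩
  choose u hu using hu
  have mx := maxi (finRotate N) J r hr0 hr1 F u (fun j hj => (hu j hj).1)
    (fun j hj => (hu j hj).2) (fun x => σ (pt x)) (fun x => hσ _)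
  set E : ℕ → ℤ → ℂ := fun j n => (if n ≤ (b j : ℤ) then 1 else 0) - mj N (b j) n with hE
  have dom : ∀ j ∈ J, ∀ x, ‖ev (pt x) (mult (mj N (b j)) f)‖ ≤ u j x := by
    intro j hj
    refine maxprin (finRotate N) (hr0 j hj) (hr1 j hj) F (u j)
      (fun x => ev (pt x) (mult (mj N (b j)) f)) (fun x => ev (pt x) f) (fun x => rfl)
      (hu j hj).2 (fun x => ?_)
    have e1 : pt (finRotate N x) = om N * pt x := rot_pt N ζ x
    simp only [e1]
    rw [ev_mult, ev_mult, ev_sum (subset_refl f.support), Finset.mul_sum, Finset.mul_sum,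
      ← Finset.sum_add_distrib]
    refine Finset.sum_congr rfl fun n hn => ?_
    have h3 := (mj_facts (hb.2 j hj).1 (hN1 j hj) (hf n hn) (hN2 n hn)).1
    rw [mul_zpow (om N) (pt x)]
    have h4 : mj N (b j) n * (1 - ((1 - b j / N : ℝ) : ℂ) * om N ^ n) = ((b j / N : ℝ) : ℂ) :=
      div_mul_cancel₀ _ h3
    have h5 : ((1 - r j : ℝ) : ℂ) = ((b j / N : ℝ) : ℂ) := by simp only [hr]; push_cast; ring
    rw [h5, ← h4]
    simp only [hr]; ring
  have split : ∀ j, S (b j) f = mult (mj N (b j)) f + mult (E j) f := by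
    intro j; ext n; simp only [S, hE, mult_apply, Finsupp.add_apply]; ring
  have pw : ∀ x : Fin N, ‖ev (pt x) (S (b (σ (pt x))) f)‖ ^ 2 ≤
      2 * u (σ (pt x)) x ^ 2 + 2 * ∑ j ∈ J, ‖ev (pt x) (mult (E j) f)‖ ^ 2 := by
    intro x
    set j := σ (pt x)
    have hj : j ∈ J := hσ _
    have k1 : ‖ev (pt x) (S (b j) f)‖ ≤ u j x + ‖ev (pt x) (mult (E j) f)‖ := by
      rw [split, map_add]
      refine (norm_add_le _ _).trans ?_
      linarith [dom j hj x]
    have k2 := Finset.single_le_sum (f := fun j => ‖ev (pt x) (mult (E j) f)‖ ^ 2)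
      (fun _ _ => sq_nonneg _) hj
    have k3 := pow_le_pow_left₀ (norm_nonneg _) k1 2
    have k4 : (u j x + ‖ev (pt x) (mult (E j) f)‖) ^ 2 ≤
      2 * u j x ^ 2 + 2 * ‖ev (pt x) (mult (E j) f)‖ ^ 2 := by
      nlinarith [sq_nonneg (u j x - ‖ev (pt x) (mult (E j) f)‖)]
    linarith
  have err : ∑ x : Fin N, ∑ j ∈ J, ‖ev (pt x) (mult (E j) f)‖ ^ 2 ≤
      1600 * I N ζ (fun z => ‖ev z f‖ ^ 2) := by
    rw [Finset.sum_comm]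
    have : ∀ j ∈ J, ∑ x : Fin N, ‖ev (pt x) (mult (E j) f)‖ ^ 2 =
        N * ∑ n ∈ f.support, ‖E j n‖ ^ 2 * ‖f n‖ ^ 2 := by
      intro j _
      rw [← par ζ hζ (E j), I_fin]
    rw [Finset.sum_congr rfl this, par' ζ hζ, ← Finset.mul_sum, mul_left_comm]
    gcongr
    rw [Finset.sum_comm, Finset.mul_sum]
    refine Finset.sum_le_sum fun n hn => ?_
    rw [← Finset.sum_mul]
    gcongr
    have n0 : (0 : ℝ) < n := by exact_mod_cast hf n hn
    refine le_trans (Finset.sum_le_sum fun j hj => ?_) (geo_sum hb n0)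
    exact (mj_facts (hb.2 j hj).1 (hN1 j hj) (hf n hn) (hN2 n hn)).2
  have hI : ∑ x, F x ^ 2 = I N ζ (fun z => ‖ev z f‖ ^ 2) := by rw [I_fin]
  rw [hI] at mx
  calc I N ζ (fun z => ‖ev z (S (b (σ z)) f)‖ ^ 2)
      = ∑ x : Fin N, ‖ev (pt x) (S (b (σ (pt x))) f)‖ ^ 2 := by rw [I_fin]
    _ ≤ ∑ x : Fin N, (2 * u (σ (pt x)) x ^ 2 +
          2 * ∑ j ∈ J, ‖ev (pt x) (mult (E j) f)‖ ^ 2) := Finset.sum_le_sum fun x _ => pw x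
    _ ≤ _ := by
        rw [Finset.sum_add_distrib, ← Finset.mul_sum, ← Finset.mul_sum]
        linarith

end Dy

namespace Dy

lemma sq_ident {f : TP} (hf : Pos f) (b : ℕ) {z : ℂ} (hz : ‖z‖ = 1) :
    ev z (S (b : ℤ) f) ^ 2 = ev z (S ((2 * b : ℕ) : ℤ) (mul f f)) -
      2 * ev z (S ((2 * b : ℕ) : ℤ) (mul (S (b : ℤ) f) (S ((2 * b : ℕ) : ℤ) f - S (b : ℤ) f))) := by
  set s := f.support
  have hs : (S (b : ℤ) f).support ⊆ s := mult_support _ _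
  have he : (S ((2 * b : ℕ) : ℤ) f - S (b : ℤ) f).support ⊆ s := by
    classical
    refine Finsupp.support_sub.trans (Finset.union_subset (mult_support _ _) hs)
  set X := ev z (S ((2 * b : ℕ) : ℤ) (mul (S (b : ℤ) f) (S ((2 * b : ℕ) : ℤ) f - S (b : ℤ) f)))
    with hX
  have e2 : X = _ := ev_mult_mul (fun n => if n ≤ ((2 * b : ℕ) : ℤ) then 1 else 0) hs he z
  have e3 := e2
  rw [Finset.sum_comm] at e3
  have e1 : ev z (S ((2 * b : ℕ) : ℤ) (mul f f)) = _ :=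
    ev_mult_mul (fun n => if n ≤ ((2 * b : ℕ) : ℤ) then 1 else 0) (subset_refl s) (subset_refl s) z
  have e4 : ev z (S (b : ℤ) f) ^ 2 = ev z (S ((2 * b : ℕ) : ℤ) (mul f f)) - (X + X) := by
    nth_rewrite 1 [e2]
    rw [e3, e1, pow_two, ev_sum hs, Finset.sum_mul_sum, ← Finset.sum_add_distrib,
      ← Finset.sum_sub_distrib]
    refine Finset.sum_congr rfl fun n hn => ?_
    rw [← Finset.sum_add_distrib, ← Finset.sum_sub_distrib]
    refine Finset.sum_congr rfl fun m hm => ?_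
    have hn1 := hf n hn
    have hm1 := hf m hm
    have hz0 := ne_zero_of_norm hz
    rw [zpow_add₀ hz0, add_comm m n, zpow_add₀ hz0]
    simp only [S, mult_apply, Finsupp.sub_apply, Nat.cast_mul, Nat.cast_ofNat]
    by_cases c1 : n ≤ (b : ℤ) <;> by_cases c2 : m ≤ (b : ℤ) <;>
      by_cases c3 : n + m ≤ 2 * (b : ℤ)
    · have : n ≤ 2 * (b : ℤ) := by omega
      have : m ≤ 2 * (b : ℤ) := by omega
      simp [*]; ring
    · omega
    · have : n ≤ 2 * (b : ℤ) := by omega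
      have : m ≤ 2 * (b : ℤ) := by omega
      simp [*]
    · simp [*]
    · have : n ≤ 2 * (b : ℤ) := by omega
      have : m ≤ 2 * (b : ℤ) := by omega
      simp [*]; ring
    · simp [*]
    · omega
    · simp [*]
  rw [e4]; ring

lemma MA_double {m : ℕ} (hMA : MA m) (hRV : RV m) (hSq : Sq (2 * m)) : MA (2 * m) := by
  obtain ⟨C1, hC1, h1⟩ := hMA
  obtain ⟨C2, hC2, h2⟩ := hRV
  obtain ⟨C3, hC3, h3⟩ := hSq
  refine ⟨(2 * 4 ^ m + (16 ^ m * C2) ^ 2) * (2 ^ (2 * m) * (C1 + C3)), by positivity,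
    fun J b θ hb f hf => ?_⟩
  have hff : Pos (mul f f) := by
    intro n hn
    obtain ⟨n1, h1, n2, h2, rfl⟩ := mul_supp hn
    have := hf _ h1; have := hf _ h2; omega
  set e : ℕ → TP := fun j => S ((2 * b j : ℕ) : ℤ) f - S (b j : ℤ) f with he
  filter_upwards [h1 J _ _ hb.double _ hff,
    h2 ℕ J (fun _ => 1) (fun _ _ => zero_le_one) (fun j => mul (S (b j : ℤ) f) (e j))
      (fun j => ((2 * b j : ℕ) : ℤ)), h3 J b θ hb f hf] with N g1 g2 g3 ζ hζ σ hσ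
  have hJ : J.Nonempty := ⟨_, hσ 1⟩
  have hmax : ∀ z, ∃ j ∈ J, ∀ i ∈ J, ‖ev z (S (b i : ℤ) f)‖ ≤ ‖ev z (S (b j : ℤ) f)‖ :=
    fun z => J.exists_max_image _ hJ
  choose τ hτ hmax using hmax
  set A : ℂ → ℝ := fun z => ‖ev z (S (b (τ z) : ℤ) f)‖ ^ 2 with hA
  set Q : ℂ → ℝ := fun z => ∑ j ∈ J, ‖ev z (e j)‖ ^ 2 with hQ
  set B : ℂ → ℝ := fun z => ‖ev z (S ((2 * b (τ z) : ℕ) : ℤ) (mul f f))‖ + Q z with hB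
  set w : ℂ → ℝ := fun z => ‖ev z (S ((2 * b (τ z) : ℕ) : ℤ) (mul (S (b (τ z) : ℤ) f) (e (τ z))))‖
    with hw
  have Q0 : ∀ z, 0 ≤ Q z := fun z => Finset.sum_nonneg fun _ _ => sq_nonneg _
  have B0 : ∀ z, 0 ≤ B z := fun z => add_nonneg (norm_nonneg _) (Q0 z)
  have st := step hζ (m := m) (A := A) (B := B) (w := w) (K := C2) (fun z _ => sq_nonneg _)
    (fun z _ => B0 z) (fun z _ => norm_nonneg _) (fun z hz => by
      simp only [hA, hB, hw]
      rw [← norm_pow, sq_ident hf _ hz]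
      refine (norm_sub_le _ _).trans ?_
      rw [norm_mul, Complex.norm_ofNat]
      have := Q0 z
      simp only [he]
      linarith) (by
      simp only [one_mul] at g2
      calc I N ζ (fun z => (w z ^ 2) ^ m) ≤ I N ζ (fun z => (∑ j ∈ J,
            ‖ev z (S ((2 * b j : ℕ) : ℤ) (mul (S (b j : ℤ) f) (e j)))‖ ^ 2) ^ m) := by
            refine I_mono hζ fun z _ => pow_le_pow_left₀ (sq_nonneg _) ?_ _
            exact Finset.single_le_sum (f := fun j =>
              ‖ev z (S ((2 * b j : ℕ) : ℤ) (mul (S (b j : ℤ) f) (e j)))‖ ^ 2)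
              (fun _ _ => sq_nonneg _) (hτ z)
        _ ≤ _ := g2 ζ hζ
        _ ≤ _ := by
            refine mul_le_mul_of_nonneg_left (I_mono hζ fun z hz => ?_) hC2
            rw [← mul_pow]
            refine pow_le_pow_left₀ (Finset.sum_nonneg fun _ _ => sq_nonneg _) ?_ _
            have : A z * Q z ≤ A z * B z := by
              refine mul_le_mul_of_nonneg_left ?_ (sq_nonneg _)
              simp only [hB]; linarith [norm_nonneg (ev z (S ((2 * b (τ z) : ℕ) : ℤ) (mul f f)))]
            refine le_trans ?_ this
            simp only [hQ]
            rw [Finset.mul_sum]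
            refine Finset.sum_le_sum fun j hj => ?_
            rw [ev_mul _ _ hz, norm_mul, mul_pow]
            have := hmax z j hj
            simp only [hA]
            gcongr)
  have g1' := g1 ζ hζ τ hτ
  have g3' := g3 ζ hζ
  calc I N ζ (fun z => (‖ev z (S (b (σ z)) f)‖ ^ 2) ^ (2 * m))
      ≤ I N ζ (fun z => A z ^ (2 * m)) := by
        refine I_mono hζ fun z _ => ?_
        have := hmax z _ (hσ z)
        simp only [hA]
        gcongr
    _ ≤ _ := st
    _ ≤ (2 * 4 ^ m + (16 ^ m * C2) ^ 2) * ((2 ^ (2 * m) * (C1 + C3)) *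
          I N ζ (fun z => (‖ev z f‖ ^ 2) ^ (2 * m))) := by
        refine mul_le_mul_of_nonneg_left ?_ (by positivity)
        calc I N ζ (fun z => B z ^ (2 * m)) ≤ 2 ^ (2 * m) *
              (I N ζ (fun z => (‖ev z (S ((2 * b (τ z) : ℕ) : ℤ) (mul f f))‖ ^ 2) ^ m) +
                I N ζ (fun z => Q z ^ (2 * m))) := by
              rw [← I_add, ← I_mul]
              refine I_mono hζ fun z _ => ?_
              refine (add_pow_le2 (norm_nonneg _) (Q0 z) _).trans (le_of_eq ?_)
              simp only [pow_mul]
          _ ≤ 2 ^ (2 * m) * (C1 * I N ζ (fun z => (‖ev z f‖ ^ 2) ^ (2 * m)) +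
                C3 * I N ζ (fun z => (‖ev z f‖ ^ 2) ^ (2 * m))) := by
              refine mul_le_mul_of_nonneg_left (add_le_add (g1'.trans (le_of_eq ?_)) g3')
                (by positivity)
              congr 1
              refine I_congr hζ fun z hz => ?_
              rw [ev_mul _ _ hz, norm_mul, pow_mul]; ring
          _ = _ := by ring
    _ = _ := by ring

lemma MA_pow (k : ℕ) : MA (2 ^ k) := by
  induction k with
  | zero => simpa using MA_one
  | succ k ih =>
    have := MA_double ih (RV_pow k) (by have := Sq_pow (k + 1); rwa [pow_succ'] at this)
    rwa [pow_succ']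

end Dy

namespace Dy

noncomputable def rfl' (f : TP) : TP :=
  Finsupp.onFinset (f.support.image (fun n => -n)) (fun n => (starRingEnd ℂ) (f (-n))) (by
    intro n h
    rw [Finset.mem_image]
    exact ⟨-n, by rw [Finsupp.mem_support_iff]; exact fun h0 => h (by rw [h0, map_zero]), by ring⟩)

lemma rfl'_apply (f : TP) (n : ℤ) : rfl' f n = (starRingEnd ℂ) (f (-n)) := rfl

lemma ev_rfl (f : TP) {z : ℂ} (hz : ‖z‖ = 1) : ev z (rfl' f) = (starRingEnd ℂ) (ev z f) := by
  have h : (rfl' f).support ⊆ f.support.image (fun n => -n) := Finsupp.support_onFinset_subset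
  rw [ev_sum h, ev_sum (subset_refl f.support), map_sum, Finset.sum_image (by simp)]
  refine Finset.sum_congr rfl fun n _ => ?_
  rw [rfl'_apply, neg_neg, map_mul, conj_zpow hz]

lemma npow (a b : ℂ) (m : ℕ) : (‖a + b‖ ^ 2) ^ m ≤ 4 ^ m * ((‖a‖ ^ 2) ^ m + (‖b‖ ^ 2) ^ m) := by
  rw [← pow_mul, ← pow_mul, ← pow_mul]
  refine (pow_le_pow_left₀ (norm_nonneg _) (norm_add_le _ _) _).trans ?_
  refine (add_pow_le2 (norm_nonneg _) (norm_nonneg _) _).trans (le_of_eq ?_)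
  rw [pow_mul 2 2 m]; norm_num

noncomputable def Pr (a b : ℕ) : TP →ₗ[ℂ] TP :=
  mult (fun n => if -(a : ℤ) ≤ n ∧ n ≤ b then 1 else 0)

lemma RV_single {m : ℕ} (h : RV m) : ∃ C : ℝ, 0 ≤ C ∧ ∀ (f : TP) (t : ℤ), ∀ᶠ N : ℕ in atTop,
    ∀ ζ : ℂ, ‖ζ‖ = 1 → I N ζ (fun z => (‖ev z (S t f)‖ ^ 2) ^ m) ≤
      C * I N ζ (fun z => (‖ev z f‖ ^ 2) ^ m) := by
  obtain ⟨C, hC, h⟩ := h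
  refine ⟨C, hC, fun f t => ?_⟩
  have := h Unit Finset.univ (fun _ => 1) (fun _ _ => zero_le_one) (fun _ => f) (fun _ => t)
  simpa using this

def Full (m : ℕ) : Prop := ∃ C : ℝ, 0 ≤ C ∧ ∀ (J : Finset ℕ) (a b : ℕ → ℕ) (θ : ℝ), Th J a θ →
  Th J b θ → ∀ f : TP, ∀ᶠ N : ℕ in atTop, ∀ ζ : ℂ, ‖ζ‖ = 1 → ∀ σ : ℂ → ℕ, (∀ z, σ z ∈ J) →
    I N ζ (fun z => (‖ev z (Pr (a (σ z)) (b (σ z)) f)‖ ^ 2) ^ m) ≤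
      C * I N ζ (fun z => (‖ev z f‖ ^ 2) ^ m)

lemma Full_of {m : ℕ} (hMA : MA m) (hRV : RV m) : Full m := by
  obtain ⟨C1, hC1, h1⟩ := hMA
  obtain ⟨C2, hC2, h2⟩ := RV_single hRV
  refine ⟨4 ^ m * (C1 * (4 ^ m * (1 + C2)) + 4 ^ m * (4 ^ m * (C2 + C2) + C1 * C2)), by positivity,
    fun J a b θ ha hb f => ?_⟩
  set P : TP := f - S 0 f with hP
  set Z : TP := S 0 f - S (-1) f with hZ
  set M : TP := S (-1) f with hM
  have hP1 : Pos P := by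
    intro n hn
    by_contra hc
    rw [Finsupp.mem_support_iff] at hn
    apply hn
    simp only [hP, S, Finsupp.sub_apply, mult_apply]
    rw [if_pos (by omega)]; ring
  have hM1 : Pos (rfl' M) := by
    intro n hn
    by_contra hc
    rw [Finsupp.mem_support_iff] at hn
    apply hn
    simp only [hM, S, rfl'_apply, mult_apply]
    rw [if_neg (by omega)]; simp
  filter_upwards [h1 J b θ hb P hP1, h1 J a θ ha (rfl' M) hM1, h2 f 0, h2 f (-1)] with
    N g1 g2 g3 g4 ζ hζ σ hσ
  have g1 := g1 ζ hζ σ hσ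
  have g2 := g2 ζ hζ σ hσ
  have g3 := g3 ζ hζ
  have g4 := g4 ζ hζ
  have nsub : ∀ (x y : TP), I N ζ (fun z => (‖ev z (x - y)‖ ^ 2) ^ m) ≤
      4 ^ m * (I N ζ (fun z => (‖ev z x‖ ^ 2) ^ m) + I N ζ (fun z => (‖ev z y‖ ^ 2) ^ m)) := by
    intro x y
    rw [← I_add, ← I_mul]
    refine I_mono hζ fun z _ => ?_
    have := npow (ev z x) (-ev z y) m
    rw [norm_neg, ← sub_eq_add_neg] at this
    rw [map_sub]; exact this
  set T := I N ζ (fun z => (‖ev z f‖ ^ 2) ^ m) with hT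
  have hPT : I N ζ (fun z => (‖ev z P‖ ^ 2) ^ m) ≤ 4 ^ m * (1 + C2) * T := by
    refine (nsub _ _).trans ?_
    rw [mul_assoc]
    refine mul_le_mul_of_nonneg_left ?_ (by positivity)
    linarith
  have hZT : I N ζ (fun z => (‖ev z Z‖ ^ 2) ^ m) ≤ 4 ^ m * (C2 + C2) * T := by
    refine (nsub _ _).trans ?_
    rw [mul_assoc]
    refine mul_le_mul_of_nonneg_left ?_ (by positivity)
    linarith
  have hMT : I N ζ (fun z => (‖ev z (rfl' M)‖ ^ 2) ^ m) ≤ C2 * T := by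
    refine le_trans (le_of_eq (I_congr hζ fun z hz => ?_)) g4
    rw [ev_rfl _ hz, RCLike.norm_conj]
  have pt : ∀ z, ‖z‖ = 1 → (‖ev z (Pr (a (σ z)) (b (σ z)) f)‖ ^ 2) ^ m ≤
      4 ^ m * ((‖ev z (S (b (σ z) : ℤ) P)‖ ^ 2) ^ m + 4 ^ m * ((‖ev z Z‖ ^ 2) ^ m +
        (‖ev z (S (a (σ z) : ℤ) (rfl' M))‖ ^ 2) ^ m)) := by
    intro z hz
    generalize a (σ z) = A
    generalize b (σ z) = B
    have key : Pr A B f = S (B : ℤ) P + (Z + rfl' (S (A : ℤ) (rfl' M))) := by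
      ext n
      simp only [Pr, hP, hZ, hM, S, Finsupp.add_apply, Finsupp.sub_apply, mult_apply, rfl'_apply,
        map_mul, neg_neg, Complex.conj_conj, apply_ite (starRingEnd ℂ), map_one, map_zero]
      by_cases c0 : n ≤ -1
      · have h2 : n ≤ 0 := by omega
        have h3 : n ≤ (B : ℤ) := by omega
        by_cases c : -n ≤ (A : ℤ)
        · have : -(A : ℤ) ≤ n := by omega
          simp [*]
        · have : ¬ -(A : ℤ) ≤ n := by omega
          simp [*]
      · have h4 : -(A : ℤ) ≤ n := by omega
        by_cases c1 : n ≤ 0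
        · have h3 : n ≤ (B : ℤ) := by omega
          simp [*]
        · simp [*]
    rw [key, map_add, map_add]
    refine (npow _ _ _).trans ?_
    refine mul_le_mul_of_nonneg_left (add_le_add le_rfl ?_) (by positivity)
    refine (npow _ _ _).trans (le_of_eq ?_)
    rw [ev_rfl _ hz, RCLike.norm_conj]
  refine (I_mono hζ pt).trans ?_
  rw [I_mul, I_add, I_mul, I_add, mul_assoc]
  refine mul_le_mul_of_nonneg_left ?_ (by positivity)
  have q1 := mul_le_mul_of_nonneg_left hPT hC1
  have q2 := mul_le_mul_of_nonneg_left hMT hC1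
  have q3 : (0:ℝ) ≤ 4 ^ m := by positivity
  have q4 := mul_le_mul_of_nonneg_left (add_le_add hZT (g2.trans q2)) q3
  nlinarith

lemma Full_pow (k : ℕ) : Full (2 ^ k) := Full_of (MA_pow k) (RV_pow k)

end Dy

namespace Dy

noncomputable def E (u : ℝ) : ℂ := Complex.exp (Complex.I * (u : ℂ))

lemma norm_E (u : ℝ) : ‖E u‖ = 1 := by
  unfold E; rw [mul_comm]; exact Complex.norm_exp_ofReal_mul_I u

lemma E_zpow (u : ℝ) (n : ℤ) : E u ^ n = E (n * u) := by
  unfold E; rw [← Complex.exp_int_mul]; congr 1; push_cast; ring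

lemma E_add (u v : ℝ) : E (u + v) = E u * E v := by
  unfold E; rw [← Complex.exp_add]; congr 1; push_cast; ring

lemma E_cont : Continuous E := by unfold E; fun_prop

lemma ev_cont (f : TP) : Continuous (fun u => ev (E u) f) := by
  have : (fun u => ev (E u) f) = fun u => ∑ n ∈ f.support, f n * E (n * u) := by
    funext u
    rw [ev_sum (subset_refl f.support)]
    simp only [E_zpow]
  rw [this]
  have := E_cont
  fun_prop

lemma circ {N : ℕ} (hN : 0 < N) (H : ℂ → ℝ) (hH : Continuous (fun u => H (E u))) :
    ∫ u in (-Real.pi)..Real.pi, H (E u) =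
      ∫ s in (0:ℝ)..(2 * Real.pi / N), I N (E (s - Real.pi)) H := by
  have N0 : (N : ℝ) ≠ 0 := by exact_mod_cast hN.ne'
  set a : ℕ → ℝ := fun k => -Real.pi + k * (2 * Real.pi / N) with ha
  have h := intervalIntegral.sum_integral_adjacent_intervals (f := fun u => H (E u))
    (μ := MeasureTheory.volume) (a := a) (n := N) (fun k _ => hH.intervalIntegrable _ _)
  have a0 : a 0 = -Real.pi := by simp [ha]
  have aN : a N = Real.pi := by simp only [ha]; field_simp; ring
  rw [a0, aN] at h
  rw [← h]
  have e : ∀ (s : ℝ) (k : ℕ), E (s - Real.pi) * om N ^ k = E (s + a k) := by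
    intro s k
    have : om N ^ k = E (k * (2 * Real.pi / N)) := by
      unfold om E; rw [← Complex.exp_nat_mul]; congr 1; push_cast; ring
    rw [this, ← E_add]; congr 1; simp only [ha]; ring
  unfold I
  simp only [e]
  rw [intervalIntegral.integral_finsetSum]
  · refine Finset.sum_congr rfl fun k _ => ?_
    have := intervalIntegral.integral_comp_add_right (a := 0) (b := 2 * Real.pi / N)
      (fun u => H (E u)) (a k)
    rw [this]
    congr 1
    · ring
    · simp only [ha]; push_cast; ring
  · intro k _
    exact (hH.comp (continuous_id.add continuous_const)).intervalIntegrable _ _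

lemma circ_le {m : ℕ} (h : Full m) : ∃ C : ℝ, 0 ≤ C ∧ ∀ (J : Finset ℕ) (hJ : J.Nonempty)
    (a b : ℕ → ℕ) (θ : ℝ), Th J a θ → Th J b θ → ∀ f : TP,
    ∫ u in (-Real.pi)..Real.pi, J.sup' hJ (fun j => (‖ev (E u) (Pr (a j) (b j) f)‖ ^ 2) ^ m) ≤
      C * ∫ u in (-Real.pi)..Real.pi, (‖ev (E u) f‖ ^ 2) ^ m := by
  obtain ⟨C, hC, h⟩ := h
  refine ⟨C, hC, fun J hJ a b θ ha hb f => ?_⟩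
  obtain ⟨N, hN, hN0⟩ := ((h J a b θ ha hb f).and (eventually_gt_atTop 0)).exists
  have c1 : Continuous (fun u =>
      J.sup' hJ (fun j => (‖ev (E u) (Pr (a j) (b j) f)‖ ^ 2) ^ m)) := by
    refine Continuous.finset_sup'_apply hJ fun j _ => ?_
    exact ((ev_cont _).norm.pow 2).pow m
  have c2 : Continuous (fun u => (‖ev (E u) f‖ ^ 2) ^ m) := ((ev_cont _).norm.pow 2).pow m
  rw [circ hN0 (fun z => J.sup' hJ (fun j => (‖ev z (Pr (a j) (b j) f)‖ ^ 2) ^ m)) c1,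
    circ hN0 (fun z => (‖ev z f‖ ^ 2) ^ m) c2, ← intervalIntegral.integral_const_mul]
  have cI : ∀ H : ℂ → ℝ, Continuous (fun u => H (E u)) →
      Continuous (fun s => I N (E (s - Real.pi)) H) := by
    intro H hH
    unfold I
    refine continuous_finsetSum _ fun k _ => ?_
    have : ∀ s : ℝ, E (s - Real.pi) * om N ^ k = E (s - Real.pi + k * (2 * Real.pi / N)) := by
      intro s
      have : om N ^ k = E (k * (2 * Real.pi / N)) := by
        unfold om E; rw [← Complex.exp_nat_mul]; congr 1; push_cast; ring
      rw [this, ← E_add]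
    simp only [this]
    exact hH.comp (by fun_prop)
  refine intervalIntegral.integral_mono_on (by positivity)
    ((cI _ c1).intervalIntegrable _ _) (((cI _ c2).const_mul C).intervalIntegrable _ _)
    (fun s _ => ?_)
  have hex : ∀ z : ℂ, ∃ j ∈ J, J.sup' hJ (fun j => (‖ev z (Pr (a j) (b j) f)‖ ^ 2) ^ m) =
      (‖ev z (Pr (a j) (b j) f)‖ ^ 2) ^ m := fun z => J.exists_mem_eq_sup' hJ _
  choose σ hσ hs using hex
  simp only [hs]
  exact hN _ (norm_E _) σ hσ

/-- Thresholds -/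
lemma thr (M : ℕ) (μ : ℕ → ℝ) {δ β T : ℝ} (hδ : 0 < δ) (hδ2 : δ ≤ 1 / 8) (hβ : 0 < β)
    (hβδ : β ≤ δ) (hT : 1 ≤ T)
    (hsep : ∀ n < M, ∀ n' < M, μ n < μ n' → 4 * δ < μ n' - μ n) :
    ∃ b : ℕ, 1 ≤ b ∧ 1 / (2 * β) * T ≤ b ∧ b ≤ 4 * (1 / (2 * β) * T) ∧
      ∀ n < M, ∀ v : ℤ, |β * v - μ n| < δ → (v ≤ b ↔ μ n ≤ T) := by
  have key : ∃ r : ℝ, |r| ≤ δ ∧ ∀ n < M, ∀ v : ℤ, |β * v - μ n| < δ →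
      (v ≤ ⌊(T + r) / β⌋ ↔ μ n ≤ T) := by
    by_cases c : ∃ n < M, T < μ n ∧ μ n ≤ T + 2 * δ
    · obtain ⟨n0, hn0, c1, c2⟩ := c
      refine ⟨-δ, by rw [abs_neg, abs_of_pos hδ], fun n hn v hv => ?_⟩
      rw [Int.le_floor, le_div_iff₀ hβ]
      rw [abs_lt] at hv
      constructor
      · intro h
        by_contra hc
        push Not at hc
        nlinarith
      · intro h
        have := hsep n hn n0 hn0 (by linarith)
        nlinarith
    · push Not at c
      refine ⟨δ, by rw [abs_of_pos hδ], fun n hn v hv => ?_⟩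
      rw [Int.le_floor, le_div_iff₀ hβ]
      rw [abs_lt] at hv
      constructor
      · intro h
        by_contra hc
        push Not at hc
        have := c n hn hc
        nlinarith
      · intro h
        nlinarith
  obtain ⟨r, hr, hv⟩ := key
  rw [abs_le] at hr
  have hlow : 1 / (2 * β) * T ≤ (T + r) / β - 1 := by
    rw [div_sub_one hβ.ne', le_div_iff₀ hβ]
    have : 1 / (2 * β) * T * β = T / 2 := by field_simp
    rw [this]; linarith
  have hup : (T + r) / β ≤ 4 * (1 / (2 * β) * T) := by
    rw [div_le_iff₀ hβ]
    have : 4 * (1 / (2 * β) * T) * β = 2 * T := by field_simp; norm_num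
    rw [this]; linarith
  have h1 := Int.sub_one_lt_floor ((T + r) / β)
  have h2 := Int.floor_le ((T + r) / β)
  have h0 : 0 < 1 / (2 * β) * T := by positivity
  have fpos : 0 < ⌊(T + r) / β⌋ := by
    have : (0:ℝ) < ⌊(T + r) / β⌋ := by linarith
    exact_mod_cast this
  have e : ((⌊(T + r) / β⌋.toNat : ℕ) : ℤ) = ⌊(T + r) / β⌋ := Int.toNat_of_nonneg fpos.le
  have e' : ((⌊(T + r) / β⌋.toNat : ℕ) : ℝ) = (⌊(T + r) / β⌋ : ℝ) := by exact_mod_cast e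
  refine ⟨⌊(T + r) / β⌋.toNat, by omega, by rw [e']; linarith, by rw [e']; linarith, ?_⟩
  rw [e]; exact hv

noncomputable def q (K : ℕ) (u : ℝ) : ℂ := (1 / (K : ℂ)) * ∑ l ∈ range K, E u ^ l

lemma q_le_one (K : ℕ) (hK : 0 < K) (u : ℝ) : ‖q K u‖ ≤ 1 := by
  have K0 : (0:ℝ) < K := by exact_mod_cast hK
  unfold q
  rw [norm_mul, norm_div, norm_one, Complex.norm_natCast, one_div, inv_mul_le_iff₀ K0, mul_one]
  refine (norm_sum_le _ _).trans ?_
  simp [norm_pow, norm_E]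

lemma q_low (K : ℕ) (hK : 0 < K) (u : ℝ) (hu : K * |u| ≤ 1 / 8) : 1 / 2 ≤ ‖q K u‖ := by
  have K0 : (0:ℝ) < K := by exact_mod_cast hK
  have K1 : (K:ℂ) ≠ 0 := by exact_mod_cast hK.ne'
  have h : ‖q K u - 1‖ ≤ 1 / 8 := by
    have : q K u - 1 = (1 / (K : ℂ)) * ∑ l ∈ range K, (E u ^ l - 1) := by
      unfold q; rw [Finset.sum_sub_distrib]; simp; field_simp
    rw [this, norm_mul, norm_div, norm_one, Complex.norm_natCast, one_div, inv_mul_le_iff₀ K0]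
    refine (norm_sum_le _ _).trans ?_
    have : ∀ l ∈ range K, ‖E u ^ l - 1‖ ≤ 1 / 8 := by
      intro l hl
      have e : E u ^ l = E (l * u) := by have := E_zpow u l; exact_mod_cast this
      rw [e]
      refine (Real.norm_exp_I_mul_ofReal_sub_one_le).trans ?_
      rw [Real.norm_eq_abs, abs_mul, Nat.abs_cast]
      refine le_trans ?_ hu
      have : (l:ℝ) ≤ K := by exact_mod_cast (mem_range.mp hl).le
      gcongr
    refine (Finset.sum_le_sum this).trans ?_
    simp
  have := norm_sub_norm_le (1:ℂ) (q K u)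
  rw [norm_sub_rev, norm_one] at this
  linarith

lemma q_up (K : ℕ) (u : ℝ) (hu : |u| ≤ Real.pi) : ‖q K u‖ * (K * |u|) ≤ Real.pi := by
  rcases Nat.eq_zero_or_pos K with h0 | hK
  · subst h0; simp [Real.pi_pos.le]
  have K0 : (0:ℝ) < K := by exact_mod_cast hK
  have K1 : (K:ℂ) ≠ 0 := by exact_mod_cast hK.ne'
  have h1 : (E u - 1) * (q K u * K) = E u ^ K - 1 := by
    rw [← mul_geom_sum]; unfold q; field_simp
  have h2 : ‖E u - 1‖ * (‖q K u‖ * K) ≤ 2 := by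
    have := congrArg norm h1
    rw [norm_mul, norm_mul, Complex.norm_natCast] at this
    rw [this]
    refine (norm_sub_le _ _).trans ?_
    rw [norm_pow, norm_E]; norm_num
  have h3 : 2 / Real.pi * |u| ≤ ‖E u - 1‖ := by
    unfold E
    rw [Complex.norm_exp_I_mul_ofReal_sub_one, Real.norm_eq_abs, abs_mul, abs_two]
    have := Real.mul_abs_le_abs_sin (x := u / 2) (by rw [abs_div, abs_two]; linarith)
    rw [abs_div, abs_two] at this
    linarith
  have h4 : 2 / Real.pi * |u| * (‖q K u‖ * K) ≤ 2 :=
    (mul_le_mul_of_nonneg_right h3 (by positivity)).trans h2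
  have pp := Real.pi_pos
  have : 2 / Real.pi * |u| * (‖q K u‖ * K) = 2 / Real.pi * (‖q K u‖ * (K * |u|)) := by ring
  rw [this, div_mul_eq_mul_div, div_le_iff₀ pp] at h4
  linarith

end Dy

namespace Dy

noncomputable def g (M : ℕ) (c : ℕ → ℂ) (p : ℕ → Prop) (μ : ℕ → ℝ) (x : ℝ) : ℂ :=
  open Classical in ∑ n ∈ range M, if p n then c n * E (μ n * x) else 0

lemma g_cont (M : ℕ) (c : ℕ → ℂ) (p : ℕ → Prop) (μ : ℕ → ℝ) : Continuous (g M c p μ) := by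
  unfold g
  refine continuous_finsetSum _ fun n _ => ?_
  split_ifs
  · have := E_cont; fun_prop
  · fun_prop

lemma g_bd (M : ℕ) (c : ℕ → ℂ) (p : ℕ → Prop) (μ : ℕ → ℝ) (x : ℝ) :
    ‖g M c p μ x‖ ≤ ∑ n ∈ range M, ‖c n‖ := by
  unfold g
  refine (norm_sum_le _ _).trans (Finset.sum_le_sum fun n _ => ?_)
  split_ifs
  · rw [norm_mul, norm_E, mul_one]
  · rw [norm_zero]; exact norm_nonneg _

noncomputable def nu (lam : ℕ → ℝ) (β : ℝ) (n : ℕ) : ℤ := ⌊lam n / β⌋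

noncomputable def FF (M : ℕ) (c : ℕ → ℂ) (v : ℕ → ℤ) (K : ℕ) : TP :=
  ∑ n ∈ range M, ∑ l ∈ range K, Finsupp.single (v n + l) (c n / K)

lemma ev_FF (M : ℕ) (c : ℕ → ℂ) (v : ℕ → ℤ) (K : ℕ) (φ : ℤ → ℂ) (p : ℕ → Prop)
    (hp : ∀ n < M, p n → ∀ l < K, φ (v n + l) = 1) (hp' : ∀ n < M, ¬ p n → ∀ l < K, φ (v n + l) = 0)
    (β x : ℝ) :
    ev (E (β * x)) (mult φ (FF M c v K)) = g M c p (fun n => β * v n) x * q K (β * x) := by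
  unfold FF g q
  simp only [map_sum, mult_single, ev_single]
  rw [Finset.sum_mul]
  refine Finset.sum_congr rfl fun n hn => ?_
  have hn := mem_range.mp hn
  split_ifs with h
  · have e : E (β * v n * x) = E (β * x) ^ (v n) := by rw [E_zpow]; congr 1; ring
    rw [e, Finset.mul_sum, Finset.mul_sum]
    refine Finset.sum_congr rfl fun l hl => ?_
    rw [hp n hn h l (mem_range.mp hl), zpow_add₀ (ne_zero_of_norm (norm_E _)), zpow_natCast]
    ring
  · rw [zero_mul]
    refine Finset.sum_eq_zero fun l hl => ?_
    rw [hp' n hn h l (mem_range.mp hl)]; ring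

lemma approx {m : ℕ} (hm : 1 ≤ m) (h : Full m) : ∃ C : ℝ, 0 ≤ C ∧ ∀ (δ : ℝ), 0 < δ → δ ≤ 1 / 8 →
    ∀ (J : Finset ℕ) (hJ : J.Nonempty) (M : ℕ) (c : ℕ → ℂ) (lam : ℕ → ℝ),
    (∀ n < M, ∀ n' < M, lam n < lam n' → 4 * δ < lam n' - lam n) → ∀ K : ℕ, 0 < K →
    ∫ x in (0:ℝ)..1, J.sup' hJ (fun j => (‖g M c (fun n => |lam n| ≤ 2 ^ j)
      (fun n => δ / K * nu lam (δ / K) n) x‖ ^ 2) ^ m) ≤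
    C * (1 + Real.pi ^ 2 / δ ^ 2) * ∫ x : ℝ, (‖g M c (fun _ => True)
      (fun n => δ / K * nu lam (δ / K) n) x‖ ^ 2) ^ m * (1 + x ^ 2)⁻¹ := by
  obtain ⟨C, hC, h⟩ := circ_le h
  refine ⟨4 ^ m * C, by positivity, fun δ hδ hδ2 J hJ M c lam hsep K hK => ?_⟩
  have K0 : (0:ℝ) < K := by exact_mod_cast hK
  have K1 : (1:ℝ) ≤ K := by exact_mod_cast hK
  set β : ℝ := δ / K with hβ
  have β0 : 0 < β := by positivity
  have βδ : β ≤ δ := div_le_self hδ.le K1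
  have Kβ : K * β = δ := by rw [hβ]; field_simp
  have near : ∀ n, ∀ l < K, |β * ((nu lam β n + l : ℤ) : ℝ) - lam n| < δ := by
    intro n l hl
    have h1 := Int.sub_one_lt_floor (lam n / β)
    have h2 := Int.floor_le (lam n / β)
    rw [lt_iff_not_ge] at h1
    have h1' : lam n - β < β * (⌊lam n / β⌋ : ℝ) := by
      rw [not_le, sub_lt_iff_lt_add, div_lt_iff₀ β0] at h1; linarith
    have h2' : β * (⌊lam n / β⌋ : ℝ) ≤ lam n := by
      rw [le_div_iff₀ β0] at h2; linarith
    have h3 : (l:ℝ) + 1 ≤ K := by exact_mod_cast hl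
    have h4 : β * ((l:ℝ) + 1) ≤ δ := by rw [← Kβ, mul_comm (K:ℝ)]; gcongr
    have h5 : 0 ≤ β * (l:ℝ) := by positivity
    unfold nu
    push_cast
    rw [abs_lt]
    constructor <;> nlinarith
  have hb : ∀ j : ℕ, _ := fun j => thr M lam hδ hδ2 β0 βδ (one_le_pow₀ (M₀ := ℝ) (a := 2)
    (by norm_num) (n := j)) hsep
  have ha : ∀ j : ℕ, _ := fun j => thr M (fun n => -lam n) hδ hδ2 β0 βδ
    (one_le_pow₀ (M₀ := ℝ) (a := 2) (by norm_num) (n := j)) (fun n hn n' hn' hl => by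
      have := hsep n' hn' n hn (by linarith)
      linarith)
  choose b hb1 hb2 hb3 hb4 using hb
  choose a ha1 ha2 ha3 ha4 using ha
  have thb : Th J b (1 / (2 * β)) := ⟨by positivity, fun j _ => ⟨hb1 j, hb2 j, hb3 j⟩⟩
  have tha : Th J a (1 / (2 * β)) := ⟨by positivity, fun j _ => ⟨ha1 j, ha2 j, ha3 j⟩⟩
  set v := nu lam β with hv
  set F := FF M c v K with hF
  have iff1 : ∀ j, ∀ n < M, ∀ l < K, ((-(a j : ℤ) ≤ v n + l ∧ v n + l ≤ b j) ↔
      |lam n| ≤ 2 ^ j) := by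
    intro j n hn l hl
    have k1 := hb4 j n hn _ (near n l hl)
    have k2 := ha4 j n hn (-(v n + l)) (by
      have := near n l hl
      rw [← abs_neg] at this
      convert this using 2; push_cast; ring)
    rw [abs_le, ← k1, and_congr_left_iff]
    intro _
    rw [neg_le, k2, neg_le]
  have evP : ∀ j x, ev (E (β * x)) (Pr (a j) (b j) F) = g M c (fun n => |lam n| ≤ 2 ^ j)
      (fun n => β * v n) x * q K (β * x) := by
    intro j x
    refine ev_FF M c v K _ _ ?_ ?_ β x
    · intro n hn hp l hl
      rw [if_pos ((iff1 j n hn l hl).2 hp)]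
    · intro n hn hp l hl
      rw [if_neg (fun hh => hp ((iff1 j n hn l hl).1 hh))]
  have evF : ∀ x, ev (E (β * x)) F = g M c (fun _ => True)
      (fun n => β * v n) x * q K (β * x) := by
    intro x
    have := ev_FF M c v K (fun _ => 1) (fun _ => True) (fun _ _ _ _ _ => rfl)
      (fun _ _ h => absurd trivial h) β x
    rwa [mult_one] at this
  have main := h J hJ a b _ tha thb F
  set A : ℝ → ℝ := fun u => J.sup' hJ (fun j => (‖ev (E u) (Pr (a j) (b j) F)‖ ^ 2) ^ m) with hA
  set B : ℝ → ℝ := fun u => (‖ev (E u) F‖ ^ 2) ^ m with hB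
  have cA : Continuous A := Continuous.finset_sup'_apply hJ fun j _ =>
    ((ev_cont _).norm.pow 2).pow m
  have cB : Continuous B := ((ev_cont _).norm.pow 2).pow m
  have A0 : ∀ u, 0 ≤ A u := by
    intro u
    obtain ⟨j, hj⟩ := hJ
    exact le_trans (by positivity) (Finset.le_sup' (fun j =>
      (‖ev (E u) (Pr (a j) (b j) F)‖ ^ 2) ^ m) hj)
  have cg : Continuous (fun x => J.sup' hJ (fun j => (‖g M c (fun n => |lam n| ≤ 2 ^ j)
      (fun n => β * v n) x‖ ^ 2) ^ m)) := Continuous.finset_sup'_apply hJ fun j _ =>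
    ((g_cont _ _ _ _).norm.pow 2).pow m
  have cβ : Continuous (fun x : ℝ => β * x) := by fun_prop
  have pp := Real.pi_pos
  have R1 : 1 ≤ Real.pi / β := by
    rw [le_div_iff₀ β0]; linarith [Real.pi_gt_three]
  have s1 : ∫ x in (0:ℝ)..1, J.sup' hJ (fun j => (‖g M c (fun n => |lam n| ≤ 2 ^ j)
      (fun n => β * v n) x‖ ^ 2) ^ m) ≤ ∫ x in (0:ℝ)..1, 4 ^ m * A (β * x) := by
    refine intervalIntegral.integral_mono_on zero_le_one (cg.intervalIntegrable _ _)
      (((cA.comp cβ).const_mul _).intervalIntegrable _ _) fun x hx => ?_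
    refine Finset.sup'_le hJ _ fun j hj => ?_
    have hq := q_low K hK (β * x) (by
      rw [abs_mul, abs_of_pos β0, ← mul_assoc, Kβ, abs_of_nonneg hx.1]
      nlinarith [hx.2])
    refine le_trans ?_ (mul_le_mul_of_nonneg_left (Finset.le_sup' (fun j =>
      (‖ev (E (β * x)) (Pr (a j) (b j) F)‖ ^ 2) ^ m) hj) (by positivity))
    rw [evP, norm_mul, ← mul_pow]
    refine pow_le_pow_left₀ (sq_nonneg _) ?_ _
    rw [mul_pow]
    have : 1 ≤ 4 * ‖q K (β * x)‖ ^ 2 := by nlinarith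
    nlinarith [sq_nonneg ‖g M c (fun n => |lam n| ≤ 2 ^ j) (fun n => β * v n) x‖]
  have s2 : ∫ x in (0:ℝ)..1, A (β * x) ≤ ∫ x in (-(Real.pi / β))..(Real.pi / β), A (β * x) := by
    refine intervalIntegral.integral_mono_interval (by linarith) zero_le_one R1 ?_
      ((cA.comp cβ).intervalIntegrable _ _)
    exact Eventually.of_forall fun x => A0 _
  have cv : ∀ H : ℝ → ℝ, β * ∫ x in (-(Real.pi / β))..(Real.pi / β), H (β * x) =
      ∫ u in (-Real.pi)..Real.pi, H u := by
    intro H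
    rw [intervalIntegral.mul_integral_comp_mul_left]
    congr 1 <;> field_simp
  have s3 : ∫ x in (-(Real.pi / β))..(Real.pi / β), A (β * x) ≤
      C * ∫ x in (-(Real.pi / β))..(Real.pi / β), B (β * x) := by
    rw [← cv A, ← cv B] at main
    have : β * ∫ x in (-(Real.pi / β))..(Real.pi / β), A (β * x) ≤
      β * (C * ∫ x in (-(Real.pi / β))..(Real.pi / β), B (β * x)) := by linarith
    exact le_of_mul_le_mul_left this β0
  set G : ℝ → ℝ := fun x => (‖g M c (fun _ => True) (fun n => β * v n) x‖ ^ 2) ^ m *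
    (1 + x ^ 2)⁻¹ with hG
  have gc := g_cont M c (fun _ => True) (fun n => β * v n)
  have Gint : MeasureTheory.Integrable G := by
    refine MeasureTheory.Integrable.bdd_mul (c := ((∑ n ∈ range M, ‖c n‖) ^ 2) ^ m)
      integrable_inv_one_add_sq ?_ ?_
    · exact ((gc.norm.pow 2).pow m).aestronglyMeasurable
    · refine Eventually.of_forall fun x => ?_
      rw [Real.norm_of_nonneg (by positivity)]
      have := g_bd M c (fun _ => True) (fun n => β * v n) x
      gcongr
  have G0 : ∀ x, 0 ≤ G x := fun x => by simp only [hG]; positivity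
  set D : ℝ := 1 + Real.pi ^ 2 / δ ^ 2 with hD
  have s4 : ∫ x in (-(Real.pi / β))..(Real.pi / β), B (β * x) ≤
      ∫ x in (-(Real.pi / β))..(Real.pi / β), D * G x := by
    refine intervalIntegral.integral_mono_on (by linarith) ((cB.comp cβ).intervalIntegrable _ _)
      (Gint.const_mul D).intervalIntegrable fun x hx => ?_
    simp only [hB, hG]
    rw [evF, norm_mul, mul_pow, mul_pow]
    have q1 := q_le_one K hK (β * x)
    have q2 := q_up K (β * x) (by
      rw [abs_mul, abs_of_pos β0, mul_comm, ← le_div_iff₀ β0, abs_le]; exact hx)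
    rw [abs_mul, abs_of_pos β0, ← mul_assoc (K:ℝ), Kβ] at q2
    have q3 : (‖q K (β * x)‖ ^ 2) ^ m ≤ ‖q K (β * x)‖ ^ 2 :=
      pow_le_of_le_one (sq_nonneg _) (pow_le_one₀ (norm_nonneg _) q1) (by omega)
    have q4 : ‖q K (β * x)‖ ^ 2 ≤ D * (1 + x ^ 2)⁻¹ := by
      rw [← div_eq_mul_inv, le_div_iff₀ (by positivity), hD, mul_add, mul_one]
      have t1 : ‖q K (β * x)‖ ^ 2 ≤ 1 := pow_le_one₀ (norm_nonneg _) q1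
      have t2 : ‖q K (β * x)‖ ^ 2 * x ^ 2 ≤ Real.pi ^ 2 / δ ^ 2 := by
        rw [le_div_iff₀ (by positivity)]
        have := pow_le_pow_left₀ (by positivity) q2 2
        rw [mul_pow, mul_pow, sq_abs] at this
        linarith
      linarith
    calc _ ≤ (‖g M c (fun _ => True) (fun n => β * v n) x‖ ^ 2) ^ m * (D * (1 + x ^ 2)⁻¹) := by
          refine mul_le_mul_of_nonneg_left (q3.trans q4) (by positivity)
      _ = _ := by ring
  have s5 : ∫ x in (-(Real.pi / β))..(Real.pi / β), D * G x ≤ D * ∫ x, G x := by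
    rw [intervalIntegral.integral_const_mul, intervalIntegral.integral_of_le (by linarith)]
    refine mul_le_mul_of_nonneg_left ?_ (by positivity)
    exact MeasureTheory.setIntegral_le_integral Gint (Eventually.of_forall G0)
  rw [intervalIntegral.integral_const_mul] at s1
  calc _ ≤ 4 ^ m * ∫ x in (0:ℝ)..1, A (β * x) := s1
    _ ≤ 4 ^ m * (C * (D * ∫ x, G x)) := by
      refine mul_le_mul_of_nonneg_left ((s2.trans s3).trans ?_) (by positivity)
      exact mul_le_mul_of_nonneg_left (s4.trans s5) hC
    _ = _ := by ring

end Dy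

namespace Dy

lemma mu_tendsto (lam : ℕ → ℝ) {δ : ℝ} (hδ : 0 < δ) (n : ℕ) :
    Tendsto (fun i : ℕ => δ / ((i + 1 : ℕ) : ℝ) * (nu lam (δ / ((i + 1 : ℕ) : ℝ)) n : ℝ)) atTop
      (nhds (lam n)) := by
  have h0 : Tendsto (fun i : ℕ => δ / ((i + 1 : ℕ) : ℝ)) atTop (nhds 0) := by
    have := (tendsto_add_atTop_iff_nat 1).2 (tendsto_const_div_atTop_nhds_zero_nat δ)
    exact this
  have h1 : Tendsto (fun i : ℕ => lam n - δ / ((i + 1 : ℕ) : ℝ)) atTop (nhds (lam n)) := by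
    have := (tendsto_const_nhds (x := lam n)).sub h0
    rwa [sub_zero] at this
  refine tendsto_of_tendsto_of_tendsto_of_le_of_le h1 tendsto_const_nhds (fun i => ?_) (fun i => ?_)
  · have β0 : 0 < δ / ((i + 1 : ℕ) : ℝ) := by positivity
    set β := δ / ((i + 1 : ℕ) : ℝ)
    have h1 := Int.sub_one_lt_floor (lam n / β)
    rw [sub_lt_iff_lt_add, div_lt_iff₀ β0] at h1
    simp only [nu]; linarith
  · have β0 : 0 < δ / ((i + 1 : ℕ) : ℝ) := by positivity
    set β := δ / ((i + 1 : ℕ) : ℝ)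
    have h2 := Int.floor_le (lam n / β)
    rw [le_div_iff₀ β0] at h2
    simp only [nu]; linarith

lemma g_tendsto (M : ℕ) (c : ℕ → ℂ) (p : ℕ → Prop) (μ : ℕ → ℕ → ℝ) (lam : ℕ → ℝ)
    (h : ∀ n, Tendsto (fun i => μ i n) atTop (nhds (lam n))) (x : ℝ) :
    Tendsto (fun i => g M c p (μ i) x) atTop (nhds (g M c p lam x)) := by
  unfold g
  refine tendsto_finsetSum _ fun n _ => ?_
  split_ifs
  · exact ((E_cont.tendsto _).comp ((h n).mul_const x)).const_mul (c n)
  · exact tendsto_const_nhds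

lemma sup_tendsto {J : Finset ℕ} (hJ : J.Nonempty) (a : ℕ → ℕ → ℝ) (b : ℕ → ℝ)
    (h : ∀ j ∈ J, Tendsto (fun i => a i j) atTop (nhds (b j))) :
    Tendsto (fun i => J.sup' hJ (a i)) atTop (nhds (J.sup' hJ b)) :=
  Filter.Tendsto.finset_sup'_nhds_apply hJ h

lemma limit {m : ℕ} (hm : 1 ≤ m) (h : Full m) : ∃ C : ℝ, 0 ≤ C ∧ ∀ (δ : ℝ), 0 < δ → δ ≤ 1 / 8 →
    ∀ (J : Finset ℕ) (hJ : J.Nonempty) (M : ℕ) (c : ℕ → ℂ) (lam : ℕ → ℝ),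
    (∀ n < M, ∀ n' < M, lam n < lam n' → 4 * δ < lam n' - lam n) →
    ∫ x in (0:ℝ)..1, J.sup' hJ (fun j => (‖g M c (fun n => |lam n| ≤ 2 ^ j) lam x‖ ^ 2) ^ m) ≤
    C * (1 + Real.pi ^ 2 / δ ^ 2) * ∫ x : ℝ, (‖g M c (fun _ => True) lam x‖ ^ 2) ^ m *
      (1 + x ^ 2)⁻¹ := by
  obtain ⟨C, hC, h⟩ := approx hm h
  refine ⟨C, hC, fun δ hδ hδ2 J hJ M c lam hsep => ?_⟩
  set μ : ℕ → ℕ → ℝ := fun i n => δ / ((i + 1 : ℕ) : ℝ) * (nu lam (δ / ((i + 1 : ℕ) : ℝ)) n : ℝ)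
    with hμ
  have hμt : ∀ n, Tendsto (fun i => μ i n) atTop (nhds (lam n)) := mu_tendsto lam hδ
  set R : ℝ := ((∑ n ∈ range M, ‖c n‖) ^ 2) ^ m with hR
  have bd : ∀ p μ x, (‖g M c p μ x‖ ^ 2) ^ m ≤ R := by
    intro p μ x
    have := g_bd M c p μ x
    simp only [hR]
    gcongr
  have L : Tendsto (fun i => ∫ x in (0:ℝ)..1, J.sup' hJ (fun j =>
      (‖g M c (fun n => |lam n| ≤ 2 ^ j) (μ i) x‖ ^ 2) ^ m)) atTop (nhds
      (∫ x in (0:ℝ)..1, J.sup' hJ (fun j => (‖g M c (fun n => |lam n| ≤ 2 ^ j) lam x‖ ^ 2) ^ m))) := by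
    refine intervalIntegral.tendsto_integral_filter_of_dominated_convergence (fun _ => R) ?_ ?_ ?_ ?_
    · refine Eventually.of_forall fun i => Continuous.aestronglyMeasurable ?_
      exact Continuous.finset_sup'_apply hJ fun j _ => ((g_cont _ _ _ _).norm.pow 2).pow m
    · refine Eventually.of_forall fun i => Eventually.of_forall fun x _ => ?_
      rw [Real.norm_of_nonneg]
      · exact Finset.sup'_le hJ _ fun j _ => bd _ _ _
      · obtain ⟨j, hj⟩ := hJ
        exact le_trans (by positivity) (Finset.le_sup' (fun j =>
          (‖g M c (fun n => |lam n| ≤ 2 ^ j) (μ i) x‖ ^ 2) ^ m) hj)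
    · exact intervalIntegrable_const
    · refine Eventually.of_forall fun x _ => ?_
      refine sup_tendsto hJ _ _ fun j _ => ?_
      exact ((g_tendsto M c _ μ lam hμt x).norm.pow 2).pow m
  have Rt : Tendsto (fun i => ∫ x : ℝ, (‖g M c (fun _ => True) (μ i) x‖ ^ 2) ^ m *
      (1 + x ^ 2)⁻¹) atTop (nhds (∫ x : ℝ, (‖g M c (fun _ => True) lam x‖ ^ 2) ^ m *
      (1 + x ^ 2)⁻¹)) := by
    refine MeasureTheory.tendsto_integral_of_dominated_convergence (fun x => R * (1 + x ^ 2)⁻¹)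
      ?_ (integrable_inv_one_add_sq.const_mul R) ?_ ?_
    · intro i
      refine MeasureTheory.AEStronglyMeasurable.mul ?_
        integrable_inv_one_add_sq.aestronglyMeasurable
      exact (((g_cont _ _ _ _).norm.pow 2).pow m).aestronglyMeasurable
    · intro i
      refine Eventually.of_forall fun x => ?_
      rw [Real.norm_of_nonneg (by positivity)]
      exact mul_le_mul_of_nonneg_right (bd _ _ _) (by positivity)
    · refine Eventually.of_forall fun x => ?_
      exact (((g_tendsto M c _ μ lam hμt x).norm.pow 2).pow m).mul_const _
  exact le_of_tendsto_of_tendsto' L (Rt.const_mul _) fun i =>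
    h δ hδ hδ2 J hJ M c lam hsep (i + 1) (Nat.succ_pos i)

lemma om_cmp {n : ℤ} {x t : ℝ} (hx : x ∈ Set.Icc (n:ℝ) (n + 1)) (ht : t ∈ Set.Icc (n:ℝ) (n + 1)) :
    (1 + x ^ 2)⁻¹ ≤ 3 * (1 + t ^ 2)⁻¹ := by
  have h1 := hx.1; have h2 := hx.2; have h3 := ht.1; have h4 := ht.2
  rw [← div_eq_mul_inv, le_div_iff₀ (by positivity), inv_mul_le_iff₀ (by positivity)]
  have : (t - x) ^ 2 ≤ 1 := by
    rw [sq_le_one_iff_abs_le_one, abs_le]; constructor <;> linarith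
  nlinarith [sq_nonneg (t - 2 * x)]

lemma weight {G : ℝ → ℝ} (hG : Continuous G) (G0 : ∀ x, 0 ≤ G x) {R A : ℝ} (hR : ∀ x, G x ≤ R)
    (hA : ∀ x, ∫ s in x..(x + 1), G s ≤ A) :
    ∫ x : ℝ, G x * (1 + x ^ 2)⁻¹ ≤ 3 * A * Real.pi := by
  have i1 : MeasureTheory.Integrable (fun x : ℝ => G x * (1 + x ^ 2)⁻¹) := by
    refine MeasureTheory.Integrable.bdd_mul (c := R) integrable_inv_one_add_sq
      hG.aestronglyMeasurable (Eventually.of_forall fun x => ?_)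
    rw [Real.norm_of_nonneg (G0 x)]; exact hR x
  have s1 := i1.hasSum_intervalIntegral 0
  have s2 := ((integrable_inv_one_add_sq).hasSum_intervalIntegral 0).mul_left (3 * A)
  rw [integral_univ_inv_one_add_sq] at s2
  refine hasSum_le (fun n => ?_) s1 s2
  simp only [zero_add]
  have le1 : (n:ℝ) ≤ n + 1 := by linarith
  have cw : Continuous (fun x : ℝ => (1 + x ^ 2)⁻¹) :=
    Continuous.inv₀ (by fun_prop) (fun x => by positivity)
  have pt : ∀ t ∈ Set.Icc (n:ℝ) (n + 1), ∫ x in (n:ℝ)..(n + 1), G x * (1 + x ^ 2)⁻¹ ≤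
      3 * A * (1 + t ^ 2)⁻¹ := by
    intro t ht
    calc ∫ x in (n:ℝ)..(n + 1), G x * (1 + x ^ 2)⁻¹
        ≤ ∫ x in (n:ℝ)..(n + 1), G x * (3 * (1 + t ^ 2)⁻¹) := by
          refine intervalIntegral.integral_mono_on le1 ((hG.mul cw).intervalIntegrable _ _)
            ((hG.mul_const _).intervalIntegrable _ _) fun x hx => ?_
          exact mul_le_mul_of_nonneg_left (om_cmp hx ht) (G0 x)
      _ = (∫ x in (n:ℝ)..(n + 1), G x) * (3 * (1 + t ^ 2)⁻¹) := by
          rw [intervalIntegral.integral_mul_const]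
      _ ≤ A * (3 * (1 + t ^ 2)⁻¹) := mul_le_mul_of_nonneg_right (hA n) (by positivity)
      _ = _ := by ring
  have := intervalIntegral.integral_mono_on (μ := MeasureTheory.volume) le1
    (intervalIntegrable_const (c := ∫ x in (n:ℝ)..(n + 1), G x * (1 + x ^ 2)⁻¹))
    ((cw.const_mul (3 * A)).intervalIntegrable _ _) pt
  rw [intervalIntegral.integral_const, intervalIntegral.integral_const_mul] at this
  simpa using this

end Dy


namespace Dy

lemma sep_pair (P : TrigPoly) {α : ℝ} (hα : 0 < α) (h : P.sep α) :
    ∀ n < P.N, ∀ n' < P.N, P.Λ n < P.Λ n' → α < P.Λ n' - P.Λ n := by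
  have key : ∀ d n, n + d + 1 < P.N → α < P.Λ (n + d + 1) - P.Λ n := by
    intro d
    induction d with
    | zero => exact fun n hn => h n hn
    | succ d ih =>
      intro n hn
      have h1 := ih n (by omega)
      have h2 := h (n + d + 1) (by omega)
      have e : n + (d + 1) + 1 = n + d + 1 + 1 := by ring
      rw [e]; linarith
  intro n hn n' hn' hl
  rcases lt_trichotomy n n' with c | c | c
  · obtain ⟨d, rfl⟩ := Nat.exists_eq_add_of_lt c
    exact key d n hn'
  · subst c; exact absurd hl (lt_irrefl _)
  · obtain ⟨d, rfl⟩ := Nat.exists_eq_add_of_lt c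
    have := key d n' hn
    linarith

lemma eval_eq (P : TrigPoly) (x : ℝ) : P.eval x = g P.N P.c (fun _ => True) P.Λ x := by
  unfold TrigPoly.eval g E
  refine Finset.sum_congr rfl fun n _ => ?_
  rw [if_pos trivial]; push_cast; rw [mul_assoc]

lemma maxD_eq (P : TrigPoly) (x : ℝ) :
    P.maxDyadic x = ⨆ j : ℕ, ‖g P.N P.c (fun n => |P.Λ n| ≤ (2 : ℝ) ^ j) P.Λ x‖ := by
  unfold TrigPoly.maxDyadic g E
  congr 1
  funext j
  congr 1
  refine Finset.sum_congr rfl fun n _ => ?_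
  push_cast
  rw [mul_assoc]

lemma maxD_fin (P : TrigPoly) : ∃ (J : Finset ℕ) (hJ : J.Nonempty), ∀ (m : ℕ) (x : ℝ),
    (|P.maxDyadic x| ^ 2) ^ m =
      J.sup' hJ (fun j => (‖g P.N P.c (fun n => |P.Λ n| ≤ (2 : ℝ) ^ j) P.Λ x‖ ^ 2) ^ m) := by
  obtain ⟨J0, hJ0⟩ : ∃ J0 : ℕ, ∀ n < P.N, |P.Λ n| ≤ (2 : ℝ) ^ J0 := by
    obtain ⟨J0, h⟩ := pow_unbounded_of_one_lt (∑ n ∈ range P.N, |P.Λ n|) (one_lt_two (α := ℝ))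
    refine ⟨J0, fun n hn => le_trans ?_ h.le⟩
    exact Finset.single_le_sum (f := fun n => |P.Λ n|) (fun _ _ => abs_nonneg _) (mem_range.2 hn)
  have hJ : (range (J0 + 1)).Nonempty := ⟨0, by simp⟩
  refine ⟨range (J0 + 1), hJ, fun m x => ?_⟩
  set a : ℕ → ℝ := fun j => ‖g P.N P.c (fun n => |P.Λ n| ≤ (2 : ℝ) ^ j) P.Λ x‖ with ha
  have hst : ∀ j, J0 ≤ j → a j = a J0 := by
    intro j hj
    simp only [ha]
    congr 1
    unfold g
    refine Finset.sum_congr rfl fun n hn => ?_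
    have h1 := hJ0 n (mem_range.1 hn)
    have h2 : |P.Λ n| ≤ (2 : ℝ) ^ j := h1.trans (pow_le_pow_right₀ one_le_two hj)
    rw [if_pos h1, if_pos h2]
  have bdd : BddAbove (Set.range a) :=
    ⟨_, by rintro _ ⟨j, rfl⟩; exact g_bd _ _ _ _ _⟩
  have hM : P.maxDyadic x = ⨆ j, a j := maxD_eq P x
  have M0 : 0 ≤ P.maxDyadic x := by
    rw [hM]; exact (norm_nonneg _).trans (le_ciSup bdd 0)
  rw [abs_of_nonneg M0]
  apply le_antisymm
  · obtain ⟨j, hj, hmax⟩ := (range (J0 + 1)).exists_max_image a hJ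
    have : P.maxDyadic x ≤ a j := by
      rw [hM]
      refine ciSup_le fun i => ?_
      rcases le_total i J0 with c | c
      · exact hmax i (by simp; omega)
      · rw [hst i c]; exact hmax J0 (by simp)
    refine le_trans ?_ (Finset.le_sup' (fun j => (a j ^ 2) ^ m) hj)
    gcongr
  · refine Finset.sup'_le hJ _ fun j _ => ?_
    have : a j ≤ P.maxDyadic x := by rw [hM]; exact le_ciSup bdd j
    have : 0 ≤ a j := norm_nonneg _
    gcongr

lemma g_shift (M : ℕ) (c : ℕ → ℂ) (p : ℕ → Prop) (μ : ℕ → ℝ) (x y : ℝ) :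
    g M c p μ (x + y) = g M (fun n => c n * E (μ n * y)) p μ x := by
  unfold g
  refine Finset.sum_congr rfl fun n _ => ?_
  rw [mul_add, E_add]
  split_ifs
  · ring
  · rfl

end Dy

open Dy

/-- Main theorem: for every `k ≥ 1` and `α > 0` there is `C = C(k, α) > 0` such that
`‖S* f‖_{S^{2^k}} ≤ C ‖f‖_{S^{2^k}}` for every `α`-separated trigonometric polynomial `f`. -/
theorem stmt_15 (k : ℕ) (hk : 1 ≤ k) (α : ℝ) (hα : 0 < α) :
    ∃ C : ℝ, 0 < C ∧ ∀ P : TrigPoly, P.sep α →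
      stepanovNorm ((2 : ℝ) ^ k) P.maxDyadic
        ≤ C * stepanovNorm ((2 : ℝ) ^ k) (fun s => ‖P.eval s‖) := by
  obtain ⟨k, rfl⟩ : ∃ k', k = k' + 1 := ⟨k - 1, by omega⟩
  obtain ⟨m, hm⟩ : ∃ m, m = 2 ^ k := ⟨_, rfl⟩
  have hm1 : 1 ≤ m := by rw [hm]; exact Nat.one_le_two_pow
  obtain ⟨C, hC, h⟩ := limit hm1 (by rw [hm]; exact Full_pow k)
  have hp : (2 : ℝ) ^ (k + 1) = ((2 * m : ℕ) : ℝ) := by rw [hm]; push_cast; ring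
  obtain ⟨δ, hδ⟩ : ∃ δ : ℝ, δ = min (α / 4) (1 / 8) := ⟨_, rfl⟩
  have δ0 : 0 < δ := by rw [hδ]; exact lt_min (by linarith) (by norm_num)
  have δ1 : δ ≤ 1 / 8 := by rw [hδ]; exact min_le_right _ _
  have δ2 : 4 * δ ≤ α := by
    have : δ ≤ α / 4 := by rw [hδ]; exact min_le_left _ _
    linarith
  obtain ⟨C0, hC0⟩ : ∃ C0 : ℝ, C0 = C * (1 + Real.pi ^ 2 / δ ^ 2) * (3 * Real.pi) + 1 := ⟨_, rfl⟩
  have pp := Real.pi_pos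
  have C00 : 0 < C0 := by rw [hC0]; positivity
  refine ⟨C0 ^ (1 / (2 : ℝ) ^ (k + 1)), Real.rpow_pos_of_pos C00 _, fun P hP => ?_⟩
  have hsep := sep_pair P hα hP
  obtain ⟨J, hJ, hmax⟩ := maxD_fin P
  unfold stepanovNorm
  have rp : ∀ y : ℝ, |y| ^ ((2 : ℝ) ^ (k + 1)) = (|y| ^ 2) ^ m := by
    intro y; rw [hp, Real.rpow_natCast, pow_mul]
  simp only [rp]
  simp only [hmax, abs_norm, eval_eq]
  set G : ℝ → ℝ := fun s => (‖g P.N P.c (fun _ => True) P.Λ s‖ ^ 2) ^ m with hG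
  have cG : Continuous G := ((g_cont _ _ _ _).norm.pow 2).pow m
  have G0 : ∀ s, 0 ≤ G s := fun s => by simp only [hG]; positivity
  have GR : ∀ s, G s ≤ ((∑ n ∈ range P.N, ‖P.c n‖) ^ 2) ^ m := fun s => by
    have := g_bd P.N P.c (fun _ => True) P.Λ s
    simp only [hG]; gcongr
  have bdd : BddAbove (Set.range fun x : ℝ => ∫ s in x..(x + 1), G s) := by
    refine ⟨((∑ n ∈ range P.N, ‖P.c n‖) ^ 2) ^ m, ?_⟩
    rintro _ ⟨x, rfl⟩
    have := intervalIntegral.integral_mono_on (μ := MeasureTheory.volume) (by linarith : x ≤ x + 1)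
      (cG.intervalIntegrable _ _) (intervalIntegrable_const) (fun s _ => GR s)
    simpa using this
  set A : ℝ := ⨆ x : ℝ, ∫ s in x..(x + 1), G s with hA
  have hAle : ∀ x, ∫ s in x..(x + 1), G s ≤ A := fun x => le_ciSup bdd x
  have A0 : 0 ≤ A := le_trans
    (intervalIntegral.integral_nonneg (by linarith) (fun s _ => G0 s)) (hAle 0)
  rw [← Real.mul_rpow C00.le A0]
  have sup0 : ∀ s, 0 ≤ J.sup' hJ (fun j =>
      (‖g P.N P.c (fun n => |P.Λ n| ≤ (2 : ℝ) ^ j) P.Λ s‖ ^ 2) ^ m) := by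
    intro s
    rw [← hmax]; positivity
  refine Real.rpow_le_rpow (Real.iSup_nonneg fun x =>
    intervalIntegral.integral_nonneg (by linarith) fun s _ => sup0 s) ?_ (by positivity)
  refine ciSup_le fun x0 => ?_
  have e1 := intervalIntegral.integral_comp_add_right (a := 0) (b := 1) (fun s => J.sup' hJ (fun j =>
      (‖g P.N P.c (fun n => |P.Λ n| ≤ (2 : ℝ) ^ j) P.Λ s‖ ^ 2) ^ m)) x0
  rw [zero_add, add_comm 1 x0] at e1
  rw [← e1]
  simp only [g_shift]
  refine (h δ δ0 δ1 J hJ P.N _ P.Λ (fun n hn n' hn' hl =>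
    δ2.trans_lt (hsep n hn n' hn' hl))).trans ?_
  simp only [← g_shift]
  have w := weight (G := fun s => G (s + x0)) (cG.comp (by fun_prop)) (fun s => G0 _)
    (fun s => GR _) (A := A) (fun x => by
      rw [intervalIntegral.integral_comp_add_right G x0, add_right_comm]
      exact hAle _)
  have D0 : 0 ≤ C * (1 + Real.pi ^ 2 / δ ^ 2) := by positivity
  refine (mul_le_mul_of_nonneg_left w D0).trans ?_
  rw [hC0]
  nlinarith
end

section
/- Let k ∈ ℕ (k ≥ 1) and let (f_j)_{j ∈ ℕ} and (g_j)_{j ∈ ℕ} be sequences of measurable functions ℝ → ℂ. Then ‖(Σ_{j ∈ ℕ} |g_j|²)^{1/2} − (Σ_{j ∈ ℕ} |f_j|²)^{1/2}‖_{S^{2^k}} ≤ (Σ_{j ∈ ℕ} ‖g_j − f_j‖_{S^{2^k}}²)^{1/2}. -/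
open MeasureTheory

/-- The Stepanov `S^p` "norm" of `f : ℝ → ℂ`, valued in `ℝ≥0∞`:
`‖f‖_{S^p} = (sup_{x ∈ ℝ} ∫_x^{x+1} |f(s)|^p ds)^{1/p}`. -/
noncomputable def stepanov (p : ℝ) (f : ℝ → ℂ) : ENNReal :=
  (⨆ x : ℝ, ∫⁻ s in Set.Ioc x (x + 1), (‖f s‖₊ : ENNReal) ^ p) ^ (1 / p)


theorem aux_l2 (a b : ℕ → ENNReal) :
    (∑' j, (a j + b j) ^ 2) ^ ((1:ℝ)/2) ≤ (∑' j, a j ^ 2) ^ ((1:ℝ)/2) + (∑' j, b j ^ 2) ^ ((1:ℝ)/2) := by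
  have h := ENNReal.lintegral_Lp_add_le (μ := Measure.count) (p := 2) (f := a) (g := b)
    (measurable_of_countable _).aemeasurable (measurable_of_countable _).aemeasurable (by norm_num)
  simpa [lintegral_count] using h

theorem aux_pt (u v : ℕ → ℂ) :
    (∑' j, (‖u j‖₊ : ENNReal) ^ 2) ^ ((1:ℝ)/2) - (∑' j, (‖v j‖₊ : ENNReal) ^ 2) ^ ((1:ℝ)/2)
      ≤ (∑' j, (‖u j - v j‖₊ : ENNReal) ^ 2) ^ ((1:ℝ)/2) := by
  rw [tsub_le_iff_right]
  refine le_trans ?_ (aux_l2 _ _)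
  gcongr with j
  have : ‖u j‖₊ ≤ ‖u j - v j‖₊ + ‖v j‖₊ := by
    simpa using nnnorm_add_le (u j - v j) (v j)
  exact_mod_cast this

theorem aux_fin {μ : Measure ℝ} (q : ℝ) (hq : 1 ≤ q) (F : ℕ → ℝ → ENNReal)
    (hF : ∀ j, Measurable (F j)) (n : ℕ) :
    (∫⁻ s, (∑ j ∈ Finset.range n, F j s) ^ q ∂μ) ^ (1/q)
      ≤ ∑ j ∈ Finset.range n, (∫⁻ s, F j s ^ q ∂μ) ^ (1/q) := by
  have hq0 : 0 < q := by linarith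
  induction n with
  | zero => simp [hq0]
  | succ n ih =>
    simp only [Finset.sum_range_succ]
    have h := ENNReal.lintegral_Lp_add_le (μ := μ) (p := q)
      (f := fun s => ∑ j ∈ Finset.range n, F j s) (g := F n)
      (Finset.measurable_fun_sum _ fun j _ => hF j).aemeasurable (hF n).aemeasurable hq
    exact h.trans (by gcongr)

theorem aux_inf {μ : Measure ℝ} (q : ℝ) (hq : 1 ≤ q) (F : ℕ → ℝ → ENNReal)
    (hF : ∀ j, Measurable (F j)) :
    (∫⁻ s, (∑' j, F j s) ^ q ∂μ) ^ (1/q)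
      ≤ ∑' j, (∫⁻ s, F j s ^ q ∂μ) ^ (1/q) := by
  have hq0 : 0 < q := by linarith
  have hq1 : 0 < 1/q := by positivity
  have e : ∀ s, (∑' j, F j s) ^ q = ⨆ n, (∑ j ∈ Finset.range n, F j s) ^ q := by
    intro s
    rw [ENNReal.tsum_eq_iSup_nat]
    exact (ENNReal.orderIsoRpow q hq0).map_iSup _
  simp_rw [e]
  rw [lintegral_iSup]
  · have := (ENNReal.orderIsoRpow (1/q) hq1).map_iSup
      (fun n => ∫⁻ s, (∑ j ∈ Finset.range n, F j s) ^ q ∂μ)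
    simp only [ENNReal.orderIsoRpow_apply] at this
    rw [this]
    exact iSup_le fun n => (aux_fin q hq F hF n).trans (ENNReal.sum_le_tsum _)
  · intro n
    exact (Finset.measurable_fun_sum _ fun j _ => hF j).pow_const q
  · intro m n h s
    dsimp only
    gcongr

theorem stmt_16 (k : ℕ) (hk : 1 ≤ k) (f g : ℕ → ℝ → ℂ)
    (hf : ∀ j, Measurable (f j)) (hg : ∀ j, Measurable (g j)) :
    (⨆ x : ℝ, ∫⁻ s in Set.Ioc x (x + 1),
        (((∑' j : ℕ, (‖g j s‖₊ : ENNReal) ^ 2) ^ ((1 : ℝ) / 2)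
            - (∑' j : ℕ, (‖f j s‖₊ : ENNReal) ^ 2) ^ ((1 : ℝ) / 2))
          ⊔ ((∑' j : ℕ, (‖f j s‖₊ : ENNReal) ^ 2) ^ ((1 : ℝ) / 2)
            - (∑' j : ℕ, (‖g j s‖₊ : ENNReal) ^ 2) ^ ((1 : ℝ) / 2)))
          ^ ((2 : ℝ) ^ k)) ^ (1 / (2 : ℝ) ^ k)
      ≤ (∑' j : ℕ, (stepanov ((2 : ℝ) ^ k) (fun s => g j s - f j s)) ^ 2)
          ^ ((1 : ℝ) / 2) := by
  obtain ⟨q, hq, hp⟩ : ∃ q : ℝ, 1 ≤ q ∧ (2:ℝ)^k = 2 * q := by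
    obtain ⟨m, rfl⟩ : ∃ m, k = m + 1 := ⟨k - 1, by omega⟩
    exact ⟨2^m, one_le_pow₀ (by norm_num), by ring⟩
  have hq0 : 0 < q := by linarith
  rw [hp]
  have hp0 : 0 < 2 * q := by linarith
  rw [one_div (2 * q), ENNReal.rpow_inv_le_iff hp0]
  refine iSup_le fun x => ?_
  rw [← ENNReal.rpow_inv_le_iff hp0]
  have e2 : ∀ a : ENNReal, a ^ (2 * q)⁻¹ = (a ^ (1 / q)) ^ ((1:ℝ)/2) := by
    intro a
    rw [← ENNReal.rpow_mul]
    congr 1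
    field_simp
  have e3 : ∀ a : ENNReal, (a ^ ((1:ℝ)/2)) ^ (2 * q) = a ^ q := by
    intro a
    rw [← ENNReal.rpow_mul]
    congr 1
    field_simp
  have e4 : ∀ a : ENNReal, (a ^ 2) ^ q = a ^ (2 * q) := by
    intro a
    rw [ENNReal.rpow_mul]
    simp
  have e5 : ∀ a : ENNReal, (a ^ (1 / (2 * q))) ^ 2 = a ^ (1 / q) := by
    intro a
    rw [← ENNReal.rpow_natCast, ← ENNReal.rpow_mul]
    congr 1
    push_cast
    field_simp
  rw [e2]
  refine ENNReal.rpow_le_rpow ?_ (by norm_num)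
  calc _ ≤ (∫⁻ s in Set.Ioc x (x + 1),
        (∑' j, (‖g j s - f j s‖₊ : ENNReal) ^ 2) ^ q) ^ (1/q) := by
        refine ENNReal.rpow_le_rpow (lintegral_mono fun s => ?_) (by positivity)
        rw [← e3]
        refine ENNReal.rpow_le_rpow (sup_le (aux_pt (fun j => g j s) (fun j => f j s)) ?_) hp0.le
        refine (aux_pt (fun j => f j s) (fun j => g j s)).trans_eq ?_
        congr 2
        ext j
        rw [← neg_sub (g j s) (f j s), nnnorm_neg]
    _ ≤ ∑' j, (∫⁻ s in Set.Ioc x (x + 1), ((‖g j s - f j s‖₊ : ENNReal) ^ 2) ^ q) ^ (1/q) :=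
        aux_inf q hq (fun j s => (‖g j s - f j s‖₊ : ENNReal) ^ 2)
          (fun j => (((hg j).sub (hf j)).nnnorm.coe_nnreal_ennreal).pow_const 2)
    _ ≤ _ := by
        refine ENNReal.tsum_le_tsum fun j => ?_
        unfold stepanov
        rw [e5]
        refine ENNReal.rpow_le_rpow ?_ (by positivity)
        simp_rw [e4]
        exact le_iSup (fun x : ℝ => ∫⁻ s in Set.Ioc x (x + 1),
          (‖g j s - f j s‖₊ : ENNReal) ^ (2 * q)) x
end

section
/- Let h(x) := (1/π) log(|x| / |x − 1|), which is the Hilbert transform of χ_{[0,1]}. Then for every q ∈ [1, ∞): for each n ∈ ℤ the integral ∫_n^{n+1} |h(x)|^q dx is finite, yet Σ_{n ∈ ℤ} (∫_n^{n+1} |h(x)|^q dx)^{1/q} = ∞. Consequently, h does not belong to the amalgam space (L^q, ℓ¹), even though ‖χ_{[0,1]}‖_{(L^q, ℓ¹)} = 1; hence the Hilbert transform is not bounded on (L^q, ℓ¹). -/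
open MeasureTheory

/-- `h = H(χ_{[0,1]})`, the Hilbert transform of the indicator of `[0,1]`. -/
noncomputable def hHT (x : ℝ) : ℝ := (1 / Real.pi) * Real.log (|x| / |x - 1|)

theorem aux_even (a b : ℝ) :
    IntervalIntegrable (fun x : ℝ => |x| ^ (-(1/2) : ℝ)) volume a b := by
  have h0 : ∀ c : ℝ, 0 ≤ c →
      IntervalIntegrable (fun x : ℝ => |x| ^ (-(1/2) : ℝ)) volume 0 c := by
    intro c hc
    have := intervalIntegral.intervalIntegrable_rpow' (a := 0) (b := c) (r := -(1/2)) (by norm_num)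
    refine this.congr ?_
    intro x hx
    rw [Set.uIoc_of_le hc] at hx
    simp only [abs_of_pos hx.1]
  have h1 : ∀ c : ℝ, IntervalIntegrable (fun x : ℝ => |x| ^ (-(1/2) : ℝ)) volume 0 c := by
    intro c
    rcases le_total 0 c with hc | hc
    · exact h0 c hc
    · have := (IntervalIntegrable.iff_comp_neg (f := fun x : ℝ => |x| ^ (-(1/2) : ℝ))
        (a := 0) (b := c)).2
      apply this
      simpa using h0 (-c) (by linarith)
  exact (h1 a).symm.trans (h1 b)

theorem aux_log (q : ℝ) (hq : 1 ≤ q) (a b : ℝ) :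
    MemLp (fun x : ℝ => Real.log |x|) (ENNReal.ofReal q) (volume.restrict (Set.Ioc a b)) := by
  have hq0 : 0 < q := by linarith
  have hne : ENNReal.ofReal q ≠ 0 := by simpa using hq0
  set e : ℝ := 1 / (2 * q) with he
  have hepos : 0 < e := by positivity
  have hm : MemLp (fun x : ℝ => |x| ^ (-e)) (ENNReal.ofReal q)
      (volume.restrict (Set.Ioc a b)) := by
    rw [← integrable_norm_rpow_iff (by apply Measurable.aestronglyMeasurable; fun_prop) hne ENNReal.ofReal_ne_top]
    have h := (aux_even a b).1
    refine Integrable.congr h ?_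
    refine Filter.Eventually.of_forall fun x => ?_
    simp only
    rw [Real.norm_of_nonneg (by positivity), ENNReal.toReal_ofReal hq0.le,
      ← Real.rpow_mul (abs_nonneg x)]
    congr 1
    rw [he]; field_simp
  have hp : MemLp (fun x : ℝ => |x| ^ e) (ENNReal.ofReal q)
      (volume.restrict (Set.Ioc a b)) := by
    refine MemLp.of_bound (by apply Measurable.aestronglyMeasurable; fun_prop) ((|a| + |b|) ^ e) ?_
    refine (ae_restrict_iff' measurableSet_Ioc).2 (Filter.Eventually.of_forall fun x hx => ?_)
    rw [Real.norm_of_nonneg (by positivity)]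
    apply Real.rpow_le_rpow (abs_nonneg x) _ hepos.le
    have := hx.1
    have := hx.2
    rw [abs_le]
    constructor <;> linarith [neg_abs_le a, le_abs_self b, abs_nonneg a, abs_nonneg b]
  refine MemLp.mono ((hm.add hp).const_mul (1 / e)) (by apply Measurable.aestronglyMeasurable; fun_prop) ?_
  refine Filter.Eventually.of_forall fun x => ?_
  have h1 := Real.log_le_rpow_div (abs_nonneg x) hepos
  have h2 := Real.log_le_rpow_div (inv_nonneg.2 (abs_nonneg x)) hepos
  rw [Real.log_inv, Real.inv_rpow (abs_nonneg x), ← Real.rpow_neg (abs_nonneg x)] at h2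
  have p1 : 0 ≤ |x| ^ e := by positivity
  have p2 : 0 ≤ |x| ^ (-e) := by positivity
  have p3 : 0 ≤ |x| ^ e / e := by positivity
  have p4 : 0 ≤ |x| ^ (-e) / e := by positivity
  rw [Pi.add_apply, Real.norm_eq_abs, Real.norm_eq_abs]
  have : 1 / e * (|x| ^ (-e) + |x| ^ e) = |x| ^ (-e) / e + |x| ^ e / e := by ring
  rw [this, abs_of_nonneg (add_nonneg p4 p3), abs_le]
  constructor <;> linarith

theorem aux_int (q : ℝ) (hq : 1 ≤ q) (a b : ℝ) :
    IntegrableOn (fun x : ℝ => |hHT x| ^ q) (Set.Ioc a b) := by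
  have hq0 : 0 < q := by linarith
  have hne : ENNReal.ofReal q ≠ 0 := by simpa using hq0
  have h1 := aux_log q hq a b
  have h2 : MemLp (fun x : ℝ => Real.log |x - 1|) (ENNReal.ofReal q)
      (volume.restrict (Set.Ioc a b)) := by
    have h := aux_log q hq (a - 1) (b - 1)
    have hmp : MeasurePreserving (fun x : ℝ => x - 1) (volume.restrict (Set.Ioc a b))
        (volume.restrict (Set.Ioc (a - 1) (b - 1))) := by
      have := (measurePreserving_sub_right volume (1 : ℝ)).restrict_preimage
        (s := Set.Ioc (a - 1) (b - 1)) measurableSet_Ioc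
      simpa using this
    exact h.comp_measurePreserving hmp
  have h3 := ((h1.sub h2).const_mul (1 / Real.pi)).integrable_norm_rpow hne ENNReal.ofReal_ne_top
  refine Integrable.congr h3 ?_
  have e0 : ∀ᵐ x : ℝ ∂(volume.restrict (Set.Ioc a b)), x ≠ 0 :=
    ae_restrict_of_ae (Measure.ae_ne volume 0)
  have e1 : ∀ᵐ x : ℝ ∂(volume.restrict (Set.Ioc a b)), x ≠ 1 :=
    ae_restrict_of_ae (Measure.ae_ne volume 1)
  filter_upwards [e0, e1] with x hx0 hx1
  rw [ENNReal.toReal_ofReal hq0.le, Real.norm_eq_abs, hHT, Real.log_div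
    (abs_ne_zero.2 hx0) (abs_ne_zero.2 (sub_ne_zero.2 hx1))]
  rfl

theorem aux_lower (q : ℝ) (hq : 1 ≤ q) (k : ℕ) :
    1 / Real.pi * (1 / ((k : ℝ) + 2)) ≤
      (∫ x in Set.Ioc (((k : ℤ) + 1 : ℤ) : ℝ) ((((k : ℤ) + 1 : ℤ) : ℝ) + 1),
        |hHT x| ^ q) ^ (1 / q) := by
  have hq0 : 0 < q := by linarith
  have hpi := Real.pi_pos
  set c : ℝ := 1 / Real.pi * (1 / ((k : ℝ) + 2)) with hc
  have hc0 : 0 ≤ c := by positivity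
  have key : c ^ q ≤ ∫ x in Set.Ioc (((k : ℤ) + 1 : ℤ) : ℝ) ((((k : ℤ) + 1 : ℤ) : ℝ) + 1),
        |hHT x| ^ q := by
    have h := setIntegral_mono_on (μ := volume) (f := fun _ : ℝ => c ^ q)
      (g := fun x : ℝ => |hHT x| ^ q)
      (s := Set.Ioc (((k : ℤ) + 1 : ℤ) : ℝ) ((((k : ℤ) + 1 : ℤ) : ℝ) + 1))
      (by simp [integrableOn_const_iff]) (aux_int q hq _ _) measurableSet_Ioc ?_
    · simpa using h
    · intro x hx
      push_cast at hx
      obtain ⟨hx1, hx2⟩ := hx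
      have hk : (0 : ℝ) ≤ k := Nat.cast_nonneg k
      apply Real.rpow_le_rpow hc0 _ hq0.le
      refine le_trans ?_ (le_abs_self _)
      rw [hHT, hc]
      refine mul_le_mul_of_nonneg_left ?_ (by positivity)
      have hx0 : 0 < x := by linarith
      have hx3 : 0 < x - 1 := by linarith
      rw [abs_of_pos hx0, abs_of_pos hx3]
      have h5 := Real.one_sub_inv_le_log_of_pos (div_pos hx0 hx3)
      have h6 : 1 - (x / (x - 1))⁻¹ = 1 / x := by field_simp; ring
      rw [h6] at h5
      refine le_trans ?_ h5
      apply one_div_le_one_div_of_le hx0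
      linarith
  calc c = (c ^ q) ^ (1 / q) := by
        rw [← Real.rpow_mul hc0, mul_one_div_cancel hq0.ne', Real.rpow_one]
    _ ≤ _ := Real.rpow_le_rpow (by positivity) key (by positivity)

/-- The Hilbert transform `h(x) = (1/π) log(|x|/|x-1|)` of `χ_{[0,1]}` has every local piece
`∫_n^{n+1} |h|^q` finite, yet `Σ_{n ∈ ℤ} (∫_n^{n+1} |h|^q)^{1/q} = ∞`, so `h ∉ (L^q, ℓ¹)`;
meanwhile `‖χ_{[0,1]}‖_{(L^q, ℓ¹)} = 1`.  Hence the Hilbert transform is not bounded on the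
amalgam space `(L^q, ℓ¹)`. -/
theorem stmt_19 (q : ℝ) (hq : 1 ≤ q) :
    (∀ n : ℤ, IntegrableOn (fun x : ℝ => |hHT x| ^ q) (Set.Ioc (n : ℝ) (n + 1))) ∧
    ¬ Summable (fun n : ℤ =>
        (∫ x in Set.Ioc (n : ℝ) (n + 1), |hHT x| ^ q) ^ (1 / q)) ∧
    (∑' n : ℤ,
        (∫ x in Set.Ioc (n : ℝ) (n + 1),
          ‖Set.indicator (Set.Icc (0 : ℝ) 1) (fun _ => (1 : ℝ)) x‖ ^ q) ^ (1 / q)) = 1 := by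
  have hq0 : 0 < q := by linarith
  refine ⟨fun n => aux_int q hq _ _, ?_, ?_⟩
  · intro hs
    have hinj : Function.Injective (fun k : ℕ => ((k : ℤ) + 1 : ℤ)) := by
      intro a b h
      simpa using h
    have h1 := hs.comp_injective hinj
    have h2 : Summable (fun k : ℕ => 1 / Real.pi * (1 / ((k : ℝ) + 2))) :=
      Summable.of_nonneg_of_le (fun k => by have := Real.pi_pos; positivity)
        (fun k => aux_lower q hq k) h1
    rw [summable_mul_left_iff (by have := Real.pi_pos; positivity)] at h2
    have h3 := (summable_nat_add_iff (f := fun n : ℕ => 1 / (n : ℝ)) 2).1 (by simpa using h2)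
    exact Real.not_summable_one_div_natCast h3
  · rw [tsum_eq_single (0 : ℤ)]
    · have : ∫ x in Set.Ioc ((0 : ℤ) : ℝ) (((0 : ℤ) : ℝ) + 1),
          ‖Set.indicator (Set.Icc (0 : ℝ) 1) (fun _ => (1 : ℝ)) x‖ ^ q
          = ∫ x in Set.Ioc ((0 : ℤ) : ℝ) (((0 : ℤ) : ℝ) + 1), (1 : ℝ) := by
        refine setIntegral_congr_fun measurableSet_Ioc fun x hx => ?_
        simp only [Int.cast_zero, zero_add] at hx
        have hx' : x ∈ Set.Icc (0 : ℝ) 1 := ⟨hx.1.le, hx.2⟩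
        simp [Set.indicator_of_mem hx']
      rw [this]
      simp
    · intro n hn
      have : ∫ x in Set.Ioc (n : ℝ) (n + 1),
          ‖Set.indicator (Set.Icc (0 : ℝ) 1) (fun _ => (1 : ℝ)) x‖ ^ q = 0 := by
        apply integral_eq_zero_of_ae
        filter_upwards [ae_restrict_mem measurableSet_Ioc,
          ae_restrict_of_ae (Measure.ae_ne volume (0 : ℝ))] with x hx hx0
        have hx' : x ∉ Set.Icc (0 : ℝ) 1 := by
          rintro ⟨h0, h1⟩
          have h0' : 0 < x := lt_of_le_of_ne h0 (Ne.symm hx0)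
          have a1 : (n : ℝ) < 1 := lt_of_lt_of_le hx.1 h1
          have a2 : (0 : ℝ) < n + 1 := lt_of_lt_of_le h0' hx.2
          have b1 : n < 1 := by exact_mod_cast a1
          have b2 : 0 < n + 1 := by exact_mod_cast a2
          omega
        simp [Set.indicator_of_notMem hx', Real.zero_rpow hq0.ne']
      rw [this, Real.zero_rpow (by positivity)]
end
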